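/- Let q be a prime power and r a positive integer with gcd(q, (r+1)!) = 1. Let S ⊆ F_q with #S = r+1, let a ∈ F_q \ S, and set h(x) = (∏_{s∈S} (x − s))/(x − a). Then h is an (r, l)-good rational function with l ≥ (q − 2√q + 1)/(r+1)! − 2√q·(r−1) − (r+2)/2; that is, the number of points b ∈ P¹(F_q) with #h⁻¹(b) = r+1 is at least (q − 2√q + 1)/(r+1)! − 2√q·(r−1) − (r+2)/2 (an inequality of real numbers). -/

import Mathlib

open Polynomial Finset

/-- The map `P¹(F) → P¹(F)` induced by the rational function `f/g`
(with `none` playing the role of `∞`). -/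
def ratEval {F : Type*} [Field F] [DecidableEq F] (f g : Polynomial F) :
    Option F → Option F
  | none =>
      if g.natDegree < f.natDegree then none
      else if f.natDegree = g.natDegree then some (f.leadingCoeff / g.leadingCoeff)
      else some 0
  | some x => if g.eval x = 0 then none else some (f.eval x / g.eval x)

/-
Let `C → P¹` be the Galois closure of `h`, with group `G ⊆ S_{r+1}`. Over an unramified parameter
`t ∈ F_q` whose fibre is not totally split, Frobenius acts on the points of `C` as an element
`σ ≠ 1` of `G`. Hence a function on `C × C` that vanishes to order `M` along the graphs of all
`σ ≠ 1` vanishes to high order where these graphs meet the graph of Frobenius, and if it has small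
degree in both variables but is nonzero near the graph of Frobenius, comparing its zeros with its
poles bounds the number of such `t`. Linear algebra provides such functions, and `M → ∞` gives
`q + 1 - |G| (1 + e) = O(√q)`, where `e` counts the ramified and the totally split parameters.
Curves do not have to be mentioned: the fibre over `0` is `S`, so the points of the generic fibre
are power series in `t`, and all functions on `C` can be expanded in `F_q[[t]]`.
-/

section GaloisClosure

open scoped PowerSeries

section FiberPolynomial

variable {R R' ι : Type*} [CommRing R] [CommRing R'] [Fintype ι]

/-- The polynomial `∏ (X - sᵢ) - c (X - a)`, whose roots are the points of the fibre over `c` of the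
rational function `∏ (X - sᵢ) / (X - a)`. -/
noncomputable def fiberPoly (s : ι → R) (a c : R) : R[X] :=
  Lagrange.nodal univ s - C c * (X - C a)

theorem fiberPoly_map (φ : R →+* R') (s : ι → R) (a c : R) :
    (fiberPoly s a c).map φ = fiberPoly (φ ∘ s) (φ a) (φ c) := by
  simp [fiberPoly, Lagrange.nodal, Polynomial.map_prod]

theorem eval_fiberPoly (s : ι → R) (a c z : R) :
    (fiberPoly s a c).eval z = ∏ i, (z - s i) - c * (z - a) := by
  simp [fiberPoly, Lagrange.eval_nodal]

variable [Nontrivial R]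

theorem degree_C_mul_X_sub_C_lt_nodal (hι : 2 ≤ Fintype.card ι) (s : ι → R) (a c : R) :
    (C c * (X - C a)).degree < (Lagrange.nodal univ s).degree := by
  rw [Lagrange.degree_nodal, card_univ]
  calc (C c * (X - C a)).degree ≤ 0 + 1 :=
        (degree_mul_le _ _).trans (add_le_add degree_C_le (degree_X_sub_C a).le)
    _ < (Fintype.card ι : WithBot ℕ) := by rw [zero_add]; exact_mod_cast hι

theorem fiberPoly_monic (hι : 2 ≤ Fintype.card ι) (s : ι → R) (a c : R) :
    (fiberPoly s a c).Monic :=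
  Lagrange.nodal_monic.sub_of_left (degree_C_mul_X_sub_C_lt_nodal hι s a c)

theorem degree_fiberPoly (hι : 2 ≤ Fintype.card ι) (s : ι → R) (a c : R) :
    (fiberPoly s a c).degree = Fintype.card ι := by
  rw [fiberPoly, degree_sub_eq_left_of_degree_lt (degree_C_mul_X_sub_C_lt_nodal hι s a c),
    Lagrange.degree_nodal, card_univ]

end FiberPolynomial

theorem eq_nodal_of_eval_eq_zero {R ι : Type*} [CommRing R] [IsDomain R] [Fintype ι] {f : R[X]}
    (hf : f.Monic) (hdeg : f.degree = Fintype.card ι) {x : ι → R} (hx : Function.Injective x)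
    (h : ∀ i, f.eval (x i) = 0) : f = Lagrange.nodal univ x := by
  have hdeg' : (Lagrange.nodal univ x).degree = f.degree := by
    rw [Lagrange.degree_nodal, hdeg, card_univ]
  refine eq_of_degree_sub_lt_of_eval_index_eq (v := x) univ hx.injOn ?_ fun i hi => ?_
  · calc (f - Lagrange.nodal univ x).degree < f.degree :=
          degree_sub_lt_left hdeg'.symm hf.ne_zero (by rw [hf, Lagrange.nodal_monic])
      _ = #(univ : Finset ι) := by rw [hdeg, card_univ]
  · rw [h i, Lagrange.eval_nodal_at_node hi]

section Hensel

variable {K ι : Type*} [Field K] [Fintype ι] (s : ι → K) (a : K)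

theorem eval_derivative_nodal_ne_zero {s : ι → K} (hs : Function.Injective s) (i : ι) :
    (Lagrange.nodal univ s).derivative.eval (s i) ≠ 0 := by
  classical
  rw [Lagrange.eval_nodal_derivative_eval_node_eq (mem_univ i), Lagrange.eval_nodal,
    prod_ne_zero_iff]
  exact fun j hj => sub_ne_zero.mpr fun h => ne_of_mem_erase hj (hs h).symm

theorem exists_powerSeries_root_fiberPoly (hι : 2 ≤ Fintype.card ι) {s : ι → K}
    (hs : Function.Injective s) (i : ι) :
    ∃ x : K⟦X⟧, x.constantCoeff = s i ∧
      (fiberPoly (PowerSeries.C ∘ s) (.C a) (.X : K⟦X⟧)).eval x = 0 := by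
  set f := fiberPoly (PowerSeries.C ∘ s) (.C a) (.X : K⟦X⟧)
  have hf_mod : f.map PowerSeries.constantCoeff = Lagrange.nodal univ s := by
    rw [fiberPoly_map, ← Function.comp_assoc]
    simp [fiberPoly, Function.comp_def]
  have hroot : f.eval (PowerSeries.C (s i)) ∈ Ideal.span {(PowerSeries.X : K⟦X⟧)} := by
    rw [Ideal.mem_span_singleton, PowerSeries.X_dvd_iff, ← eval_map_apply, hf_mod]
    simpa using Lagrange.eval_nodal_at_node (mem_univ i)
  have hsimple : IsUnit (f.derivative.eval (PowerSeries.C (s i))) := by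
    rw [PowerSeries.isUnit_iff_constantCoeff, ← eval_map_apply, ← derivative_map, hf_mod,
      PowerSeries.constantCoeff_C]
    exact (eval_derivative_nodal_ne_zero hs i).isUnit
  have hhensel : HenselianRing K⟦X⟧ (Ideal.span {PowerSeries.X}) := inferInstance
  obtain ⟨x, hx, hx_mod⟩ := hhensel.is_henselian f (fiberPoly_monic hι _ _ _) _ hroot
    (hsimple.map _)
  rw [Ideal.mem_span_singleton, PowerSeries.X_dvd_iff] at hx_mod
  exact ⟨x, by simpa [sub_eq_zero] using hx_mod, hx⟩

theorem exists_fiberPoly_eq_nodal (hι : 2 ≤ Fintype.card ι) {s : ι → K}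
    (hs : Function.Injective s) :
    ∃ x : ι → K⟦X⟧, (∀ i, (x i).constantCoeff = s i) ∧
      fiberPoly (PowerSeries.C ∘ s) (.C a) .X = Lagrange.nodal univ x := by
  choose x hx₀ hx using exists_powerSeries_root_fiberPoly a hι hs
  refine ⟨x, hx₀, eq_nodal_of_eval_eq_zero (fiberPoly_monic hι _ _ _) (degree_fiberPoly hι _ _ _)
    (fun i j h => hs ?_) hx⟩
  rw [← hx₀, ← hx₀, h]

end Hensel

section TaylorShift

open scoped PowerSeries.WithPiTopology
open PowerSeries.WithPiTopology

variable {K : Type*} [CommRing K] (c : K⟦X⟧) (hc : c.constantCoeff = 0)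

/-- The substitution `u ↦ c + ε` from `K⟦t⟧⟦u⟧` to `K⟦t⟧⟦ε⟧`, for `c ∈ t K⟦t⟧`. It is defined
through the `t`-adic topology, since `c` need not be nilpotent in the coefficient ring `K⟦t⟧`. -/
noncomputable def taylorShift : K⟦X⟧⟦X⟧ →+* K⟦X⟧⟦X⟧ :=
  letI : UniformSpace K := ⊥
  haveI : DiscreteUniformity K := ⟨rfl⟩
  have hC : Continuous (PowerSeries.C (R := K⟦X⟧)) := continuous_C
  have hc' : IsTopologicallyNilpotent c := isTopologicallyNilpotent_of_constantCoeff_zero hc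
  PowerSeries.eval₂Hom (a := PowerSeries.C c + PowerSeries.X) hC <|
    (hc'.map hC).add (isTopologicallyNilpotent_of_constantCoeff_zero PowerSeries.constantCoeff_X)

theorem taylorShift_C (b : K⟦X⟧) : taylorShift c hc (.C b) = .C b := by
  let _ : UniformSpace K := ⊥
  simp only [taylorShift, PowerSeries.coe_eval₂Hom, PowerSeries.eval₂_C]

theorem taylorShift_X : taylorShift c hc .X = .C c + .X := by
  let _ : UniformSpace K := ⊥
  simp only [taylorShift, PowerSeries.coe_eval₂Hom, PowerSeries.eval₂_X]

theorem constantCoeff_constantCoeff_taylorShift (g : K⟦X⟧⟦X⟧) :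
    (taylorShift c hc g).constantCoeff.constantCoeff = g.constantCoeff.constantCoeff := by
  conv_lhs => rw [PowerSeries.eq_X_mul_shift_add_const g]
  simp [taylorShift_C, taylorShift_X, hc]

theorem constantCoeff_taylorShift_X_map_C (g : K⟦X⟧) :
    (taylorShift .X PowerSeries.constantCoeff_X (g.map PowerSeries.C)).constantCoeff = g := by
  set ρ : K⟦X⟧ →+* K⟦X⟧ := PowerSeries.constantCoeff.comp
    ((taylorShift .X PowerSeries.constantCoeff_X).comp (PowerSeries.map PowerSeries.C))
  have hρX : ρ .X = .X := by simp [ρ, taylorShift_X]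
  have hρ_poly (p : K[X]) : ρ p = p := by
    induction p using Polynomial.induction_on' with
    | add p q hp hq => simp only [Polynomial.coe_add, map_add, hp, hq]
    | monomial n b =>
      simp only [coe_monomial, PowerSeries.monomial_eq_C_mul_X_pow, map_mul, map_pow, hρX]
      simp [ρ, taylorShift_C]
  have hcongr (N : ℕ) : PowerSeries.X ^ N ∣ ρ g - g := by
    rw [PowerSeries.eq_X_pow_mul_shift_add_trunc N g, map_add, map_mul, map_pow, hρX, hρ_poly,
      add_sub_add_right_eq_sub, ← mul_sub]
    exact dvd_mul_right _ _
  ext n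
  have := PowerSeries.X_pow_dvd_iff.mp (hcongr (n + 1)) n n.lt_succ_self
  rwa [map_sub, sub_eq_zero] at this

end TaylorShift

section DegreeFiltration

variable {ι : Type*} (K : Type*) {A : Type*} [Field K] [CommRing A] [Algebra K A] (x : ι → A)

/-- The values at the point `x` of the polynomials over `K` of total degree at most `N`: a
multiplicative filtration of `K[x]`, measuring the order of the poles along the fibre at
infinity. -/
noncomputable def valuesLE (N : ℕ) : Submodule K A :=
  (MvPolynomial.restrictTotalDegree ι K N).map (MvPolynomial.aeval x).toLinearMap

variable {K x} {N M : ℕ} {z w : A}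

theorem mem_valuesLE :
    z ∈ valuesLE K x N ↔
      ∃ g : MvPolynomial ι K, g.totalDegree ≤ N ∧ MvPolynomial.aeval x g = z := by
  simp [valuesLE, MvPolynomial.mem_restrictTotalDegree]

theorem valuesLE_mono (h : N ≤ M) (hz : z ∈ valuesLE K x N) : z ∈ valuesLE K x M := by
  obtain ⟨g, hg, rfl⟩ := mem_valuesLE.mp hz
  exact mem_valuesLE.mpr ⟨g, hg.trans h, rfl⟩

theorem mul_mem_valuesLE (hz : z ∈ valuesLE K x N) (hw : w ∈ valuesLE K x M) :
    z * w ∈ valuesLE K x (N + M) := by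
  obtain ⟨g, hg, rfl⟩ := mem_valuesLE.mp hz
  obtain ⟨g', hg', rfl⟩ := mem_valuesLE.mp hw
  exact mem_valuesLE.mpr
    ⟨g * g', (MvPolynomial.totalDegree_mul _ _).trans (add_le_add hg hg'), map_mul _ _ _⟩

theorem algebraMap_mem_valuesLE (c : K) : algebraMap K A c ∈ valuesLE K x N :=
  mem_valuesLE.mpr ⟨MvPolynomial.C c, by simp, by simp⟩

theorem one_mem_valuesLE : (1 : A) ∈ valuesLE K x N := by
  simpa using algebraMap_mem_valuesLE (A := A) (x := x) (1 : K)

theorem apply_mem_valuesLE (i : ι) : x i ∈ valuesLE K x 1 :=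
  mem_valuesLE.mpr ⟨MvPolynomial.X i, by simp, by simp⟩

theorem pow_mem_valuesLE (hz : z ∈ valuesLE K x N) (k : ℕ) : z ^ k ∈ valuesLE K x (N * k) := by
  induction k with
  | zero => simpa using one_mem_valuesLE
  | succ k ih => rw [pow_succ, mul_add_one]; exact mul_mem_valuesLE ih hz

theorem prod_mem_valuesLE {κ : Type*} (s : Finset κ) {z : κ → A}
    (h : ∀ i ∈ s, z i ∈ valuesLE K x N) : ∏ i ∈ s, z i ∈ valuesLE K x (#s * N) := by
  classical
  induction s using Finset.induction_on with
  | empty => simpa using one_mem_valuesLE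
  | insert i s hi ih =>
    rw [prod_insert hi, card_insert_of_notMem hi, add_mul, one_mul, add_comm]
    exact mul_mem_valuesLE (h i (mem_insert_self _ _)) (ih fun j hj => h j (mem_insert_of_mem hj))

theorem coeff_prod_X_add_C_mem_valuesLE {κ : Type*} (s : Finset κ) {z : κ → A}
    (h : ∀ i ∈ s, z i ∈ valuesLE K x 1) (k : ℕ) :
    (∏ i ∈ s, (X + C (z i))).coeff k ∈ valuesLE K x (#s - k) := by
  classical
  rcases le_or_gt k #s with hk | hk
  · rw [Finset.prod_X_add_C_coeff _ _ hk]
    refine sum_mem fun t ht => ?_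
    rw [mem_powersetCard] at ht
    simpa [ht.2] using prod_mem_valuesLE t fun i hi => h i (ht.1 hi)
  · rw [coeff_eq_zero_of_natDegree_lt]
    · exact zero_mem _
    · refine ((natDegree_prod_le _ _).trans ?_).trans_lt hk
      exact (sum_le_card_nsmul s _ 1 fun i _ => by simp [natDegree_X_le]).trans (by simp)

variable (K x) in
/-- The power series `∑ wⱼ εʲ` with `wⱼ` of degree at most `ρ j + m` for all `j < N`. -/
def growthLE (ρ N m : ℕ) : AddSubgroup A⟦X⟧ where
  carrier := {w | ∀ j < N, w.coeff j ∈ valuesLE K x (ρ * j + m)}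
  zero_mem' j _ := by simp
  add_mem' hv hw j hj := by rw [map_add]; exact add_mem (hv j hj) (hw j hj)
  neg_mem' hv j hj := by rw [map_neg]; exact neg_mem (hv j hj)

variable {ρ m m' : ℕ} {v w : A⟦X⟧}

theorem growthLE_mono (hN : M ≤ N) (hm : m ≤ m') (hw : w ∈ growthLE K x ρ N m) :
    w ∈ growthLE K x ρ M m' :=
  fun j hj => valuesLE_mono (by gcongr) (hw j (hj.trans_le hN))

theorem mul_mem_growthLE (hv : v ∈ growthLE K x ρ N m) (hw : w ∈ growthLE K x ρ N m') :
    v * w ∈ growthLE K x ρ N (m + m') := by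
  intro j hj
  rw [PowerSeries.coeff_mul]
  refine sum_mem fun p hp => ?_
  rw [HasAntidiagonal.mem_antidiagonal] at hp
  refine valuesLE_mono (le_of_eq ?_) (mul_mem_valuesLE (hv p.1 (by omega)) (hw p.2 (by omega)))
  rw [← hp]; ring

theorem C_mem_growthLE {b : A} (hb : b ∈ valuesLE K x m) :
    PowerSeries.C b ∈ growthLE K x ρ N m := by
  intro j _
  rw [PowerSeries.coeff_C]
  split_ifs
  · exact valuesLE_mono (by omega) hb
  · exact zero_mem _

theorem pow_mem_growthLE (hw : w ∈ growthLE K x ρ N m) (k : ℕ) :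
    w ^ k ∈ growthLE K x ρ N (m * k) := by
  induction k with
  | zero => simpa using C_mem_growthLE (one_mem_valuesLE (K := K) (x := x) (N := 0))
  | succ k ih => rw [pow_succ, mul_add_one]; exact mul_mem_growthLE ih hw

theorem X_mul_mem_growthLE (hw : w ∈ growthLE K x ρ N (m + ρ)) :
    PowerSeries.X * w ∈ growthLE K x ρ (N + 1) m := by
  rintro (_ | j) hj
  · simp
  · rw [PowerSeries.coeff_succ_X_mul]
    exact valuesLE_mono (by rw [mul_add]; omega) (hw j (by omega))

end DegreeFiltration

/-- A totally split fibre with `r + 1` points of `h = ∏ (X - sᵢ) / (X - a)`: the fibre over `0`. -/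
structure SplitFiber (K : Type*) [Field K] (r : ℕ) where
  s : Fin (r + 1) → K
  s_injective : Function.Injective s
  a : K
  s_ne_a : ∀ i, s i ≠ a
  two_le : 2 ≤ r

namespace SplitFiber

variable {K : Type*} [Field K] {r : ℕ} (D : SplitFiber K r)

theorem exists_branches : ∃ x : Fin (r + 1) → K⟦X⟧, (∀ i, (x i).constantCoeff = D.s i) ∧
    fiberPoly (PowerSeries.C ∘ D.s) (.C D.a) .X = Lagrange.nodal univ x :=
  exists_fiberPoly_eq_nodal D.a (by rw [Fintype.card_fin]; linarith [D.two_le]) D.s_injective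

/-- The branches of `h⁻¹` near `0`: the power series `xᵢ(t)` with `h(xᵢ) = t` and `xᵢ(0) = sᵢ`. -/
noncomputable def x : Fin (r + 1) → K⟦X⟧ := D.exists_branches.choose

theorem constantCoeff_x (i : Fin (r + 1)) : (D.x i).constantCoeff = D.s i :=
  D.exists_branches.choose_spec.1 i

theorem fiberPoly_eq_nodal_x :
    fiberPoly (PowerSeries.C ∘ D.s) (.C D.a) .X = Lagrange.nodal univ D.x :=
  D.exists_branches.choose_spec.2

theorem x_injective : Function.Injective D.x := fun i j h =>
  D.s_injective (by rw [← D.constantCoeff_x, ← D.constantCoeff_x, h])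

theorem x_sub_x_mem (i j : Fin (r + 1)) : D.x i - D.x j ∈ valuesLE K D.x 1 :=
  sub_mem (apply_mem_valuesLE i) (apply_mem_valuesLE j)

theorem C_mem_valuesLE (c : K) (N : ℕ) : PowerSeries.C c ∈ valuesLE K D.x N :=
  algebraMap_mem_valuesLE c

theorem X_mem_valuesLE : (PowerSeries.X : K⟦X⟧) ∈ valuesLE K D.x r := by
  have hcoeff := congrArg (coeff · 1) D.fiberPoly_eq_nodal_x
  have hlin : (C PowerSeries.X * (X - C (PowerSeries.C D.a))).coeff 1 = PowerSeries.X := by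
    rw [coeff_C_mul]; simp
  simp only [fiberPoly, coeff_sub, hlin] at hcoeff
  have hmem (v : Fin (r + 1) → K⟦X⟧) (hv : ∀ i, v i ∈ valuesLE K D.x 1) :
      (Lagrange.nodal univ v).coeff 1 ∈ valuesLE K D.x r := by
    have := coeff_prod_X_add_C_mem_valuesLE univ (fun i _ => neg_mem (hv i)) 1
    simpa [Lagrange.nodal, sub_eq_add_neg] using this
  rw [← sub_sub_self ((Lagrange.nodal univ (PowerSeries.C ∘ D.s)).coeff 1) PowerSeries.X, hcoeff]
  exact sub_mem (hmem _ fun i => D.C_mem_valuesLE _ _) (hmem _ apply_mem_valuesLE)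

theorem prod_sub_map_x {R : Type*} [CommRing R] (φ : K⟦X⟧ →+* R) (z : R) :
    ∏ j, (z - φ (D.x j)) =
      ∏ j, (z - φ (.C (D.s j))) - φ .X * (z - φ (.C D.a)) := by
  have h := congrArg (fun p => (p.map φ).eval z) D.fiberPoly_eq_nodal_x
  simp only [fiberPoly_map, eval_fiberPoly] at h
  simpa [Lagrange.nodal, Polynomial.map_prod, eval_prod] using h.symm

theorem prod_x_sub_C_s (i : Fin (r + 1)) :
    ∏ j, (D.x i - .C (D.s j)) = PowerSeries.X * (D.x i - .C D.a) := by
  have h := D.prod_sub_map_x (RingHom.id _) (D.x i)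
  simp only [RingHom.id_apply] at h
  rw [prod_eq_zero (mem_univ i) (sub_self _)] at h
  exact sub_eq_zero.mp h.symm

/-- The branch `xᵢ(u)` in the second variable, as an element of `K⟦t⟧⟦u⟧`. -/
noncomputable def y (i : Fin (r + 1)) : K⟦X⟧⟦X⟧ := (D.x i).map PowerSeries.C

theorem constantCoeff_y (i : Fin (r + 1)) :
    PowerSeries.constantCoeff (D.y i) = PowerSeries.C (D.s i) := by
  rw [y, ← PowerSeries.coeff_zero_eq_constantCoeff_apply, PowerSeries.coeff_map,
    PowerSeries.coeff_zero_eq_constantCoeff_apply, constantCoeff_x]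

theorem prod_y_sub_C_s (i : Fin (r + 1)) :
    ∏ j, (D.y i - .C (.C (D.s j))) = PowerSeries.X * (D.y i - .C (.C D.a)) := by
  simpa [y] using congrArg (PowerSeries.map (PowerSeries.C : K →+* K⟦X⟧)) (D.prod_x_sub_C_s i)

theorem prod_map_y_sub_x (i : Fin (r + 1)) {R : Type*} [CommRing R] (φ : K⟦X⟧⟦X⟧ →+* R) :
    ∏ j, (φ (D.y i) - φ (.C (D.x j))) =
      (φ .X - φ (.C .X)) * (φ (D.y i) - φ (.C (.C D.a))) := by
  have h := D.prod_sub_map_x (φ.comp PowerSeries.C) (φ (D.y i))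
  simp only [RingHom.comp_apply] at h
  have h' := congrArg φ (D.prod_y_sub_C_s i)
  simp only [map_prod, map_sub, map_mul] at h'
  rw [h, h']
  ring

/-- The branch `xᵢ(t + ε)`, expanded at the diagonal `u = t`. -/
noncomputable def z (i : Fin (r + 1)) : K⟦X⟧⟦X⟧ :=
  taylorShift .X PowerSeries.constantCoeff_X (D.y i)

theorem constantCoeff_z (i : Fin (r + 1)) : (D.z i).constantCoeff = D.x i :=
  constantCoeff_taylorShift_X_map_C _

theorem prod_z_sub_C_x (i : Fin (r + 1)) :
    ∏ j, (D.z i - .C (D.x j)) = PowerSeries.X * (D.z i - .C (.C D.a)) := by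
  have := D.prod_map_y_sub_x i (taylorShift .X PowerSeries.constantCoeff_X)
  simpa only [z, taylorShift_C, taylorShift_X, add_sub_cancel_left] using this

/-- The derivative at `xᵢ` of the polynomial with roots `xⱼ`. -/
noncomputable def branchDeriv (i : Fin (r + 1)) : K⟦X⟧ := ∏ j ∈ univ.erase i, (D.x i - D.x j)

theorem branchDeriv_ne_zero (i : Fin (r + 1)) : D.branchDeriv i ≠ 0 :=
  prod_ne_zero_iff.mpr fun _ hj =>
    sub_ne_zero.mpr fun h => ne_of_mem_erase hj (D.x_injective h).symm

theorem branchDeriv_mem_valuesLE (i : Fin (r + 1)) : D.branchDeriv i ∈ valuesLE K D.x r := by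
  simpa [branchDeriv] using prod_mem_valuesLE (univ.erase i) fun j _ => D.x_sub_x_mem i j

/-- The discriminant of the polynomial with roots `xᵢ`, up to sign. -/
noncomputable def disc : K⟦X⟧ := ∏ i, D.branchDeriv i

theorem disc_ne_zero : D.disc ≠ 0 := prod_ne_zero_iff.mpr fun i _ => D.branchDeriv_ne_zero i

theorem disc_mem_valuesLE : D.disc ∈ valuesLE K D.x ((r + 1) * r) := by
  simpa [disc] using prod_mem_valuesLE univ fun i _ => D.branchDeriv_mem_valuesLE i

theorem exists_disc_eq_mul_branchDeriv_sq (i : Fin (r + 1)) :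
    ∃ g ∈ valuesLE K D.x (r * (r - 1)), D.disc = g * D.branchDeriv i ^ 2 := by
  set g := ∏ k ∈ univ.erase i, ∏ j ∈ (univ.erase k).erase i, (D.x k - D.x j)
  have hi {k} (hk : k ∈ univ.erase i) : i ∈ univ.erase k :=
    mem_erase.mpr ⟨(ne_of_mem_erase hk).symm, mem_univ _⟩
  have hg : g ∈ valuesLE K D.x (r * (r - 1)) := by
    have := prod_mem_valuesLE (univ.erase i) (N := r - 1) fun k hk => by
      simpa [card_erase_of_mem (hi hk)] using
        prod_mem_valuesLE ((univ.erase k).erase i) fun j _ => D.x_sub_x_mem k j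
    simpa using this
  have hsign : ∏ k ∈ univ.erase i, (D.x k - D.x i) = (-1) ^ r * D.branchDeriv i := by
    simp_rw [branchDeriv, ← neg_sub (D.x i), prod_neg, card_erase_of_mem (mem_univ i),
      card_univ, Fintype.card_fin, Nat.add_sub_cancel]
  have hrest : ∏ k ∈ univ.erase i, D.branchDeriv k = (∏ k ∈ univ.erase i, (D.x k - D.x i)) * g := by
    rw [← prod_mul_distrib]
    exact prod_congr rfl fun k hk => (mul_prod_erase _ _ (hi hk)).symm
  refine ⟨(-1) ^ r * g, ?_, ?_⟩
  · rcases neg_one_pow_eq_or K⟦X⟧ r with h | h <;> simpa [h] using hg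
  · rw [disc, ← mul_prod_erase univ _ (mem_univ i), hrest, hsign]
    ring

/-- The series `w` determined by `zᵢ(δ² ε) = xᵢ + δ ε w`, where `δ` is the derivative at `xᵢ`. -/
noncomputable def normalizedTail (i : Fin (r + 1)) : K⟦X⟧⟦X⟧ :=
  PowerSeries.mk fun k => D.branchDeriv i ^ (2 * k + 1) * (D.z i).coeff (k + 1)

theorem rescale_z (i : Fin (r + 1)) : PowerSeries.rescale (D.branchDeriv i ^ 2) (D.z i) =
    .C (D.x i) + PowerSeries.X * (.C (D.branchDeriv i) * D.normalizedTail i) := by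
  ext1 (_ | k)
  · rw [PowerSeries.coeff_rescale, PowerSeries.coeff_zero_eq_constantCoeff_apply, constantCoeff_z]
    simp
  · simp [PowerSeries.coeff_rescale, PowerSeries.coeff_succ_X_mul, normalizedTail]
    ring

/-- The polynomial `∏_{j ≠ i} (V + xᵢ - xⱼ)`, whose constant term is the derivative at `xᵢ`. -/
noncomputable def cofactor (i : Fin (r + 1)) : K⟦X⟧[X] :=
  ∏ j ∈ univ.erase i, (X + C (D.x i - D.x j))

theorem natDegree_cofactor (i : Fin (r + 1)) : (D.cofactor i).natDegree = r := by
  rw [cofactor, natDegree_prod_of_monic _ _ fun j _ => monic_X_add_C _]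
  simp only [natDegree_X_add_C]
  simp

theorem eval₂_cofactor (i : Fin (r + 1)) (v : K⟦X⟧⟦X⟧) :
    ∏ j ∈ univ.erase i, (.C (D.x i) + v - .C (D.x j)) =
      (D.cofactor i).divX.eval₂ PowerSeries.C v * v + .C (D.branchDeriv i) := by
  have hcoeff : (D.cofactor i).coeff 0 = D.branchDeriv i := by
    simp [cofactor, branchDeriv, coeff_zero_prod]
  have hsplit : (D.cofactor i).eval₂ PowerSeries.C v =
      (D.cofactor i).divX.eval₂ PowerSeries.C v * v + .C (D.branchDeriv i) := by
    conv_lhs => rw [← divX_mul_X_add (D.cofactor i)]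
    rw [eval₂_add, eval₂_mul, eval₂_X, eval₂_C, hcoeff]
  rw [← hsplit, cofactor, eval₂_finsetProd]
  refine prod_congr rfl fun j _ => ?_
  rw [eval₂_add, eval₂_X, eval₂_C, map_sub]
  ring

-- Newton's method: after rescaling `ε` by `δ²`, the equation `∏ⱼ (zᵢ - xⱼ) = ε (zᵢ - a)` becomes a
-- fixed-point equation for the tail with coefficients polynomial in the branches.
theorem normalizedTail_eq (i : Fin (r + 1)) :
    let v := PowerSeries.X * (.C (D.branchDeriv i) * D.normalizedTail i)
    D.normalizedTail i = .C (D.x i - .C D.a) + v - PowerSeries.X *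
      (D.normalizedTail i * D.normalizedTail i * (D.cofactor i).divX.eval₂ PowerSeries.C v) := by
  intro v
  have hC (b : K⟦X⟧) : PowerSeries.rescale (D.branchDeriv i ^ 2) (.C b) = .C b := by
    ext1 k
    rw [PowerSeries.coeff_rescale, PowerSeries.coeff_C]
    split_ifs with h <;> simp [h]
  have heq := congrArg (PowerSeries.rescale (D.branchDeriv i ^ 2)) (D.prod_z_sub_C_x i)
  simp only [map_prod, map_mul, map_sub, rescale_z, hC] at heq
  rw [← mul_prod_erase univ _ (mem_univ i), eval₂_cofactor, PowerSeries.rescale_X, map_pow] at heq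
  have hne : (.C (D.branchDeriv i) ^ 2 * .X : K⟦X⟧⟦X⟧) ≠ 0 :=
    mul_ne_zero (pow_ne_zero _ fun h => D.branchDeriv_ne_zero i
      (PowerSeries.C_injective (by rw [h, map_zero]))) PowerSeries.X_ne_zero
  apply mul_left_cancel₀ hne
  rw [map_sub]
  linear_combination heq

theorem eval₂_divX_cofactor_mem_growthLE (i : Fin (r + 1)) {N : ℕ} {v : K⟦X⟧⟦X⟧}
    (hv : v ∈ growthLE K D.x r N 1) :
    (D.cofactor i).divX.eval₂ PowerSeries.C v ∈ growthLE K D.x r N (r - 1) := by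
  have hdeg : (D.cofactor i).divX.natDegree < r := by
    rw [natDegree_divX_eq_natDegree_tsub_one, natDegree_cofactor]
    have := D.two_le
    omega
  rw [eval₂_eq_sum_range' PowerSeries.C hdeg]
  refine sum_mem fun m hm => ?_
  have hcoeff := coeff_prod_X_add_C_mem_valuesLE (univ.erase i)
    (fun j _ => D.x_sub_x_mem i j) (m + 1)
  rw [card_erase_of_mem (mem_univ i), card_univ, Fintype.card_fin, Nat.add_sub_cancel] at hcoeff
  rw [mem_range] at hm
  rw [coeff_divX]
  exact growthLE_mono le_rfl (by omega)
    (mul_mem_growthLE (C_mem_growthLE hcoeff) (pow_mem_growthLE hv m))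

theorem normalizedTail_mem_growthLE (i : Fin (r + 1)) (N : ℕ) :
    D.normalizedTail i ∈ growthLE K D.x r N 1 := by
  induction N with
  | zero => exact fun j hj => absurd hj j.not_lt_zero
  | succ N ih =>
    have hr := D.two_le
    have hv : PowerSeries.X * (.C (D.branchDeriv i) * D.normalizedTail i) ∈
        growthLE K D.x r (N + 1) 1 :=
      X_mul_mem_growthLE (growthLE_mono le_rfl (by omega)
        (mul_mem_growthLE (C_mem_growthLE (D.branchDeriv_mem_valuesLE i)) ih))
    have hQ := growthLE_mono N.le_succ le_rfl (D.eval₂_divX_cofactor_mem_growthLE i hv)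
    rw [normalizedTail_eq]
    refine sub_mem (add_mem (C_mem_growthLE (sub_mem (apply_mem_valuesLE i)
      (D.C_mem_valuesLE _ _))) hv) (X_mul_mem_growthLE ?_)
    exact growthLE_mono le_rfl (by omega) (mul_mem_growthLE (mul_mem_growthLE ih ih) hQ)

theorem disc_pow_mul_coeff_z_mem_valuesLE (i : Fin (r + 1)) (k : ℕ) :
    D.disc ^ k * (D.z i).coeff k ∈ valuesLE K D.x (r ^ 2 * k + 1) := by
  rcases k with _ | k
  · simpa [constantCoeff_z] using apply_mem_valuesLE i
  obtain ⟨g, hg, hdisc⟩ := D.exists_disc_eq_mul_branchDeriv_sq i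
  have htail := D.normalizedTail_mem_growthLE i (k + 1) k k.lt_succ_self
  rw [normalizedTail, PowerSeries.coeff_mk] at htail
  have hfactor : D.disc ^ (k + 1) * (D.z i).coeff (k + 1) = g ^ (k + 1) * D.branchDeriv i *
      (D.branchDeriv i ^ (2 * k + 1) * (D.z i).coeff (k + 1)) := by
    rw [hdisc]; ring
  rw [hfactor]
  refine valuesLE_mono (le_of_eq ?_) (mul_mem_valuesLE (mul_mem_valuesLE
    (pow_mem_valuesLE hg (k + 1)) (D.branchDeriv_mem_valuesLE i)) htail)
  obtain ⟨m, rfl⟩ := Nat.exists_eq_add_of_le D.two_le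
  rw [show 2 + m - 1 = m + 1 by omega]
  ring

end SplitFiber

section RelationGroup

variable {ι k E : Type*}

theorem aeval_comp_mul [CommRing k] [CommRing E] [Algebra k E] (x : ι → E) (π τ : Equiv.Perm ι)
    (g : MvPolynomial ι k) : MvPolynomial.aeval (x ∘ ⇑(π * τ)) g =
      MvPolynomial.aeval (x ∘ π) (MvPolynomial.rename τ g) := by
  rw [MvPolynomial.aeval_rename, Equiv.Perm.coe_mul, Function.comp_assoc]

/-- The Galois group of a family `x` over `k`, as Galois defined it: the permutations of the
indices preserving all the algebraic relations over `k` between the members of `x`. -/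
def relationGroup (k : Type*) {E : Type*} [CommRing k] [CommRing E] [Algebra k E] (x : ι → E) :
    Subgroup (Equiv.Perm ι) where
  carrier := {π | ∀ g : MvPolynomial ι k,
    MvPolynomial.aeval (x ∘ π) g = 0 ↔ MvPolynomial.aeval x g = 0}
  one_mem' _ := Iff.rfl
  mul_mem' {π τ} hπ hτ g := by
    rw [aeval_comp_mul, hπ, MvPolynomial.aeval_rename, hτ]
  inv_mem' {π} hπ g := by
    have h := hπ (MvPolynomial.rename (π⁻¹ : Equiv.Perm ι) g)
    rw [← aeval_comp_mul, mul_inv_cancel, MvPolynomial.aeval_rename] at h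
    exact h.symm

section CommRing

variable [CommRing k] [CommRing E] [Algebra k E] {x : ι → E} {π : Equiv.Perm ι}

theorem mem_relationGroup : π ∈ relationGroup k x ↔ ∀ g : MvPolynomial ι k,
    MvPolynomial.aeval (x ∘ π) g = 0 ↔ MvPolynomial.aeval x g = 0 := Iff.rfl

theorem relationGroup_comp_of_injective {F : Type*} [CommRing F] [Algebra k F] {φ : E →ₐ[k] F}
    (hφ : Function.Injective φ) (x : ι → E) : relationGroup k (φ ∘ x) = relationGroup k x := by
  have key (y : ι → E) (g : MvPolynomial ι k) :
      MvPolynomial.aeval (φ ∘ y) g = 0 ↔ MvPolynomial.aeval y g = 0 := by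
    rw [← map_eq_zero_iff φ hφ, MvPolynomial.comp_aeval_apply]; rfl
  ext π
  simp only [mem_relationGroup, Function.comp_assoc, key]

theorem isIntegral_aeval_comp {R : Type*} [CommRing R] [Algebra R k] [Algebra R E]
    [IsScalarTower R k E] (hπ : π ∈ relationGroup k x) {g : MvPolynomial ι k}
    (hg : IsIntegral R (MvPolynomial.aeval x g)) :
    IsIntegral R (MvPolynomial.aeval (x ∘ π) g) := by
  obtain ⟨p, hp, hpg⟩ := hg
  have hcomm (y : ι → E) : eval₂ (algebraMap R E) (MvPolynomial.aeval y g) p =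
      MvPolynomial.aeval y (aeval g p) :=
    aeval_algHom_apply ((MvPolynomial.aeval (R := k) y).restrictScalars R) g p
  rw [hcomm, ← hπ] at hpg
  exact ⟨p, hp, by rw [hcomm, hpg]⟩

theorem aeval_comp_of_algEquiv {σ : E ≃ₐ[k] E} {π : ι → ι} (h : ∀ i, σ (x i) = x (π i))
    (g : MvPolynomial ι k) : MvPolynomial.aeval (x ∘ π) g = σ (MvPolynomial.aeval x g) := by
  rw [show x ∘ π = fun i => (σ : E →ₐ[k] E) (x i) from (funext h).symm,
    ← MvPolynomial.comp_aeval_apply]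
  rfl

end CommRing

section Field

variable {K : Type*} [CommRing K] [Field E] [Algebra K E] {x : ι → E}

theorem linearIndependent_aeval_comp {α : Type*} {e : α → ι → ι} (he : Function.Injective e)
    (hx : Function.Injective x) : LinearIndependent E
      fun π : α => (MvPolynomial.aeval (x ∘ e π) : MvPolynomial ι K → E) := by
  refine (linearIndependent_monoidHom (MvPolynomial ι K) E).comp
    (fun π : α => ((MvPolynomial.aeval (x ∘ e π) : MvPolynomial ι K →ₐ[K] E) :
      MvPolynomial ι K →* E)) fun π τ h => ?_
  refine he (funext fun i => hx ?_)
  simpa using DFunLike.congr_fun h (MvPolynomial.X i)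

theorem span_range_aeval_comp_eq_top {α : Type*} [Finite α] {e : α → ι → ι}
    (he : Function.Injective e) (hx : Function.Injective x) :
    Submodule.span E (Set.range fun (g : MvPolynomial ι K) (π : α) =>
      MvPolynomial.aeval (x ∘ e π) g) = ⊤ := by
  classical
  cases nonempty_fintype α
  by_contra hne
  obtain ⟨f, hf, hker⟩ := Submodule.exists_le_ker_of_lt_top _ (lt_top_iff_ne_top.mpr hne)
  obtain ⟨c, hf_apply⟩ : ∃ c : α → E, ∀ v, f v = ∑ π, v π * c π :=
    ⟨_, LinearMap.pi_apply_eq_sum_univ f⟩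
  have hli := linearIndependent_aeval_comp (K := K) he hx
  rw [Fintype.linearIndependent_iff] at hli
  have hzero : ∀ π, c π = 0 := by
    refine hli c (funext fun g => ?_)
    have := hker (Submodule.subset_span ⟨g, rfl⟩)
    rw [LinearMap.mem_ker, hf_apply] at this
    rw [Finset.sum_apply, Pi.zero_apply, ← this]
    exact sum_congr rfl fun π _ => mul_comm _ _
  refine hf (LinearMap.ext fun v => ?_)
  rw [hf_apply, LinearMap.zero_apply]
  exact sum_eq_zero fun π _ => by rw [hzero, mul_zero]

/-- By Dedekind's independence of characters the conjugate evaluations span `E ^ G`, and a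
`k`-linear relation between the values at `x` is preserved by `G`. -/
theorem exists_linearIndependent_aeval (k : Type*) [Field k] [Algebra k E] [Algebra K k]
    [IsScalarTower K k E] [Finite ι] (hx : Function.Injective x) :
    ∃ β : Fin (Nat.card (relationGroup k x)) → MvPolynomial ι K,
      LinearIndependent k fun p => MvPolynomial.aeval x (β p) := by
  classical
  cases nonempty_fintype (relationGroup k x)
  have hspan := span_range_aeval_comp_eq_top (K := K) (x := x)
    (e := fun π : relationGroup k x => π.1) (fun π τ h => Subtype.ext (DFunLike.coe_injective h)) hx
  obtain ⟨b, hb, -, hli⟩ := Submodule.exists_fun_fin_finrank_span_eq E (Set.range fun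
    (g : MvPolynomial ι K) (π : relationGroup k x) => MvPolynomial.aeval (x ∘ π.1) g)
  have hcard : Nat.card (relationGroup k x) = Module.finrank E (Submodule.span E (Set.range fun
      (g : MvPolynomial ι K) (π : relationGroup k x) => MvPolynomial.aeval (x ∘ π.1) g)) := by
    rw [hspan, finrank_top, Module.finrank_fintype_fun_eq_card, Nat.card_eq_fintype_card]
  choose β hβ using hb
  refine ⟨fun p => β (Fin.cast hcard p), Fintype.linearIndependent_iff.mpr fun c hc p => ?_⟩
  have heval (y : ι → E) : MvPolynomial.aeval y
      (∑ p, c p • MvPolynomial.map (algebraMap K k) (β (Fin.cast hcard p))) =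
        ∑ p, c p • MvPolynomial.aeval y (β (Fin.cast hcard p)) := by
    simp [MvPolynomial.aeval_map_algebraMap]
  have hsum : ∑ p, algebraMap k E (c p) • b (Fin.cast hcard p) = 0 := by
    funext π
    have := (π.2 _).mpr ((heval x).trans hc)
    rw [heval] at this
    simpa [← hβ, Algebra.smul_def] using this
  have := Fintype.linearIndependent_iff.mp (hli.comp _ (Fin.cast_injective hcard)) _ hsum p
  exact (map_eq_zero_iff _ (algebraMap k E).injective).mp this

end Field

section Galois

variable [Fintype ι] [Field k] [Field E] [Algebra k E] {x : ι → E} {f : k[X]}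

theorem rootSet_eq_range_of_map_eq_nodal (hf : f.map (algebraMap k E) = Lagrange.nodal univ x) :
    f.rootSet E = Set.range x := by
  have hf0 : f ≠ 0 := by
    rintro rfl
    exact Lagrange.nodal_ne_zero (hf.symm.trans (Polynomial.map_zero _))
  ext w
  rw [mem_rootSet_of_ne hf0, aeval_def, ← eval_map, hf, Lagrange.eval_nodal, prod_eq_zero_iff]
  simp [sub_eq_zero, eq_comm]

theorem exists_mem_relationGroup_of_algEquiv
    (hf : f.map (algebraMap k E) = Lagrange.nodal univ x) (hx : Function.Injective x)
    (σ : E ≃ₐ[k] E) : ∃ π ∈ relationGroup k x, ∀ i, σ (x i) = x (π i) := by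
  have hroot (i : ι) : ∃ j, x j = σ (x i) := by
    have hi : x i ∈ f.rootSet E := rootSet_eq_range_of_map_eq_nodal hf ▸ ⟨i, rfl⟩
    have hmem : σ (x i) ∈ f.rootSet E :=
      rootSet_mapsTo (σ : E →ₐ[k] E) hi
    rwa [rootSet_eq_range_of_map_eq_nodal hf] at hmem
  choose π hπ using hroot
  have hinj : Function.Injective π := fun i j h =>
    hx (σ.injective (by rw [← hπ, ← hπ, h]))
  refine ⟨.ofBijective π (Finite.injective_iff_bijective.mp hinj), fun g => ?_,
    fun i => (hπ i).symm⟩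
  rw [Equiv.coe_ofBijective, aeval_comp_of_algEquiv fun i => (hπ i).symm]
  exact map_eq_zero_iff σ σ.injective

theorem isGalois_adjoin_range (hf : f.map (algebraMap k E) = Lagrange.nodal univ x)
    (hx : Function.Injective x) : FiniteDimensional k (IntermediateField.adjoin k (Set.range x)) ∧
      IsGalois k (IntermediateField.adjoin k (Set.range x)) := by
  have hsplits : (f.map (algebraMap k E)).Splits := by
    rw [hf]; exact .prod fun i _ => .X_sub_C _
  have hsep : f.Separable := by
    rw [← separable_map (algebraMap k E), hf]; exact separable_prod_X_sub_C_iff.mpr hx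
  have hsplit := IntermediateField.adjoin_rootSet_isSplittingField hsplits
  rw [rootSet_eq_range_of_map_eq_nodal hf] at hsplit
  exact ⟨IsSplittingField.finiteDimensional _ f, IsGalois.of_separable_splitting_field hsep⟩

theorem aeval_mem_range_of_fixed (hf : f.map (algebraMap k E) = Lagrange.nodal univ x)
    (hx : Function.Injective x) {g : MvPolynomial ι k} (hg : ∀ π ∈ relationGroup k x,
      MvPolynomial.aeval (x ∘ π) g = MvPolynomial.aeval x g) :
    MvPolynomial.aeval x g ∈ Set.range (algebraMap k E) := by
  set L := IntermediateField.adjoin k (Set.range x)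
  obtain ⟨_, _⟩ := isGalois_adjoin_range hf hx
  let ξ (i : ι) : L := ⟨x i, IntermediateField.subset_adjoin k _ ⟨i, rfl⟩⟩
  have hval (τ : ι → ι) : L.val (MvPolynomial.aeval (ξ ∘ τ) g) = MvPolynomial.aeval (x ∘ τ) g :=
    MvPolynomial.comp_aeval_apply (ξ ∘ τ) L.val g
  have hξ : Function.Injective ξ := fun i j h => hx (congrArg Subtype.val h)
  have hfξ : f.map (algebraMap k L) = Lagrange.nodal univ ξ := by
    refine map_injective L.val.toRingHom L.val.injective ?_
    rw [Polynomial.map_map]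
    simpa [Lagrange.nodal, Polynomial.map_prod, ξ] using hf
  have hmem : MvPolynomial.aeval ξ g ∈ (⊥ : IntermediateField k L) := by
    rw [IsGalois.mem_bot_iff_fixed]
    intro σ
    obtain ⟨π, hπ, hσ⟩ := exists_mem_relationGroup_of_algEquiv hfξ hξ σ
    rw [← relationGroup_comp_of_injective L.val.injective] at hπ
    rw [← aeval_comp_of_algEquiv hσ]
    exact L.val.injective ((hval π).trans ((hg π hπ).trans (hval id).symm))
  obtain ⟨c, hc⟩ := IntermediateField.mem_bot.mp hmem
  exact ⟨c, (congrArg L.val hc).trans (hval id)⟩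

end Galois

end RelationGroup

section Valuation

theorem pow_valuation_le_of_mem_valuesLE {ι K A Γ₀ : Type*} [Field K] [CommRing A] [Algebra K A]
    [LinearOrderedCommGroupWithZero Γ₀] {x : ι → A} (v : Valuation A Γ₀) [v.IsTrivialOn K]
    {r N : ℕ} (hr : r ≠ 0) {τ : Γ₀} (hτ : 1 ≤ τ) (hx : ∀ i, v (x i) ^ r ≤ τ) {w : A}
    (hw : w ∈ valuesLE K x N) : v w ^ r ≤ τ ^ N := by
  obtain ⟨g, hg, rfl⟩ := mem_valuesLE.mp hw
  rw [MvPolynomial.aeval_def, MvPolynomial.eval₂_eq]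
  refine sum_induction _ (fun w => v w ^ r ≤ τ ^ N) (fun a b ha hb => ?_)
    (by simp [hr]) fun m hm => ?_
  · exact (pow_le_pow_left₀ zero_le (v.map_add a b) r).trans
      (by rcases max_choice (v a) (v b) with h | h <;> rwa [h])
  · rw [map_mul, map_prod, mul_pow, ← prod_pow]
    have hc : v (algebraMap K A (g.coeff m)) ^ r ≤ 1 :=
      pow_le_one₀ zero_le (Valuation.IsTrivialOn.valuation_algebraMap_le_one v _)
    have hprod : ∏ i ∈ m.support, v (x i ^ m i) ^ r ≤ ∏ i ∈ m.support, τ ^ m i :=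
      prod_le_prod' fun i _ => by
        rw [map_pow, pow_right_comm]; exact pow_le_pow_left₀ zero_le (hx i) _
    refine (mul_le_mul' hc hprod).trans ?_
    rw [one_mul, prod_pow_eq_pow_sum]
    exact pow_le_pow_right₀ hτ ((MvPolynomial.le_totalDegree hm).trans hg)

theorem exists_valuationSubring_notMem {R E : Type*} [CommRing R] [Field E] [Algebra R E] {w : E}
    (hw : ¬ IsIntegral R w) :
    ∃ O : ValuationSubring E, (∀ c : R, algebraMap R E c ∈ O) ∧ w ∉ O := by
  have hclosed : IsIntegrallyClosedIn (integralClosure R E).toSubring E :=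
    inferInstanceAs (IsIntegrallyClosedIn (integralClosure R E) E)
  obtain ⟨O, hO, hwO⟩ := Subring.exists_le_valuationSubring_of_isIntegrallyClosedIn
    (R := (integralClosure R E).toSubring) (x := w) hw
  exact ⟨O, fun c => hO (isIntegral_algebraMap (R := R) (x := c)), hwO⟩

theorem isTrivialOn_of_algebraMap_mem {K E : Type*} [Field K] [Field E] [Algebra K E]
    {O : ValuationSubring E} (hO : ∀ c : K, algebraMap K E c ∈ O) : O.valuation.IsTrivialOn K where
  eq_one c hc := by
    have hunit : O.valuation (algebraMap K E c) * O.valuation (algebraMap K E c⁻¹) = 1 := by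
      rw [← map_mul, ← map_mul, mul_inv_cancel₀ hc, map_one, map_one]
    have hle (c : K) := (O.valuation_le_one_iff _).mpr (hO c)
    exact le_antisymm (hle c) (hunit ▸ mul_le_of_le_one_right' (hle c⁻¹))

instance faithfulSMul_polynomial_powerSeries {K : Type*} [CommRing K] : FaithfulSMul K[X] K⟦X⟧ :=
  (faithfulSMul_iff_algebraMap_injective _ _).mpr (Polynomial.coe_injective K)

theorem not_isIntegral_powerSeries_X (K : Type*) [Field K] :
    ¬ IsIntegral K (algebraMap K⟦X⟧ (FractionRing K⟦X⟧) .X) := by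
  rw [← isAlgebraic_iff_isIntegral, ← Polynomial.coe_X]
  have hinj : Function.Injective (algebraMap K[X] (FractionRing K⟦X⟧)) :=
    FaithfulSMul.algebraMap_injective _ _
  exact (transcendental_algebraMap_iff hinj).mpr (transcendental_X K)

theorem exists_valuation_one_lt_X (K : Type*) [Field K] :
    ∃ O : ValuationSubring (FractionRing K⟦X⟧),
      (O.valuation.comap (algebraMap K⟦X⟧ _)).IsTrivialOn K ∧
        1 < O.valuation.comap (algebraMap K⟦X⟧ _) .X := by
  obtain ⟨O, hO, hX⟩ := exists_valuationSubring_notMem (not_isIntegral_powerSeries_X K)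
  have := isTrivialOn_of_algebraMap_mem hO
  refine ⟨O, ⟨fun c hc => ?_⟩, lt_of_not_ge fun h => hX ((O.valuation_le_one_iff _).mp h)⟩
  rw [Valuation.comap_apply, ← IsScalarTower.algebraMap_apply]
  exact Valuation.IsTrivialOn.eq_one c hc

end Valuation

namespace SplitFiber

variable {K : Type*} [Field K] {r : ℕ} (D : SplitFiber K r)

theorem pow_valuation_x_le {Γ₀ : Type*} [LinearOrderedCommGroupWithZero Γ₀]
    (v : Valuation K⟦X⟧ Γ₀) [v.IsTrivialOn K] (hX : 1 < v .X) (i : Fin (r + 1)) :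
    v (D.x i) ^ r ≤ v .X := by
  rcases le_or_gt (v (D.x i)) 1 with hle | hlt
  · exact (pow_le_one₀ zero_le hle).trans hX.le
  · have hsub (c : K) : v (D.x i - .C c) = v (D.x i) :=
      Valuation.map_sub_eq_of_lt_left _
        ((Valuation.IsTrivialOn.valuation_algebraMap_le_one v c).trans_lt hlt)
    have h := congrArg v (D.prod_x_sub_C_s i)
    simp only [map_mul, map_prod, hsub, prod_const, card_univ, Fintype.card_fin, pow_succ] at h
    exact (mul_right_cancel₀ (zero_lt_one.trans hlt).ne' h).le

theorem mul_natDegree_le_of_mem_valuesLE {p : K[X]} {N : ℕ} (h : (p : K⟦X⟧) ∈ valuesLE K D.x N) :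
    r * p.natDegree ≤ N := by
  rcases eq_or_ne p 0 with rfl | hp
  · simp
  obtain ⟨O, htriv, hX⟩ := exists_valuation_one_lt_X K
  set v := O.valuation.comap (algebraMap K⟦X⟧ _)
  have hle := pow_valuation_le_of_mem_valuesLE v (by have := D.two_le; omega) hX.le
    (D.pow_valuation_x_le v hX) h
  have hp' : (p : K⟦X⟧) = aeval (.X : K⟦X⟧) p := by
    have h := aeval_algebraMap_apply K⟦X⟧ (X : K[X]) p
    rw [aeval_X_left_apply] at h
    exact h.symm.trans (by congr 2; exact Polynomial.coe_X)
  rw [hp', valuation_aeval_eq_valuation_X_pow_natDegree_of_one_lt_valuation_X _ hX hp, ← pow_mul,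
    mul_comm, pow_le_pow_iff_right₀ hX] at hle
  exact hle

theorem map_coe_fiberPoly : (fiberPoly (C ∘ D.s) (C D.a) X).map (algebraMap K[X] K⟦X⟧) =
    Lagrange.nodal univ D.x := by
  have hC : algebraMap K[X] K⟦X⟧ ∘ C ∘ D.s = PowerSeries.C ∘ D.s := funext fun i => coe_C _
  have ha : algebraMap K[X] K⟦X⟧ (C D.a) = PowerSeries.C D.a := coe_C _
  have hX : algebraMap K[X] K⟦X⟧ X = PowerSeries.X := coe_X
  rw [fiberPoly_map, hC, hX, ha, D.fiberPoly_eq_nodal_x]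

section GaloisGroup

attribute [local instance] FractionRing.liftAlgebra

/-- The Galois group of the Galois closure of `h : P¹ → P¹`, acting on the branches over `0`. -/
noncomputable def galoisGroup : Subgroup (Equiv.Perm (Fin (r + 1))) :=
  relationGroup (FractionRing K[X]) (algebraMap K⟦X⟧ (FractionRing K⟦X⟧) ∘ D.x)

theorem algebraMap_x_injective :
    Function.Injective (algebraMap K⟦X⟧ (FractionRing K⟦X⟧) ∘ D.x) :=
  (FaithfulSMul.algebraMap_injective K⟦X⟧ (FractionRing K⟦X⟧)).comp D.x_injective

theorem map_fiberPoly_eq_nodal :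
    ((fiberPoly (C ∘ D.s) (C D.a) X).map (algebraMap K[X] (FractionRing K[X]))).map
        (algebraMap (FractionRing K[X]) (FractionRing K⟦X⟧)) =
      Lagrange.nodal univ (algebraMap K⟦X⟧ (FractionRing K⟦X⟧) ∘ D.x) := by
  rw [Polynomial.map_map, ← IsScalarTower.algebraMap_eq,
    IsScalarTower.algebraMap_eq K[X] K⟦X⟧, ← Polynomial.map_map, D.map_coe_fiberPoly]
  simp [Lagrange.nodal, Polynomial.map_prod]

theorem aeval_algebraMap_comp (y : Fin (r + 1) → K⟦X⟧) (g : MvPolynomial (Fin (r + 1)) K) :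
    MvPolynomial.aeval (algebraMap K⟦X⟧ (FractionRing K⟦X⟧) ∘ y)
      (MvPolynomial.map (algebraMap K (FractionRing K[X])) g) =
        algebraMap K⟦X⟧ (FractionRing K⟦X⟧) (MvPolynomial.aeval y g) := by
  rw [MvPolynomial.aeval_map_algebraMap]
  exact MvPolynomial.aeval_algebraMap_apply ..

variable {D} {σ : Equiv.Perm (Fin (r + 1))} {g : MvPolynomial (Fin (r + 1)) K}

theorem aeval_x_comp_eq_coe_iff (hσ : σ ∈ D.galoisGroup) (p : K[X]) :
    MvPolynomial.aeval (D.x ∘ σ) g = (p : K⟦X⟧) ↔ MvPolynomial.aeval D.x g = (p : K⟦X⟧) := by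
  have key (y : Fin (r + 1) → K⟦X⟧) : MvPolynomial.aeval y g = (p : K⟦X⟧) ↔
      MvPolynomial.aeval (algebraMap K⟦X⟧ (FractionRing K⟦X⟧) ∘ y)
        (MvPolynomial.map (algebraMap K (FractionRing K[X])) g -
          .C (algebraMap K[X] (FractionRing K[X]) p)) = 0 := by
    rw [map_sub, aeval_algebraMap_comp, MvPolynomial.aeval_C, ← IsScalarTower.algebraMap_apply,
      IsScalarTower.algebraMap_apply K[X] K⟦X⟧, sub_eq_zero]
    exact (FaithfulSMul.algebraMap_injective K⟦X⟧ (FractionRing K⟦X⟧)).eq_iff.symm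
  rw [key, key, ← Function.comp_assoc, mem_relationGroup.mp hσ]

theorem aeval_x_comp_eq_zero_iff (hσ : σ ∈ D.galoisGroup) :
    MvPolynomial.aeval (D.x ∘ σ) g = 0 ↔ MvPolynomial.aeval D.x g = 0 := by
  simpa using aeval_x_comp_eq_coe_iff hσ 0

theorem isUnit_coe_of_eval_zero_ne_zero {e : K[X]} (he : e.eval 0 ≠ 0) :
    IsUnit (e : K⟦X⟧) := by
  rw [PowerSeries.isUnit_iff_constantCoeff, ← PowerSeries.coeff_zero_eq_constantCoeff_apply,
    Polynomial.coeff_coe, coeff_zero_eq_eval_zero]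
  exact he.isUnit

theorem exists_isIntegral_mul_eq_aeval_comp (hσ : σ ∈ D.galoisGroup) {e : K[X]}
    (he : e.eval 0 ≠ 0) {w : K⟦X⟧} (hw : IsIntegral K[X] w)
    (hg : e * w = MvPolynomial.aeval D.x g) :
    ∃ w' : K⟦X⟧, IsIntegral K[X] w' ∧ e * w' = MvPolynomial.aeval (D.x ∘ σ) g := by
  have he0 : algebraMap K[X] (FractionRing K⟦X⟧) e ≠ 0 := by
    rw [IsScalarTower.algebraMap_apply K[X] K⟦X⟧]
    exact ((isUnit_coe_of_eval_zero_ne_zero he).map _).ne_zero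
  have hinj := FaithfulSMul.algebraMap_injective K⟦X⟧ (FractionRing K⟦X⟧)
  obtain ⟨w', hw'⟩ : ∃ w' : K⟦X⟧, e * w' = MvPolynomial.aeval (D.x ∘ σ) g :=
    (isUnit_coe_of_eval_zero_ne_zero he).dvd.imp fun _ h => h.symm
  have hdiv {y : Fin (r + 1) → K⟦X⟧} {z : K⟦X⟧} (hz : e * z = MvPolynomial.aeval y g) :
      MvPolynomial.aeval (algebraMap K⟦X⟧ (FractionRing K⟦X⟧) ∘ y)
        (.C (algebraMap K[X] (FractionRing K[X]) e)⁻¹ *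
          MvPolynomial.map (algebraMap K (FractionRing K[X])) g) = algebraMap _ _ z := by
    rw [map_mul, aeval_algebraMap_comp, ← hz, map_mul, MvPolynomial.aeval_C, map_inv₀,
      ← IsScalarTower.algebraMap_apply, ← mul_assoc]
    exact (congrArg (· * _) (inv_mul_cancel₀ he0)).trans (one_mul _)
  refine ⟨w', (isIntegral_algebraMap_iff hinj).mp ?_, hw'⟩
  rw [← hdiv hw', ← Function.comp_assoc]
  refine isIntegral_aeval_comp hσ ?_
  rw [hdiv hg]
  exact hw.algebraMap

theorem dvd_of_isIntegral {p e : K[X]} (he : e ≠ 0) {w : K⟦X⟧} (hw : IsIntegral K[X] w)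
    (h : e * w = (p : K⟦X⟧)) : e ∣ p := by
  have hk : algebraMap (FractionRing K[X]) (FractionRing K⟦X⟧)
      (algebraMap K[X] _ p / algebraMap K[X] _ e) = algebraMap _ _ w := by
    have he0 : algebraMap K[X] (FractionRing K⟦X⟧) e ≠ 0 := by simpa
    rw [map_div₀, ← IsScalarTower.algebraMap_apply, ← IsScalarTower.algebraMap_apply,
      div_eq_iff he0, mul_comm, IsScalarTower.algebraMap_apply K[X] K⟦X⟧ _ p,
      IsScalarTower.algebraMap_apply K[X] K⟦X⟧ _ e, ← map_mul]
    exact congrArg _ h.symm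
  have hint := hk ▸ hw.algebraMap (B := FractionRing K⟦X⟧)
  rw [isIntegral_algebraMap_iff (algebraMap (FractionRing K[X]) _).injective] at hint
  obtain ⟨c, hc⟩ := IsIntegrallyClosed.isIntegral_iff.mp hint
  refine ⟨c, IsFractionRing.injective K[X] (FractionRing K[X]) ?_⟩
  rw [map_mul, hc, mul_div_cancel₀]
  simpa

theorem isIntegral_x (D : SplitFiber K r) (i : Fin (r + 1)) : IsIntegral K[X] (D.x i) := by
  refine ⟨fiberPoly (C ∘ D.s) (C D.a) X,
    fiberPoly_monic (by simp [one_le_two.trans D.two_le]) _ _ _, ?_⟩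
  rw [← eval_map, D.map_coe_fiberPoly, Lagrange.eval_nodal]
  exact prod_eq_zero (mem_univ i) (sub_self _)

theorem isIntegral_aeval_x (D : SplitFiber K r) (g : MvPolynomial (Fin (r + 1)) K) :
    IsIntegral K[X] (MvPolynomial.aeval D.x g) := by
  induction g using MvPolynomial.induction_on with
  | C c =>
    rw [MvPolynomial.aeval_C]
    exact (isIntegral_algebraMap (R := K)).tower_top
  | add p q hp hq => rw [map_add]; exact hp.add hq
  | mul_X p i hp => rw [map_mul, MvPolynomial.aeval_X]; exact hp.mul (D.isIntegral_x i)

theorem exists_polynomial_eq_aeval (hg : ∀ σ ∈ D.galoisGroup,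
    MvPolynomial.aeval (D.x ∘ σ) g = MvPolynomial.aeval D.x g) :
    ∃ p : K[X], (p : K⟦X⟧) = MvPolynomial.aeval D.x g := by
  obtain ⟨c, hc⟩ := aeval_mem_range_of_fixed
    (g := MvPolynomial.map (algebraMap K (FractionRing K[X])) g)
    D.map_fiberPoly_eq_nodal D.algebraMap_x_injective fun σ hσ => by
      rw [Function.comp_assoc, aeval_algebraMap_comp, aeval_algebraMap_comp, hg σ hσ]
  rw [aeval_algebraMap_comp] at hc
  have hint := (D.isIntegral_aeval_x g).algebraMap (B := FractionRing K⟦X⟧)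
  rw [← hc, isIntegral_algebraMap_iff (algebraMap (FractionRing K[X]) _).injective] at hint
  obtain ⟨p, rfl⟩ := IsIntegrallyClosed.isIntegral_iff.mp hint
  refine ⟨p, FaithfulSMul.algebraMap_injective K⟦X⟧ (FractionRing K⟦X⟧) ?_⟩
  rw [← hc, ← IsScalarTower.algebraMap_apply, IsScalarTower.algebraMap_apply K[X] K⟦X⟧]
  rfl

theorem exists_linearIndependent_aeval_mul_X_pow (D : SplitFiber K r) :
    ∃ β : Fin (Nat.card D.galoisGroup) → MvPolynomial (Fin (r + 1)) K,
      LinearIndependent K fun p : ℕ × Fin (Nat.card D.galoisGroup) =>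
        (PowerSeries.X : K⟦X⟧) ^ p.1 * MvPolynomial.aeval D.x (β p.2) := by
  obtain ⟨β, hβ⟩ : ∃ β : Fin (Nat.card D.galoisGroup) → MvPolynomial (Fin (r + 1)) K,
      LinearIndependent (FractionRing K[X]) fun p =>
        MvPolynomial.aeval (algebraMap K⟦X⟧ (FractionRing K⟦X⟧) ∘ D.x) (β p) :=
    exists_linearIndependent_aeval _ D.algebraMap_x_injective
  refine ⟨β, ?_⟩
  have hβ' : LinearIndependent K[X] fun p => MvPolynomial.aeval D.x (β p) := by
    have hcomp : (fun p => MvPolynomial.aeval (algebraMap K⟦X⟧ (FractionRing K⟦X⟧) ∘ D.x) (β p)) =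
        (IsScalarTower.toAlgHom K[X] K⟦X⟧ (FractionRing K⟦X⟧)).toLinearMap ∘
          fun p => MvPolynomial.aeval D.x (β p) :=
      funext fun p => MvPolynomial.aeval_algebraMap_apply (FractionRing K⟦X⟧) D.x (β p)
    rw [hcomp, ← LinearIndependent.iff_fractionRing K[X]] at hβ
    exact hβ.of_comp _
  convert linearIndependent_smul (Polynomial.basisMonomials K).linearIndependent hβ' using 2 with p
  simp only [Algebra.smul_def, coe_basisMonomials, monomial_one_right_eq_X_pow, map_pow]
  exact congrArg (· ^ p.1 * _) coe_X.symm

end GaloisGroup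

section Norm

noncomputable instance : Fintype D.galoisGroup := .ofFinite _

variable (g : MvPolynomial (Fin (r + 1)) K) {D} {e : K[X]} {w : K⟦X⟧} {m m' N : ℕ}

/-- The product of the conjugates of `g` under the Galois group, which plays the role of the norm
from the function field of the Galois closure down to `K(t)`. -/
noncomputable def norm (D : SplitFiber K r) (g : MvPolynomial (Fin (r + 1)) K) :
    MvPolynomial (Fin (r + 1)) K :=
  ∏ σ : D.galoisGroup, MvPolynomial.rename σ g

theorem totalDegree_norm_le {g : MvPolynomial (Fin (r + 1)) K} (hN : g.totalDegree ≤ N) :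
    (norm D g).totalDegree ≤ Nat.card D.galoisGroup * N := by
  refine (MvPolynomial.totalDegree_finsetProd _ _).trans ((sum_le_card_nsmul _ _ N fun σ _ =>
    (MvPolynomial.totalDegree_rename_le _ _).trans hN).trans ?_)
  rw [card_univ, Nat.card_eq_fintype_card, smul_eq_mul]

theorem aeval_x_comp_norm {τ : Equiv.Perm (Fin (r + 1))} (hτ : τ ∈ D.galoisGroup) :
    MvPolynomial.aeval (D.x ∘ τ) (norm D g) = MvPolynomial.aeval D.x (norm D g) := by
  simp only [norm, map_prod, MvPolynomial.aeval_rename]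
  refine Fintype.prod_equiv (Equiv.mulLeft (⟨τ, hτ⟩ : D.galoisGroup)) _ _ fun σ => ?_
  rw [Function.comp_assoc, ← Equiv.Perm.coe_mul, Equiv.coe_mulLeft, Subgroup.coe_mul]

theorem exists_polynomial_eq_aeval_norm (D : SplitFiber K r) :
    ∃ p : K[X], (p : K⟦X⟧) = MvPolynomial.aeval D.x (norm D g) :=
  exists_polynomial_eq_aeval fun _ hσ => aeval_x_comp_norm g hσ

theorem aeval_x_norm (D : SplitFiber K r) : MvPolynomial.aeval D.x (norm D g) =
    ∏ σ : D.galoisGroup, MvPolynomial.aeval (D.x ∘ σ) g := by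
  simp only [norm, map_prod, MvPolynomial.aeval_rename]

variable {g}

theorem aeval_x_norm_ne_zero (hg : MvPolynomial.aeval D.x g ≠ 0) :
    MvPolynomial.aeval D.x (norm D g) ≠ 0 := by
  rw [aeval_x_norm]
  exact prod_ne_zero_iff.mpr fun σ _ => (aeval_x_comp_eq_zero_iff σ.2).not.mpr hg

theorem X_pow_dvd_aeval_x_norm (hm : PowerSeries.X ^ m ∣ MvPolynomial.aeval D.x g)
    (hm' : ∀ σ ∈ D.galoisGroup, σ ≠ 1 → PowerSeries.X ^ m' ∣ MvPolynomial.aeval (D.x ∘ σ) g) :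
    PowerSeries.X ^ (m + (Nat.card D.galoisGroup - 1) * m') ∣
      MvPolynomial.aeval D.x (norm D g) := by
  classical
  rw [aeval_x_norm, ← mul_prod_erase _ _ (mem_univ (1 : D.galoisGroup)), pow_add]
  refine mul_dvd_mul (by simpa using hm) ?_
  rw [mul_comm, pow_mul, Nat.card_eq_fintype_card, ← card_univ,
    ← card_erase_of_mem (mem_univ (1 : D.galoisGroup)), ← prod_const]
  exact prod_dvd_prod_of_dvd _ _ fun σ hσ => hm' σ σ.2 fun h => (mem_erase.mp hσ).1 (Subtype.ext h)

theorem exists_isIntegral_pow_mul_eq_aeval_x_norm (he : e.eval 0 ≠ 0) (hw : IsIntegral K[X] w)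
    (hg : e * w = MvPolynomial.aeval D.x g) : ∃ w' : K⟦X⟧, IsIntegral K[X] w' ∧
      ((e ^ Nat.card D.galoisGroup : K[X]) : K⟦X⟧) * w' = MvPolynomial.aeval D.x (norm D g) := by
  choose w' hint hw' using fun σ : D.galoisGroup =>
    exists_isIntegral_mul_eq_aeval_comp σ.2 he hw hg
  refine ⟨∏ σ, w' σ, .prod _ fun σ _ => hint σ, ?_⟩
  simp only [aeval_x_norm, ← hw', prod_mul_distrib, prod_const, card_univ, Polynomial.coe_pow,
    Nat.card_eq_fintype_card]

/-- Counting the zeros and poles of the norm: zeros over `t = 0` and along `e`, poles over `∞`. -/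
theorem card_mul_le_of_dvd_of_isIntegral (hg0 : MvPolynomial.aeval D.x g ≠ 0)
    (he : e.eval 0 ≠ 0) (hw : IsIntegral K[X] w) (hg : e * w = MvPolynomial.aeval D.x g)
    (hN : g.totalDegree ≤ N) (hm : PowerSeries.X ^ m ∣ MvPolynomial.aeval D.x g)
    (hm' : ∀ σ ∈ D.galoisGroup, σ ≠ 1 → PowerSeries.X ^ m' ∣ MvPolynomial.aeval (D.x ∘ σ) g) :
    r * (m + (Nat.card D.galoisGroup - 1) * m' + Nat.card D.galoisGroup * e.natDegree) ≤
      Nat.card D.galoisGroup * N := by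
  obtain ⟨p, hp⟩ := exists_polynomial_eq_aeval_norm g D
  have hp0 : p ≠ 0 := by
    rintro rfl
    exact aeval_x_norm_ne_zero hg0 (by rw [← hp, Polynomial.coe_zero])
  have he0 : e ≠ 0 := fun h => he (by rw [h, eval_zero])
  have hX : X ^ (m + (Nat.card D.galoisGroup - 1) * m') ∣ p := by
    have h := X_pow_dvd_aeval_x_norm hm hm'
    rw [← hp, PowerSeries.X_pow_dvd_iff] at h
    exact Polynomial.X_pow_dvd_iff.mpr fun i hi => by rw [← Polynomial.coeff_coe, h i hi]
  have hedvd : e ^ Nat.card D.galoisGroup ∣ p := by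
    obtain ⟨w', hw', h⟩ := exists_isIntegral_pow_mul_eq_aeval_x_norm he hw hg
    exact dvd_of_isIntegral (pow_ne_zero _ he0) hw' (h.trans hp.symm)
  have hcop : IsCoprime (X ^ (m + (Nat.card D.galoisGroup - 1) * m'))
      (e ^ Nat.card D.galoisGroup) := by
    refine .pow ((irreducible_X.coprime_iff_not_dvd).mpr ?_)
    rwa [X_dvd_iff, coeff_zero_eq_eval_zero]
  have hdeg := natDegree_le_of_dvd (hcop.mul_dvd hX hedvd) hp0
  rw [natDegree_mul (pow_ne_zero _ X_ne_zero) (pow_ne_zero _ he0), natDegree_X_pow,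
    natDegree_pow] at hdeg
  exact (Nat.mul_le_mul_left r hdeg).trans
    (D.mul_natDegree_le_of_mem_valuesLE
      (mem_valuesLE.mpr ⟨_, totalDegree_norm_le hN, hp.symm⟩))

end Norm

end SplitFiber

theorem pow_dvd_coeff_of_C_add_X_pow_dvd {R : Type*} [CommRing R] [IsDomain R] {c : R} (hc : c ≠ 0)
    {M k : ℕ} {F : R⟦X⟧} (hF : (PowerSeries.C c + PowerSeries.X) ^ M ∣ F)
    (h0 : ∀ i < k, F.coeff i = 0) : c ^ M ∣ F.coeff k := by
  obtain ⟨w, rfl⟩ := hF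
  have hX : ¬ (PowerSeries.X : R⟦X⟧) ∣ (PowerSeries.C c + PowerSeries.X) ^ M := by
    simpa [PowerSeries.X_dvd_iff] using fun h => absurd h hc
  obtain ⟨w', rfl⟩ :=
    PowerSeries.X_prime.pow_dvd_of_dvd_mul_left k hX (PowerSeries.X_pow_dvd_iff.mpr h0)
  rw [mul_left_comm, PowerSeries.coeff_X_pow_mul', if_pos le_rfl, Nat.sub_self]
  simp

/-- The exchange of the two variables of a power series in two variables. -/
noncomputable def swapVars (R : Type*) [CommRing R] : R⟦X⟧⟦X⟧ →+* R⟦X⟧⟦X⟧ where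
  toFun F := PowerSeries.mk fun m => PowerSeries.mk fun k => (F.coeff k).coeff m
  map_one' := by
    ext m k
    simp only [PowerSeries.coeff_mk, PowerSeries.coeff_one]
    split_ifs <;> simp_all [PowerSeries.coeff_one]
  map_zero' := by ext m k; simp
  map_add' F G := by ext m k; simp
  map_mul' F G := by
    ext m k
    simp only [PowerSeries.coeff_mk, PowerSeries.coeff_mul, map_sum]
    rw [Finset.sum_comm]

section SwapVars

variable {R : Type*} [CommRing R]

theorem coeff_coeff_swapVars (F : R⟦X⟧⟦X⟧) (m k : ℕ) :
    ((swapVars R F).coeff m).coeff k = (F.coeff k).coeff m := by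
  simp [swapVars]

theorem swapVars_injective : Function.Injective (swapVars R) := by
  refine (injective_iff_map_eq_zero _).mpr fun F h => ?_
  ext k m
  rw [← coeff_coeff_swapVars, h]
  simp

theorem swapVars_C (b : R⟦X⟧) : swapVars R (.C b) = b.map PowerSeries.C := by
  ext m k
  rw [coeff_coeff_swapVars, PowerSeries.coeff_map, PowerSeries.coeff_C, PowerSeries.coeff_C]
  split_ifs <;> simp

theorem swapVars_map_C (b : R⟦X⟧) : swapVars R (b.map PowerSeries.C) = .C b := by
  ext m k
  rw [coeff_coeff_swapVars, PowerSeries.coeff_map, PowerSeries.coeff_C, PowerSeries.coeff_C]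
  split_ifs <;> simp

end SwapVars

section Bidegree

variable (ι K : Type*) [Field K]

/-- The polynomials in two families of variables whose degrees in the first and in the second
family are at most `A` and `B`. -/
noncomputable def bidegreeLE (A B : ℕ) : Submodule K (MvPolynomial (ι ⊕ ι) K) :=
  (MvPolynomial.restrictTotalDegree ι K A).map (MvPolynomial.rename Sum.inl).toLinearMap *
    (MvPolynomial.restrictTotalDegree ι K B).map (MvPolynomial.rename Sum.inr).toLinearMap

variable {ι K} {A A' B B' : ℕ} {h h' : MvPolynomial (ι ⊕ ι) K}

theorem rename_inl_mul_rename_inr_mem_bidegreeLE {f g : MvPolynomial ι K} (hf : f.totalDegree ≤ A)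
    (hg : g.totalDegree ≤ B) :
    MvPolynomial.rename .inl f * MvPolynomial.rename .inr g ∈ bidegreeLE ι K A B :=
  Submodule.mul_mem_mul
    (Submodule.mem_map_of_mem ((MvPolynomial.mem_restrictTotalDegree _ _ _).mpr hf))
    (Submodule.mem_map_of_mem ((MvPolynomial.mem_restrictTotalDegree _ _ _).mpr hg))

theorem bidegreeLE_induction {motive : MvPolynomial (ι ⊕ ι) K → Prop}
    (mul : ∀ f g : MvPolynomial ι K, f.totalDegree ≤ A → g.totalDegree ≤ B →
      motive (MvPolynomial.rename .inl f * MvPolynomial.rename .inr g))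
    (add : ∀ h h', motive h → motive h' → motive (h + h')) (hh : h ∈ bidegreeLE ι K A B) :
    motive h := by
  refine Submodule.mul_induction_on hh ?_ add
  rintro _ ⟨f, hf, rfl⟩ _ ⟨g, hg, rfl⟩
  exact mul f g ((MvPolynomial.mem_restrictTotalDegree _ _ _).mp hf)
    ((MvPolynomial.mem_restrictTotalDegree _ _ _).mp hg)

theorem rename_inl_mem_bidegreeLE {f : MvPolynomial ι K} (hf : f.totalDegree ≤ A) :
    MvPolynomial.rename .inl f ∈ bidegreeLE ι K A B := by
  simpa using rename_inl_mul_rename_inr_mem_bidegreeLE hf (g := 1) (by simp)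

theorem rename_inr_mem_bidegreeLE {g : MvPolynomial ι K} (hg : g.totalDegree ≤ B) :
    MvPolynomial.rename .inr g ∈ bidegreeLE ι K A B := by
  simpa using rename_inl_mul_rename_inr_mem_bidegreeLE (f := 1) (by simp) hg

theorem bidegreeLE_mono (hA : A ≤ A') (hB : B ≤ B') (hh : h ∈ bidegreeLE ι K A B) :
    h ∈ bidegreeLE ι K A' B' :=
  bidegreeLE_induction (fun _ _ hf hg =>
    rename_inl_mul_rename_inr_mem_bidegreeLE (hf.trans hA) (hg.trans hB))
    (fun _ _ => add_mem) hh

theorem mul_mem_bidegreeLE (hh : h ∈ bidegreeLE ι K A B) (hh' : h' ∈ bidegreeLE ι K A' B') :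
    h * h' ∈ bidegreeLE ι K (A + A') (B + B') := by
  refine bidegreeLE_induction (motive := fun h => h * h' ∈ _) (fun f g hf hg => ?_)
    (fun _ _ h₁ h₂ => by rw [add_mul]; exact add_mem h₁ h₂) hh
  refine bidegreeLE_induction (motive := fun h' => _ * h' ∈ _) (fun f' g' hf' hg' => ?_)
    (fun _ _ h₁ h₂ => by rw [mul_add]; exact add_mem h₁ h₂) hh'
  rw [mul_mul_mul_comm, ← map_mul, ← map_mul]
  exact rename_inl_mul_rename_inr_mem_bidegreeLE
    ((MvPolynomial.totalDegree_mul _ _).trans (add_le_add hf hf'))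
    ((MvPolynomial.totalDegree_mul _ _).trans (add_le_add hg hg'))

theorem prod_mem_bidegreeLE {κ : Type*} (s : Finset κ) {h : κ → MvPolynomial (ι ⊕ ι) K}
    (hh : ∀ i ∈ s, h i ∈ bidegreeLE ι K A B) :
    ∏ i ∈ s, h i ∈ bidegreeLE ι K (#s * A) (#s * B) := by
  classical
  induction s using Finset.induction_on with
  | empty =>
    simpa using rename_inl_mul_rename_inr_mem_bidegreeLE (ι := ι) (K := K) (f := 1) (g := 1)
      (by simp) (by simp)
  | insert i s hi ih =>
    rw [prod_insert hi, card_insert_of_notMem hi, add_one_mul, add_one_mul, add_comm,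
      add_comm (_ * B)]
    exact mul_mem_bidegreeLE (hh i (mem_insert_self _ _))
      (ih fun j hj => hh j (mem_insert_of_mem hj))

theorem pow_mem_bidegreeLE (hh : h ∈ bidegreeLE ι K A B) (k : ℕ) :
    h ^ k ∈ bidegreeLE ι K (k * A) (k * B) := by
  simpa using prod_mem_bidegreeLE (range k) fun _ _ => hh

theorem rename_swap_mem_bidegreeLE (hh : h ∈ bidegreeLE ι K A B) :
    MvPolynomial.rename Sum.swap h ∈ bidegreeLE ι K B A := by
  refine bidegreeLE_induction (motive := fun h => MvPolynomial.rename Sum.swap h ∈ _)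
    (fun f g hf hg => ?_) (fun _ _ h₁ h₂ => by rw [map_add]; exact add_mem h₁ h₂) hh
  rw [map_mul, MvPolynomial.rename_rename, MvPolynomial.rename_rename, mul_comm]
  exact rename_inl_mul_rename_inr_mem_bidegreeLE hg hf

end Bidegree

theorem aeval_mem_growthLE {ι κ K A : Type*} [Field K] [CommRing A] [Algebra K A] {x : ι → A}
    {ρ N B : ℕ} {w : κ → A⟦X⟧} (hw : ∀ i, w i ∈ growthLE K x ρ N 1) {g : MvPolynomial κ K}
    (hg : g.totalDegree ≤ B) : MvPolynomial.aeval w g ∈ growthLE K x ρ N B := by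
  classical
  have hprod (m : κ →₀ ℕ) (s : Finset κ) :
      ∏ i ∈ s, w i ^ m i ∈ growthLE K x ρ N (∑ i ∈ s, m i) := by
    induction s using Finset.induction_on with
    | empty => simpa using C_mem_growthLE (one_mem_valuesLE (K := K) (x := x) (N := 0))
    | insert i s hi ih =>
      rw [prod_insert hi, sum_insert hi]
      exact mul_mem_growthLE (by simpa using pow_mem_growthLE (hw i) (m i)) ih
  rw [MvPolynomial.aeval_def, MvPolynomial.eval₂_eq]
  refine sum_mem fun m hm => ?_
  rw [PowerSeries.algebraMap_apply]
  refine growthLE_mono le_rfl ?_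
    (mul_mem_growthLE (C_mem_growthLE (m := 0) (algebraMap_mem_valuesLE _)) (hprod m m.support))
  rw [zero_add]
  exact (MvPolynomial.le_totalDegree hm).trans hg

/-- The polynomials on pairs of points of the Galois closure of `h : P¹ → P¹`, each of the two
points being described by an enumeration of the fibre containing its image under `h`. -/
abbrev PairPolynomial (K : Type*) [Field K] (r : ℕ) :=
  MvPolynomial (Fin (r + 1) ⊕ Fin (r + 1)) K

namespace SplitFiber

section EvalPair

variable {K : Type*} [Field K] {r : ℕ} (D : SplitFiber K r)

/-- The value of a polynomial in two families of variables at the branches `xᵢ(t)` and `xᵢ(u)`. -/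
noncomputable def evalPair :
    PairPolynomial K r →ₐ[K] K⟦X⟧⟦X⟧ :=
  MvPolynomial.aeval (Sum.elim (fun i => PowerSeries.C (D.x i)) D.y)

/-- The expansion along the branches `xᵢ(u)` of the second family of variables only. -/
noncomputable def expandRight :
    PairPolynomial K r →ₐ[K] (MvPolynomial (Fin (r + 1)) K)⟦X⟧ :=
  MvPolynomial.aeval
    (Sum.elim (fun i => PowerSeries.C (.X i)) (fun i => (D.x i).map MvPolynomial.C))

variable {D} {A B : ℕ} {h : PairPolynomial K r}

theorem evalPair_X_inl (i : Fin (r + 1)) : D.evalPair (.X (.inl i)) = PowerSeries.C (D.x i) := by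
  simp [evalPair]

theorem evalPair_X_inr (i : Fin (r + 1)) : D.evalPair (.X (.inr i)) = D.y i := by
  simp [evalPair]

theorem algebraMap_eq_C_C (c : K) : algebraMap K K⟦X⟧⟦X⟧ c = .C (.C c) := by
  rw [PowerSeries.algebraMap_apply, PowerSeries.algebraMap_apply]; rfl

theorem map_aeval_map_C (x : Fin (r + 1) → K⟦X⟧) (w : K⟦X⟧) :
    (w.map MvPolynomial.C).map (MvPolynomial.aeval (R := K) x).toRingHom =
      w.map PowerSeries.C := by
  ext1 k
  simp

theorem evalPair_rename_map_id (σ : Fin (r + 1) → Fin (r + 1))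
    (h : PairPolynomial K r) :
    D.evalPair (MvPolynomial.rename (Sum.map σ id) h) =
      (D.expandRight h).map (MvPolynomial.aeval (R := K) (D.x ∘ σ)).toRingHom := by
  have hhom : D.evalPair.comp (MvPolynomial.rename (Sum.map σ id)) =
      (PowerSeries.mapAlgHom (MvPolynomial.aeval (D.x ∘ σ))).comp D.expandRight := by
    refine MvPolynomial.algHom_ext fun i => ?_
    rcases i with i | i
    · simp [evalPair, expandRight, PowerSeries.mapAlgHom_apply]
    · simpa [evalPair, expandRight, y, PowerSeries.mapAlgHom_apply] using
        (map_aeval_map_C (D.x ∘ σ) (D.x i)).symm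
  simpa [PowerSeries.mapAlgHom_apply] using DFunLike.congr_fun hhom h

theorem coeff_evalPair_rename_map_id (σ : Fin (r + 1) → Fin (r + 1))
    (h : PairPolynomial K r) (k : ℕ) :
    (D.evalPair (MvPolynomial.rename (Sum.map σ id) h)).coeff k =
      MvPolynomial.aeval (D.x ∘ σ) ((D.expandRight h).coeff k) := by
  rw [evalPair_rename_map_id, PowerSeries.coeff_map]; rfl

theorem coeff_evalPair (h : PairPolynomial K r) (k : ℕ) :
    (D.evalPair h).coeff k = MvPolynomial.aeval D.x ((D.expandRight h).coeff k) := by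
  simpa using D.coeff_evalPair_rename_map_id id h k

theorem evalPair_rename_swap (h : PairPolynomial K r) :
    D.evalPair (MvPolynomial.rename Sum.swap h) = swapVars K (D.evalPair h) := by
  have hhom : (D.evalPair.comp (MvPolynomial.rename Sum.swap)).toRingHom =
      (swapVars K).comp D.evalPair.toRingHom := by
    refine MvPolynomial.ringHom_ext (fun c => ?_) fun i => ?_
    · simp [evalPair, algebraMap_eq_C_C, swapVars_C]
    · rcases i with i | i <;> simp [evalPair, swapVars_C, swapVars_map_C, y]
  exact DFunLike.congr_fun hhom h

theorem evalPair_rename_inl (g : MvPolynomial (Fin (r + 1)) K) :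
    D.evalPair (MvPolynomial.rename .inl g) = .C (MvPolynomial.aeval D.x g) := by
  have hhom : D.evalPair.toRingHom.comp (MvPolynomial.rename Sum.inl).toRingHom =
      PowerSeries.C.comp (MvPolynomial.aeval (R := K) D.x).toRingHom := by
    refine MvPolynomial.ringHom_ext (fun c => ?_) fun i => ?_
    · simp [evalPair, PowerSeries.algebraMap_apply]
    · simp [evalPair]
  exact DFunLike.congr_fun hhom g

theorem evalPair_rename_inr (g : MvPolynomial (Fin (r + 1)) K) :
    D.evalPair (MvPolynomial.rename .inr g) = (MvPolynomial.aeval D.x g).map PowerSeries.C := by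
  rw [← swapVars_C, ← evalPair_rename_inl, ← evalPair_rename_swap, MvPolynomial.rename_rename]
  rfl

theorem totalDegree_coeff_expandRight_le (hh : h ∈ bidegreeLE (Fin (r + 1)) K A B) (k : ℕ) :
    ((D.expandRight h).coeff k).totalDegree ≤ A := by
  rw [← MvPolynomial.mem_restrictTotalDegree]
  refine bidegreeLE_induction (motive := fun h => (D.expandRight h).coeff k ∈ _)
    (fun f g hf _ => ?_) (fun _ _ h₁ h₂ => by rw [map_add, map_add]; exact add_mem h₁ h₂) hh
  have hinl : D.expandRight (MvPolynomial.rename .inl f) = .C f := by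
    have hhom : D.expandRight.toRingHom.comp (MvPolynomial.rename Sum.inl).toRingHom =
        PowerSeries.C := by
      refine MvPolynomial.ringHom_ext (fun c => ?_) fun i => ?_ <;>
        simp [expandRight, PowerSeries.algebraMap_apply, MvPolynomial.algebraMap_eq]
    exact DFunLike.congr_fun hhom f
  have hinr : D.expandRight (MvPolynomial.rename .inr g) =
      (MvPolynomial.aeval D.x g).map MvPolynomial.C := by
    have hhom : D.expandRight.toRingHom.comp (MvPolynomial.rename Sum.inr).toRingHom =
        (PowerSeries.map MvPolynomial.C).comp (MvPolynomial.aeval (R := K) D.x).toRingHom := by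
      refine MvPolynomial.ringHom_ext (fun c => ?_) fun i => ?_ <;>
        simp [expandRight, PowerSeries.algebraMap_apply, MvPolynomial.algebraMap_eq]
    exact DFunLike.congr_fun hhom g
  rw [map_mul, hinl, hinr, PowerSeries.coeff_C_mul, PowerSeries.coeff_map,
    MvPolynomial.mem_restrictTotalDegree]
  exact (MvPolynomial.totalDegree_mul _ _).trans (by simpa using hf)

theorem coeff_evalPair_rename_map_id_eq_zero_iff {σ : Equiv.Perm (Fin (r + 1))}
    (hσ : σ ∈ D.galoisGroup) (h : PairPolynomial K r) (k : ℕ) :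
    (D.evalPair (MvPolynomial.rename (Sum.map σ id) h)).coeff k = 0 ↔
      (D.evalPair h).coeff k = 0 := by
  rw [coeff_evalPair_rename_map_id, coeff_evalPair, aeval_x_comp_eq_zero_iff hσ]

theorem evalPair_rename_id_map_eq_zero_iff {σ : Equiv.Perm (Fin (r + 1))}
    (hσ : σ ∈ D.galoisGroup) (h : PairPolynomial K r) :
    D.evalPair (MvPolynomial.rename (Sum.map id σ) h) = 0 ↔ D.evalPair h = 0 := by
  have key (h : PairPolynomial K r) :
      D.evalPair h = 0 ↔ ∀ k, (D.evalPair (MvPolynomial.rename Sum.swap h)).coeff k = 0 := by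
    rw [← map_eq_zero_iff _ swapVars_injective, ← evalPair_rename_swap, PowerSeries.ext_iff]
    simp
  have hswap : Sum.swap ∘ Sum.map id σ =
      Sum.map σ id ∘ (Sum.swap : Fin (r + 1) ⊕ Fin (r + 1) → _) := by
    funext i; cases i <;> rfl
  rw [key, key, MvPolynomial.rename_rename, hswap, ← MvPolynomial.rename_rename]
  simp only [coeff_evalPair_rename_map_id_eq_zero_iff hσ]

end EvalPair

section Frobenius

variable {K : Type*} [Field K] {r : ℕ} (D : SplitFiber K r)

theorem rescale_C {R : Type*} [CommSemiring R] (b c : R) :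
    PowerSeries.rescale b (.C c) = .C c := by
  ext n
  simp only [PowerSeries.coeff_rescale, PowerSeries.coeff_C]
  split_ifs with hn
  · rw [hn, pow_zero, one_mul]
  · exact mul_zero _

theorem rescale_aeval {ι : Type*} (b : K⟦X⟧) (w : ι → K⟦X⟧⟦X⟧) (g : MvPolynomial ι K) :
    PowerSeries.rescale b (MvPolynomial.aeval w g) =
      MvPolynomial.aeval (fun i => PowerSeries.rescale b (w i)) g := by
  have hhom : (PowerSeries.rescale b).comp (MvPolynomial.aeval (R := K) w).toRingHom =
      (MvPolynomial.aeval (R := K) fun i => PowerSeries.rescale b (w i)).toRingHom :=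
    MvPolynomial.ringHom_ext (fun c => by simp [algebraMap_eq_C_C, rescale_C]) fun i => by simp
  exact DFunLike.congr_fun hhom g

theorem prod_z_sub_C_s (i : Fin (r + 1)) : ∏ j, (D.z i - .C (.C (D.s j))) =
    (.C .X + .X) * (D.z i - .C (.C D.a)) := by
  have h := congrArg (taylorShift .X PowerSeries.constantCoeff_X) (D.prod_y_sub_C_s i)
  simpa only [map_prod, map_sub, map_mul, taylorShift_X, taylorShift_C, z] using h

variable [Fintype K]

theorem constantCoeff_X_pow_card :
    PowerSeries.constantCoeff ((PowerSeries.X : K⟦X⟧) ^ Fintype.card K) = 0 := by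
  rw [map_pow, PowerSeries.constantCoeff_X, zero_pow Fintype.card_ne_zero]

/-- The Frobenius map of the coefficient ring `K⟦t⟧` of `K⟦t⟧⟦ε⟧`. -/
noncomputable def coeffFrobenius (K : Type*) [Field K] [Fintype K] : K⟦X⟧⟦X⟧ →ₐ[K] K⟦X⟧⟦X⟧ :=
  PowerSeries.mapAlgHom (FiniteField.frobeniusAlgHom K K⟦X⟧)

theorem coeff_coeffFrobenius (F : K⟦X⟧⟦X⟧) (k : ℕ) :
    (coeffFrobenius K F).coeff k = F.coeff k ^ Fintype.card K := by
  rw [coeffFrobenius, PowerSeries.mapAlgHom_apply, PowerSeries.coeff_map]; rfl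

theorem coeffFrobenius_C (b : K⟦X⟧) :
    coeffFrobenius K (.C b) = .C (b ^ Fintype.card K) := by
  rw [coeffFrobenius, PowerSeries.mapAlgHom_apply, PowerSeries.map_C]; rfl

theorem coeffFrobenius_X : coeffFrobenius K .X = .X := by
  rw [coeffFrobenius, PowerSeries.mapAlgHom_apply, PowerSeries.map_X]

theorem rescale_coeffFrobenius (b : K⟦X⟧) (F : K⟦X⟧⟦X⟧) :
    PowerSeries.rescale (b ^ Fintype.card K) (coeffFrobenius K F) =
      coeffFrobenius K (PowerSeries.rescale b F) := by
  ext1 k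
  simp only [PowerSeries.coeff_rescale, coeff_coeffFrobenius, mul_pow, ← pow_mul, mul_comm]

theorem coeffFrobenius_mem_growthLE {ι : Type*} {x : ι → K⟦X⟧} {ρ N m : ℕ} {F : K⟦X⟧⟦X⟧}
    (hF : F ∈ growthLE K x ρ N m) : coeffFrobenius K F ∈
      growthLE K x (Fintype.card K * ρ) N (Fintype.card K * m) := by
  intro j hj
  rw [coeff_coeffFrobenius]
  exact valuesLE_mono (le_of_eq (by ring)) (pow_mem_valuesLE (hF j hj) _)

theorem prod_coeffFrobenius_z_sub_C_s (i : Fin (r + 1)) :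
    ∏ j, (coeffFrobenius K (D.z i) - .C (.C (D.s j))) =
      (.C (.X ^ Fintype.card K) + .X) * (coeffFrobenius K (D.z i) - .C (.C D.a)) := by
  have h := congrArg (coeffFrobenius K) (D.prod_z_sub_C_s i)
  simpa only [map_prod, map_sub, map_mul, map_add, coeffFrobenius_C, coeffFrobenius_X,
    ← map_pow PowerSeries.C, FiniteField.pow_card] using h

/- Both sides are branches at `u = t ^ q + ε`, and they have the same value at `t = ε = 0`. -/
theorem taylorShift_X_pow_card_y (i : Fin (r + 1)) :
    taylorShift (.X ^ Fintype.card K) constantCoeff_X_pow_card (D.y i) =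
      coeffFrobenius K (D.z i) := by
  set τ := taylorShift ((.X : K⟦X⟧) ^ Fintype.card K) constantCoeff_X_pow_card with hτ
  have hprod := D.prod_sub_map_x (τ.comp (PowerSeries.map PowerSeries.C)) (coeffFrobenius K (D.z i))
  simp only [RingHom.comp_apply, PowerSeries.map_C, PowerSeries.map_X, hτ, taylorShift_C,
    taylorShift_X, D.prod_coeffFrobenius_z_sub_C_s i, sub_self] at hprod
  obtain ⟨j, -, hj⟩ := prod_eq_zero_iff.mp hprod
  have hij : coeffFrobenius K (D.z i) = τ (D.y j) := sub_eq_zero.mp hj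
  have hconst := congrArg (PowerSeries.constantCoeff ∘ PowerSeries.constantCoeff) hij
  have hz : PowerSeries.constantCoeff (coeffFrobenius K (D.z i)) = D.x i ^ Fintype.card K := by
    rw [← PowerSeries.coeff_zero_eq_constantCoeff_apply, coeff_coeffFrobenius,
      PowerSeries.coeff_zero_eq_constantCoeff_apply, constantCoeff_z]
  simp only [Function.comp_apply, hz, hτ, constantCoeff_constantCoeff_taylorShift,
    constantCoeff_y, map_pow, constantCoeff_x, FiniteField.pow_card,
    PowerSeries.constantCoeff_C] at hconst
  rw [hij, D.s_injective hconst]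

/-- The value at the branches `xᵢ(t)` and `xᵢ(t ^ q + ε)`: the expansion along the graph of
Frobenius, which is `ε = 0`. -/
noncomputable def evalNearFrobenius : PairPolynomial K r →+* K⟦X⟧⟦X⟧ :=
  (taylorShift (.X ^ Fintype.card K) constantCoeff_X_pow_card).comp D.evalPair.toRingHom

variable {D} {A B : ℕ} {h : PairPolynomial K r}

theorem evalNearFrobenius_rename_inl (f : MvPolynomial (Fin (r + 1)) K) :
    D.evalNearFrobenius (MvPolynomial.rename .inl f) = .C (MvPolynomial.aeval D.x f) := by
  have h := congrArg (taylorShift _ constantCoeff_X_pow_card) (D.evalPair_rename_inl f)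
  rwa [taylorShift_C] at h

theorem evalNearFrobenius_rename_inr (g : MvPolynomial (Fin (r + 1)) K) :
    D.evalNearFrobenius (MvPolynomial.rename .inr g) =
      coeffFrobenius K (MvPolynomial.aeval D.z g) := by
  have hhom : D.evalNearFrobenius.comp (MvPolynomial.rename Sum.inr).toRingHom =
      (coeffFrobenius K).toRingHom.comp (MvPolynomial.aeval (R := K) D.z).toRingHom := by
    refine MvPolynomial.ringHom_ext (fun c => ?_) fun i => ?_
    · simp [evalNearFrobenius, algebraMap_eq_C_C, taylorShift_C, coeffFrobenius_C, ← map_pow,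
        FiniteField.pow_card]
    · simp [evalNearFrobenius, evalPair_X_inr, taylorShift_X_pow_card_y]
  exact DFunLike.congr_fun hhom g

theorem rescale_evalNearFrobenius_mem_growthLE (hh : h ∈ bidegreeLE (Fin (r + 1)) K A B) (N : ℕ) :
    PowerSeries.rescale (D.disc ^ Fintype.card K) (D.evalNearFrobenius h) ∈
      growthLE K D.x (Fintype.card K * r ^ 2) N (A + Fintype.card K * B) := by
  have hz (i : Fin (r + 1)) : PowerSeries.rescale D.disc (D.z i) ∈ growthLE K D.x (r ^ 2) N 1 := by
    intro k _
    rw [PowerSeries.coeff_rescale]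
    exact D.disc_pow_mul_coeff_z_mem_valuesLE i k
  refine bidegreeLE_induction (motive := fun h =>
      PowerSeries.rescale (D.disc ^ Fintype.card K) (D.evalNearFrobenius h) ∈ _)
    (fun f g hf hg => ?_) (fun _ _ h₁ h₂ => by rw [map_add, map_add]; exact add_mem h₁ h₂) hh
  rw [map_mul, map_mul]
  refine mul_mem_growthLE ?_ ?_
  · rw [evalNearFrobenius_rename_inl, rescale_C]
    exact C_mem_growthLE (mem_valuesLE.mpr ⟨f, hf, rfl⟩)
  · rw [evalNearFrobenius_rename_inr, rescale_coeffFrobenius, rescale_aeval]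
    exact coeffFrobenius_mem_growthLE (aeval_mem_growthLE hz hg)

end Frobenius

end SplitFiber

theorem exists_lt_apply_of_ne_one {ι : Type*} [Finite ι] [LinearOrder ι] {π : Equiv.Perm ι}
    (h : π ≠ 1) : ∃ i, i < π i := by
  by_contra! hle
  refine h (Equiv.ext fun i => ?_)
  have : WellFoundedLT ι := Finite.to_wellFoundedLT
  induction i using WellFoundedLT.induction with
  | ind i ih =>
    rcases (hle i).lt_or_eq with hlt | heq
    · exact π.injective (ih _ hlt)
    · exact heq

theorem card_filter_fst_lt_snd (n : ℕ) :
    #{p : Fin (n + 1) × Fin (n + 1) | p.1 < p.2} = n * (n + 1) / 2 := by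
  have hsum : #{p : Fin (n + 1) × Fin (n + 1) | p.1 < p.2} = ∑ j : Fin (n + 1), (j : ℕ) := by
    rw [← univ_product_univ, card_filter, sum_product_right]
    refine sum_congr rfl fun j _ => ?_
    rw [← card_filter, filter_gt_eq_Iio, Fin.card_Iio]
  rw [hsum, Fin.sum_univ_eq_sum_range (fun i => i) (n + 1), sum_range_id, mul_comm]
  rfl

theorem pow_dvd_map_of_mem_span_pow {R S : Type*} [CommRing R] [CommRing S] {s : Set R}
    (φ : R →+* S) {w : S} (hs : ∀ f ∈ s, w ∣ φ f) {M : ℕ} {h : R} (hh : h ∈ Ideal.span s ^ M) :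
    w ^ M ∣ φ h := by
  have hmap : (Ideal.span s).map φ ≤ Ideal.span {w} := by
    rw [Ideal.map_span, Ideal.span_le, Set.image_subset_iff]
    exact fun f hf => Ideal.mem_span_singleton.mpr (hs f hf)
  rw [← Ideal.mem_span_singleton, ← Ideal.span_singleton_pow]
  refine Ideal.pow_right_mono hmap M ?_
  rw [← Ideal.map_pow]
  exact Ideal.mem_map_of_mem φ hh

/-- The product of the `yᵢ - xⱼ` with `i < j`. It vanishes on the graph of each nontrivial
permutation of the fibre, and not on the diagonal. -/
noncomputable def graphProduct (K : Type*) [Field K] (r : ℕ) : PairPolynomial K r :=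
  ∏ p : Fin (r + 1) × Fin (r + 1) with p.1 < p.2,
    (MvPolynomial.X (.inr p.1) - MvPolynomial.X (.inl p.2))

theorem graphProduct_mem_bidegreeLE (K : Type*) [Field K] (r : ℕ) :
    graphProduct K r ∈ bidegreeLE (Fin (r + 1)) K (r * (r + 1) / 2) (r * (r + 1) / 2) := by
  have hX (i j : Fin (r + 1)) :
      (MvPolynomial.X (.inr i) - MvPolynomial.X (.inl j) : PairPolynomial K r) ∈
        bidegreeLE (Fin (r + 1)) K 1 1 := by
    rw [← MvPolynomial.rename_X Sum.inr i, ← MvPolynomial.rename_X Sum.inl j]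
    exact sub_mem (rename_inr_mem_bidegreeLE (MvPolynomial.totalDegree_X _).le)
      (rename_inl_mem_bidegreeLE (MvPolynomial.totalDegree_X _).le)
  rw [graphProduct, ← card_filter_fst_lt_snd, ← mul_one #_]
  exact prod_mem_bidegreeLE _ fun p _ => hX p.1 p.2

theorem map_graphProduct_dvd {K S : Type*} [Field K] {r : ℕ} [CommRing S]
    (φ : PairPolynomial K r →+* S) {i j : Fin (r + 1)} (hij : i < j) :
    φ (MvPolynomial.X (.inr i)) - φ (MvPolynomial.X (.inl j)) ∣ φ (graphProduct K r) := by
  have hmem : (i, j) ∈ ({p | p.1 < p.2} : Finset (Fin (r + 1) × Fin (r + 1))) := by simpa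
  have hdvd := dvd_prod_of_mem (fun p => φ (MvPolynomial.X (.inr p.1) - MvPolynomial.X (.inl p.2)))
    hmem
  rwa [← map_prod, map_sub] at hdvd

namespace SplitFiber

section GraphIdeal

variable {K : Type*} [Field K] {r : ℕ} (D : SplitFiber K r)

/-- A polynomial of degree at most `r` expressing the parameter `t` in terms of the branches. -/
noncomputable def parameter : MvPolynomial (Fin (r + 1)) K :=
  (mem_valuesLE.mp D.X_mem_valuesLE).choose

theorem totalDegree_parameter_le : D.parameter.totalDegree ≤ r :=
  (mem_valuesLE.mp D.X_mem_valuesLE).choose_spec.1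

theorem aeval_x_parameter : MvPolynomial.aeval D.x D.parameter = PowerSeries.X :=
  (mem_valuesLE.mp D.X_mem_valuesLE).choose_spec.2

/-- The difference `t - u` of the parameters of the two points of a pair. -/
noncomputable def parameterDiff : PairPolynomial K r :=
  MvPolynomial.rename .inl D.parameter - MvPolynomial.rename .inr D.parameter

theorem parameterDiff_mem_bidegreeLE : D.parameterDiff ∈ bidegreeLE (Fin (r + 1)) K r r :=
  sub_mem (rename_inl_mem_bidegreeLE D.totalDegree_parameter_le)
    (rename_inr_mem_bidegreeLE D.totalDegree_parameter_le)

/-- An ideal of polynomials vanishing on the graphs of the nontrivial elements of the Galois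
group. -/
noncomputable def graphIdeal : Ideal (PairPolynomial K r) :=
  Ideal.span {graphProduct K r, D.parameterDiff}

theorem pow_dvd_map_of_mem_graphIdeal_pow {S : Type*} [CommRing S] (φ : PairPolynomial K r →+* S)
    {w : S} {i j : Fin (r + 1)} (hij : i < j)
    (hw : w ∣ φ (MvPolynomial.X (.inr i)) - φ (MvPolynomial.X (.inl j)))
    (hw' : w ∣ φ D.parameterDiff) {M : ℕ} {h : PairPolynomial K r} (hh : h ∈ D.graphIdeal ^ M) :
    w ^ M ∣ φ h := by
  refine pow_dvd_map_of_mem_span_pow φ ?_ hh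
  rintro f (rfl | rfl)
  · exact hw.trans (map_graphProduct_dvd φ hij)
  · exact hw'

theorem X_sub_C_X_dvd_y_sub_C_x (i : Fin (r + 1)) :
    (.X - .C .X : K⟦X⟧⟦X⟧) ∣ D.y i - .C (D.x i) := by
  have hprod := D.prod_map_y_sub_x i (RingHom.id _)
  simp only [RingHom.id_apply] at hprod
  rw [← mul_prod_erase _ _ (mem_univ i)] at hprod
  have hunit : IsUnit (∏ j ∈ univ.erase i, (D.y i - .C (D.x j))) := by
    rw [IsUnit.prod_iff]
    intro j hj
    rw [PowerSeries.isUnit_iff_constantCoeff, PowerSeries.isUnit_iff_constantCoeff,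
      isUnit_iff_ne_zero, map_sub, PowerSeries.constantCoeff_C, map_sub, constantCoeff_x,
      constantCoeff_y, PowerSeries.constantCoeff_C, sub_ne_zero]
    exact fun h => ne_of_mem_erase hj (D.s_injective h).symm
  rw [← hunit.dvd_mul_right, hprod]
  exact dvd_mul_right _ _

variable {D} {A B M : ℕ} {h : PairPolynomial K r} {σ : Equiv.Perm (Fin (r + 1))}

theorem aeval_x_rename_parameter (hσ : σ ∈ D.galoisGroup) :
    MvPolynomial.aeval D.x (MvPolynomial.rename σ D.parameter) = PowerSeries.X := by
  rw [MvPolynomial.aeval_rename, ← Polynomial.coe_X, aeval_x_comp_eq_coe_iff hσ, coe_X,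
    aeval_x_parameter]

theorem evalPair_rename_map_parameterDiff {τ : Equiv.Perm (Fin (r + 1))} (hσ : σ ∈ D.galoisGroup)
    (hτ : τ ∈ D.galoisGroup) :
    D.evalPair (MvPolynomial.rename (Sum.map σ τ) D.parameterDiff) = .C .X - .X := by
  have hl : Sum.map σ τ ∘ Sum.inl = Sum.inl ∘ σ := rfl
  have hr : Sum.map σ τ ∘ Sum.inr = Sum.inr ∘ τ := rfl
  rw [parameterDiff, map_sub, map_sub, MvPolynomial.rename_rename, MvPolynomial.rename_rename, hl,
    hr, ← MvPolynomial.rename_rename, ← MvPolynomial.rename_rename, evalPair_rename_inl,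
    evalPair_rename_inr, aeval_x_rename_parameter hσ, aeval_x_rename_parameter hτ,
    PowerSeries.map_X]

theorem X_sub_C_X_pow_dvd_evalPair_rename {τ : Equiv.Perm (Fin (r + 1))} (hσ : σ ∈ D.galoisGroup)
    (hτ : τ ∈ D.galoisGroup) (hστ : σ ≠ τ) (hh : h ∈ D.graphIdeal ^ M) :
    (.X - .C .X : K⟦X⟧⟦X⟧) ^ M ∣ D.evalPair (MvPolynomial.rename (Sum.map σ τ) h) := by
  obtain ⟨i, hi⟩ : ∃ i, i < (σ⁻¹ * τ) i :=
    exists_lt_apply_of_ne_one (by rwa [ne_eq, inv_mul_eq_one])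
  refine D.pow_dvd_map_of_mem_graphIdeal_pow
    (D.evalPair.toRingHom.comp (MvPolynomial.rename (Sum.map σ τ)).toRingHom) hi ?_ ?_ hh
  · simpa [evalPair_X_inl, evalPair_X_inr] using D.X_sub_C_X_dvd_y_sub_C_x (τ i)
  · change _ ∣ D.evalPair (MvPolynomial.rename (Sum.map σ τ) D.parameterDiff)
    rw [evalPair_rename_map_parameterDiff hσ hτ, ← neg_sub, neg_dvd]

theorem coeff_evalPair_eq_zero_of_coeff_coeff_eq_zero {Z n : ℕ} (hh : h ∈ D.graphIdeal ^ M)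
    (hAB : h ∈ bidegreeLE (Fin (r + 1)) K A B)
    (h0 : ∀ j < Z, ∀ i < n, ((D.evalPair h).coeff j).coeff i = 0)
    (hlt : Nat.card D.galoisGroup * A < r * (n + (Nat.card D.galoisGroup - 1) * M)) :
    ∀ j < Z, (D.evalPair h).coeff j = 0 := by
  intro j
  induction j using Nat.strong_induction_on with
  | _ j ih =>
    intro hj
    by_contra hne
    rw [coeff_evalPair] at hne
    have hX : PowerSeries.X ^ n ∣ MvPolynomial.aeval D.x ((D.expandRight h).coeff j) := by
      rw [← coeff_evalPair, PowerSeries.X_pow_dvd_iff]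
      exact h0 j hj
    have hXσ (σ : Equiv.Perm (Fin (r + 1))) (hσ : σ ∈ D.galoisGroup) (hσ1 : σ ≠ 1) :
        PowerSeries.X ^ M ∣ MvPolynomial.aeval (D.x ∘ σ) ((D.expandRight h).coeff j) := by
      have hdvd := X_sub_C_X_pow_dvd_evalPair_rename hσ (one_mem _) hσ1 hh
      rw [sub_eq_neg_add, ← map_neg] at hdvd
      have hpow := pow_dvd_coeff_of_C_add_X_pow_dvd (neg_ne_zero.mpr PowerSeries.X_ne_zero) hdvd
        fun i hi => (coeff_evalPair_rename_map_id_eq_zero_iff hσ h i).mpr (ih i hi (hi.trans hj))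
      rw [neg_pow] at hpow
      rw [← coeff_evalPair_rename_map_id]
      exact (dvd_mul_left _ _).trans hpow
    have hle := card_mul_le_of_dvd_of_isIntegral (e := 1) hne (by simp)
      (D.isIntegral_aeval_x ((D.expandRight h).coeff j)) (by rw [Polynomial.coe_one, one_mul])
      (totalDegree_coeff_expandRight_le hAB j) hX hXσ
    rw [natDegree_one, mul_zero, add_zero] at hle
    exact hlt.not_ge hle

end GraphIdeal

end SplitFiber

section FrobeniusRoots

variable {K κ : Type*} [Field K] [Fintype K] [Field κ] (ψ : K →+* κ)

theorem mem_range_of_pow_card_eq {z : κ} (hz : z ^ Fintype.card K = z) : z ∈ ψ.range := by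
  have hsplits : (X ^ Fintype.card K - X : K[X]).Splits := by
    rw [splits_iff_card_roots, FiniteField.roots_X_pow_card_sub_X,
      FiniteField.X_pow_card_sub_X_natDegree_eq K Fintype.one_lt_card]
    rfl
  exact hsplits.mem_range_of_isRoot
    (FiniteField.X_pow_card_sub_X_ne_zero K Fintype.one_lt_card) (by simp [hz])

theorem exists_perm_pow_card_eq {ι : Type*} [Fintype ι] {f : K[X]} {x : ι → κ}
    (hx : Function.Injective x) (hf : f.map ψ = Lagrange.nodal univ x) :
    ∃ π : Equiv.Perm ι, ∀ i, x i ^ Fintype.card K = x (π i) := by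
  algebraize [ψ]
  have hroot (z : κ) : (f.map ψ).eval z = 0 ↔ ∃ i, z = x i := by
    rw [hf, Lagrange.eval_nodal, prod_eq_zero_iff]
    simp [sub_eq_zero]
  have hpow (i : ι) : ∃ j, x i ^ Fintype.card K = x j := by
    have hi : aeval (x i) f = 0 := by rw [aeval_def, ← eval_map]; exact (hroot (x i)).mpr ⟨i, rfl⟩
    rw [← hroot, eval_map]
    exact (aeval_algHom_apply (FiniteField.frobeniusAlgHom K κ) (x i) f).trans
      (by rw [hi, map_zero])
  choose π hπ using hpow
  have hinj : Function.Injective π := fun i j hij =>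
    hx ((FiniteField.frobeniusAlgHom K κ).injective ((hπ i).trans (hij ▸ (hπ j).symm)))
  exact ⟨Equiv.ofBijective π (Finite.injective_iff_bijective.mp hinj), hπ⟩

theorem exists_perm_ne_one_pow_card_eq {ι : Type*} [Fintype ι] {f : K[X]} {x : ι → κ}
    (hx : Function.Injective x) (hf : f.map ψ = Lagrange.nodal univ x) (hsplits : ¬ f.Splits) :
    ∃ π : Equiv.Perm ι, π ≠ 1 ∧ ∀ i, x i ^ Fintype.card K = x (π i) := by
  obtain ⟨π, hπ⟩ := exists_perm_pow_card_eq ψ hx hf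
  refine ⟨π, ?_, hπ⟩
  rintro rfl
  choose w hw using fun i => mem_range_of_pow_card_eq ψ (hπ i)
  have hfw : f = Lagrange.nodal univ w := by
    refine Polynomial.map_injective ψ ψ.injective ?_
    simp [hf, Lagrange.nodal, Polynomial.map_prod, hw]
  exact hsplits (hfw ▸ .prod fun i _ => .X_sub_C _)

end FrobeniusRoots

theorem exists_powerSeries_lift {R E S : Type*} [CommRing R] [CommRing E] [CommRing S]
    {φ : S →+* E} (hφ : Function.Injective φ) (χ : R →+* E⟦X⟧)
    (hχ : ∀ h k, (χ h).coeff k ∈ φ.range) :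
    ∃ χ' : R →+* S⟦X⟧, ∀ h, (χ' h).map φ = χ h := by
  choose c hc using hχ
  let χr : R →+* (PowerSeries.map φ).range :=
    χ.codRestrict _ fun h => ⟨.mk (c h), by ext k; simp [hc]⟩
  let e : S⟦X⟧ ≃+* (PowerSeries.map φ).range := .ofBijective (PowerSeries.map φ).rangeRestrict
    ⟨fun a b hab => PowerSeries.map_injective φ hφ (congrArg Subtype.val hab),
      RingHom.rangeRestrict_surjective _⟩
  exact ⟨(e.symm : _ →+* S⟦X⟧).comp χr, fun h => congrArg Subtype.val (e.apply_symm_apply (χr h))⟩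

theorem dvd_sub_C_of_prod_eq_mul {R ι : Type*} [CommRing R] [Fintype ι] {y w b : R⟦X⟧}
    {x : ι → R} {j : ι} (hy : ∀ k ≠ j, IsUnit (PowerSeries.constantCoeff y - x k))
    (h : ∏ k, (y - .C (x k)) = w * b) : w ∣ y - .C (x j) := by
  classical
  rw [← mul_prod_erase _ _ (mem_univ j)] at h
  have hunit : IsUnit (∏ k ∈ univ.erase j, (y - .C (x k))) := by
    refine IsUnit.prod_iff.mpr fun k hk => ?_
    rw [PowerSeries.isUnit_iff_constantCoeff, map_sub, PowerSeries.constantCoeff_C]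
    exact hy k (ne_of_mem_erase hk)
  rw [← hunit.dvd_mul_right, h]
  exact dvd_mul_right _ _

theorem exists_mem_bidegreeLE {ι K : Type*} [Field K] (h : MvPolynomial (ι ⊕ ι) K) :
    ∃ A B, h ∈ bidegreeLE ι K A B := by
  induction h using MvPolynomial.induction_on with
  | C c =>
    rw [← MvPolynomial.rename_C Sum.inl]
    exact ⟨0, 0, rename_inl_mem_bidegreeLE (MvPolynomial.totalDegree_C c).le⟩
  | add f g hf hg =>
    obtain ⟨A, B, hf⟩ := hf
    obtain ⟨A', B', hg⟩ := hg
    exact ⟨max A A', max B B', add_mem (bidegreeLE_mono (le_max_left _ _) (le_max_left _ _) hf)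
      (bidegreeLE_mono (le_max_right _ _) (le_max_right _ _) hg)⟩
  | mul_X f i hf =>
    obtain ⟨A, B, hf⟩ := hf
    rcases i with i | i
    · rw [← MvPolynomial.rename_X Sum.inl i]
      exact ⟨A + 1, B + 0, mul_mem_bidegreeLE hf
        (rename_inl_mem_bidegreeLE (MvPolynomial.totalDegree_X i).le)⟩
    · rw [← MvPolynomial.rename_X Sum.inr i]
      exact ⟨A + 0, B + 1, mul_mem_bidegreeLE hf
        (rename_inr_mem_bidegreeLE (MvPolynomial.totalDegree_X i).le)⟩

namespace SplitFiber

variable {K : Type*} [Field K] {r : ℕ} (D : SplitFiber K r)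

section IntegralBranch

/-- The branch `xᵢ` as an element of the integral closure of `K[t]` in `K⟦t⟧`. -/
noncomputable def integralBranch (i : Fin (r + 1)) : integralClosure K[X] K⟦X⟧ :=
  ⟨D.x i, D.isIntegral_x i⟩

theorem coe_integralBranch (i : Fin (r + 1)) : (D.integralBranch i : K⟦X⟧) = D.x i := rfl

theorem map_fiberPoly_eq_nodal_integralBranch {R : Type*} [CommRing R]
    (ρ : integralClosure K[X] K⟦X⟧ →+* R) {t₀ : K} (ht₀ : ρ (algebraMap K[X] _ (X - C t₀)) = 0) :
    (fiberPoly D.s D.a t₀).map ((ρ.comp (algebraMap K[X] _)).comp C) =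
      Lagrange.nodal univ (ρ ∘ D.integralBranch) := by
  have hx : (fiberPoly (C ∘ D.s) (C D.a) X).map (algebraMap K[X] (integralClosure K[X] K⟦X⟧)) =
      Lagrange.nodal univ D.integralBranch := by
    refine Polynomial.map_injective (algebraMap (integralClosure K[X] K⟦X⟧) K⟦X⟧)
      Subtype.val_injective ?_
    rw [Polynomial.map_map, ← IsScalarTower.algebraMap_eq, D.map_coe_fiberPoly]
    simp [Lagrange.nodal, Polynomial.map_prod, ← coe_integralBranch]
  have ht : ρ (algebraMap K[X] _ X) = ρ (algebraMap K[X] _ (C t₀)) := by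
    rwa [← sub_eq_zero, ← map_sub, ← map_sub]
  have hρ := congrArg (Polynomial.map ρ) hx
  rw [Polynomial.map_map, fiberPoly_map, RingHom.comp_apply ρ _ X, ht] at hρ
  rw [fiberPoly_map]
  refine hρ.trans ?_
  simp [Lagrange.nodal, Polynomial.map_prod]

theorem injective_comp_integralBranch {κ : Type*} [Field κ] (ρ : integralClosure K[X] K⟦X⟧ →+* κ)
    {t₀ : K} (ht₀ : ρ (algebraMap K[X] _ (X - C t₀)) = 0)
    (hsep : (fiberPoly D.s D.a t₀).Separable) : Function.Injective (ρ ∘ D.integralBranch) := by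
  have hmap := hsep.map (f := (ρ.comp (algebraMap K[X] _)).comp C)
  rw [D.map_fiberPoly_eq_nodal_integralBranch ρ ht₀, Lagrange.nodal] at hmap
  exact separable_prod_X_sub_C_iff.mp hmap

end IntegralBranch

theorem evalPair_parameterDiff : D.evalPair D.parameterDiff = .C .X - .X := by
  simpa using evalPair_rename_map_parameterDiff (D := D) (one_mem _) (one_mem _)

theorem evalPair_prod_X_inr_sub_X_inl (i : Fin (r + 1)) :
    D.evalPair (∏ j, (MvPolynomial.X (.inr i) - MvPolynomial.X (.inl j))) =
      D.evalPair (-D.parameterDiff * (MvPolynomial.X (.inr i) - MvPolynomial.C D.a)) := by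
  have hC : D.evalPair (MvPolynomial.C D.a) = .C (.C D.a) := by
    rw [← MvPolynomial.algebraMap_eq, AlgHom.commutes, algebraMap_eq_C_C]
  have hprod := D.prod_map_y_sub_x i (RingHom.id _)
  simp only [RingHom.id_apply] at hprod
  simp only [map_prod, map_mul, map_neg, map_sub, evalPair_X_inr, evalPair_X_inl,
    evalPair_parameterDiff, hC, hprod, neg_sub]

section Place

variable {O : ValuationSubring (FractionRing K⟦X⟧)}
  (hO : ∀ p : K[X], algebraMap K[X] (FractionRing K⟦X⟧) p ∈ O)

include hO in
theorem algebraMap_mem_of_isIntegral {w : K⟦X⟧} (hw : IsIntegral K[X] w) :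
    algebraMap K⟦X⟧ (FractionRing K⟦X⟧) w ∈ O := by
  have hint : IsIntegral O (algebraMap K⟦X⟧ (FractionRing K⟦X⟧) w) :=
    hw.map_of_comp_eq ((algebraMap K[X] (FractionRing K⟦X⟧)).codRestrict O hO)
      (algebraMap K⟦X⟧ (FractionRing K⟦X⟧)) rfl
  obtain ⟨c, hc⟩ := IsIntegrallyClosed.isIntegral_iff.mp hint
  exact hc ▸ c.2

/-- The inclusion of the integral closure of `K[t]` in `K⟦t⟧` into a valuation ring containing
`K[t]`. -/
noncomputable def toPlace : integralClosure K[X] K⟦X⟧ →+* O :=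
  ((algebraMap K⟦X⟧ (FractionRing K⟦X⟧)).comp
    (algebraMap (integralClosure K[X] K⟦X⟧) K⟦X⟧)).codRestrict O
    fun w => algebraMap_mem_of_isIntegral hO w.2

theorem toPlace_injective : Function.Injective (toPlace hO) := fun _ _ h =>
  Subtype.ext (FaithfulSMul.algebraMap_injective K⟦X⟧ (FractionRing K⟦X⟧) (congrArg Subtype.val h))

variable {D} in
theorem isUnit_toPlace_sub {t₀ : K} (hsep : (fiberPoly D.s D.a t₀).Separable)
    (ht₀ : toPlace hO (algebraMap K[X] _ (X - C t₀)) ∈ IsLocalRing.maximalIdeal O)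
    {i j : Fin (r + 1)} (hij : i ≠ j) :
    IsUnit (toPlace hO (D.integralBranch i - D.integralBranch j)) := by
  have hinj := D.injective_comp_integralBranch ((IsLocalRing.residue O).comp (toPlace hO))
    ((IsLocalRing.residue_eq_zero_iff _).mpr ht₀) hsep
  rw [← IsLocalRing.notMem_maximalIdeal, ← IsLocalRing.residue_eq_zero_iff, map_sub, map_sub,
    sub_eq_zero]
  exact hinj.ne hij

variable {D} in
theorem valuation_disc_eq_one {t₀ : K} (hsep : (fiberPoly D.s D.a t₀).Separable)
    (ht₀ : toPlace hO (algebraMap K[X] _ (X - C t₀)) ∈ IsLocalRing.maximalIdeal O) :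
    O.valuation (algebraMap K⟦X⟧ _ D.disc) = 1 := by
  simp only [disc, branchDeriv, map_prod]
  refine prod_eq_one fun i _ => prod_eq_one fun j hj => ?_
  exact (O.valuation_eq_one_iff _).mp (isUnit_toPlace_sub hO hsep ht₀ (ne_of_mem_erase hj).symm)

include hO in
theorem algebraMap_mem_of_mem_valuesLE {N : ℕ} {w : K⟦X⟧} (hw : w ∈ valuesLE K D.x N) :
    algebraMap K⟦X⟧ (FractionRing K⟦X⟧) w ∈ O := by
  obtain ⟨g, -, rfl⟩ := mem_valuesLE.mp hw
  exact algebraMap_mem_of_isIntegral hO (D.isIntegral_aeval_x g)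

variable [Fintype K] {D}

theorem exists_perm_ne_one_sub_mem_maximalIdeal {t₀ : K} (hsep : (fiberPoly D.s D.a t₀).Separable)
    (hsplits : ¬ (fiberPoly D.s D.a t₀).Splits)
    (ht₀ : toPlace hO (algebraMap K[X] _ (X - C t₀)) ∈ IsLocalRing.maximalIdeal O) :
    ∃ π : Equiv.Perm (Fin (r + 1)), π ≠ 1 ∧ ∀ i,
      toPlace hO (D.integralBranch i ^ Fintype.card K - D.integralBranch (π i)) ∈
        IsLocalRing.maximalIdeal O := by
  have ht : (IsLocalRing.residue O).comp (toPlace hO) (algebraMap K[X] _ (X - C t₀)) = 0 :=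
    (IsLocalRing.residue_eq_zero_iff _).mpr ht₀
  obtain ⟨π, hπ, hπx⟩ := exists_perm_ne_one_pow_card_eq _
    (D.injective_comp_integralBranch _ ht hsep) (D.map_fiberPoly_eq_nodal_integralBranch _ ht)
    hsplits
  refine ⟨π, hπ, fun i => ?_⟩
  rw [← IsLocalRing.residue_eq_zero_iff, ← RingHom.comp_apply, map_sub, map_pow, sub_eq_zero]
  exact hπx i

include hO in
theorem algebraMap_coeff_evalNearFrobenius_mem (hdisc : O.valuation (algebraMap K⟦X⟧ _ D.disc) = 1)
    (h : PairPolynomial K r) (k : ℕ) :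
    algebraMap K⟦X⟧ (FractionRing K⟦X⟧) ((D.evalNearFrobenius h).coeff k) ∈ O := by
  obtain ⟨A, B, hAB⟩ := exists_mem_bidegreeLE h
  have hmem := D.algebraMap_mem_of_mem_valuesLE hO
    (rescale_evalNearFrobenius_mem_growthLE hAB (k + 1) k k.lt_succ_self)
  rw [← O.valuation_le_one_iff, PowerSeries.coeff_rescale, map_mul, map_mul, map_pow, map_pow,
    map_pow, map_pow, hdisc, one_pow, one_pow, one_mul] at hmem
  exact (O.valuation_le_one_iff _).mp hmem

theorem evalNearFrobenius_parameterDiff : D.evalNearFrobenius D.parameterDiff =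
    -(.C (.X ^ Fintype.card K - .X) + .X) := by
  change taylorShift _ constantCoeff_X_pow_card (D.evalPair D.parameterDiff) = _
  rw [evalPair_parameterDiff, map_sub, taylorShift_C, taylorShift_X, map_sub]
  ring

include hO in
theorem exists_lift_evalNearFrobenius (hdisc : O.valuation (algebraMap K⟦X⟧ _ D.disc) = 1) :
    ∃ χ : PairPolynomial K r →+* O⟦X⟧, ∀ h, (χ h).map O.subtype =
      (D.evalNearFrobenius h).map (algebraMap K⟦X⟧ (FractionRing K⟦X⟧)) :=
  exists_powerSeries_lift Subtype.val_injective
    ((PowerSeries.map (algebraMap K⟦X⟧ (FractionRing K⟦X⟧))).comp D.evalNearFrobenius) fun h k =>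
      ⟨⟨_, algebraMap_coeff_evalNearFrobenius_mem hO hdisc h k⟩, by simp⟩

section Lift

variable {χ : PairPolynomial K r →+* O⟦X⟧} (hχ : ∀ h, (χ h).map O.subtype =
  (D.evalNearFrobenius h).map (algebraMap K⟦X⟧ (FractionRing K⟦X⟧)))

include hχ

theorem coe_coeff_lift (h : PairPolynomial K r) (k : ℕ) :
    ((χ h).coeff k : FractionRing K⟦X⟧) = algebraMap K⟦X⟧ _ ((D.evalNearFrobenius h).coeff k) := by
  have := congrArg (PowerSeries.coeff k) (hχ h)
  rwa [PowerSeries.coeff_map, PowerSeries.coeff_map] at this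

theorem lift_eq_of_map_eq {h : PairPolynomial K r} {F : O⟦X⟧} (hF : F.map O.subtype =
    (D.evalNearFrobenius h).map (algebraMap K⟦X⟧ (FractionRing K⟦X⟧))) : χ h = F :=
  PowerSeries.map_injective _ Subtype.val_injective ((hχ h).trans hF.symm)

theorem lift_eq_lift_of_evalPair_eq {f g : PairPolynomial K r} (hfg : D.evalPair f = D.evalPair g) :
    χ f = χ g := by
  refine lift_eq_of_map_eq hχ ((hχ g).trans ?_)
  exact congrArg (fun F => (taylorShift _ constantCoeff_X_pow_card F).map _) hfg.symm

theorem lift_X_inl (j : Fin (r + 1)) :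
    χ (MvPolynomial.X (.inl j)) = .C (toPlace hO (D.integralBranch j)) := by
  refine lift_eq_of_map_eq hχ ?_
  rw [← MvPolynomial.rename_X Sum.inl j, evalNearFrobenius_rename_inl, MvPolynomial.aeval_X,
    PowerSeries.map_C, PowerSeries.map_C]
  rfl

theorem lift_parameterDiff : χ D.parameterDiff =
    -(.C (toPlace hO (algebraMap K[X] _ (X ^ Fintype.card K - X))) + .X) := by
  refine lift_eq_of_map_eq hχ ?_
  have hX : algebraMap K⟦X⟧ (FractionRing K⟦X⟧) PowerSeries.X = algebraMap K[X] _ X := by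
    rw [← Polynomial.coe_X]; rfl
  rw [evalNearFrobenius_parameterDiff]
  simp only [map_neg, map_add, map_sub, map_pow, PowerSeries.map_C, PowerSeries.map_X, hX]
  rfl

theorem constantCoeff_lift_X_inr (i : Fin (r + 1)) :
    PowerSeries.constantCoeff (χ (MvPolynomial.X (.inr i))) =
      toPlace hO (D.integralBranch i ^ Fintype.card K) := by
  refine Subtype.ext ?_
  rw [← PowerSeries.coeff_zero_eq_constantCoeff_apply, coe_coeff_lift hχ,
    ← MvPolynomial.rename_X Sum.inr i, evalNearFrobenius_rename_inr, MvPolynomial.aeval_X,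
    coeff_coeffFrobenius, PowerSeries.coeff_zero_eq_constantCoeff_apply, constantCoeff_z]
  rfl

theorem C_add_X_dvd_lift_X_inr_sub {t₀ : K} (hsep : (fiberPoly D.s D.a t₀).Separable)
    (ht₀ : toPlace hO (algebraMap K[X] _ (X - C t₀)) ∈ IsLocalRing.maximalIdeal O)
    {i j : Fin (r + 1)}
    (hij : toPlace hO (D.integralBranch i ^ Fintype.card K - D.integralBranch j) ∈
      IsLocalRing.maximalIdeal O) :
    .C (toPlace hO (algebraMap K[X] _ (X ^ Fintype.card K - X))) + .X ∣
      χ (MvPolynomial.X (.inr i)) - χ (MvPolynomial.X (.inl j)) := by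
  have hprod := lift_eq_lift_of_evalPair_eq hχ (D.evalPair_prod_X_inr_sub_X_inl i)
  rw [map_mul, map_neg, lift_parameterDiff hO hχ, neg_neg, map_prod] at hprod
  simp only [map_sub χ, lift_X_inl hO hχ] at hprod ⊢
  refine dvd_sub_C_of_prod_eq_mul (x := fun k => toPlace hO (D.integralBranch k))
    (fun k hk => ?_) hprod
  have hunit := isUnit_toPlace_sub hO hsep ht₀ hk.symm
  rw [constantCoeff_lift_X_inr hO hχ, ← map_sub, ← sub_add_sub_cancel _ (D.integralBranch j),
    map_add]
  rw [← IsLocalRing.notMem_maximalIdeal] at hunit ⊢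
  rwa [Submodule.add_mem_iff_right _ hij]

end Lift

include hO in
theorem valuation_coeff_evalNearFrobenius_le {t₀ : K} (hsep : (fiberPoly D.s D.a t₀).Separable)
    (hsplits : ¬ (fiberPoly D.s D.a t₀).Splits)
    (ht₀ : O.valuation (algebraMap K[X] _ (X - C t₀)) < 1) {M k : ℕ} {h : PairPolynomial K r}
    (hh : h ∈ D.graphIdeal ^ M) (h0 : ∀ i < k, (D.evalNearFrobenius h).coeff i = 0) :
    O.valuation (algebraMap K⟦X⟧ _ ((D.evalNearFrobenius h).coeff k)) ≤
      O.valuation (algebraMap K[X] _ (X - C t₀)) ^ M := by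
  replace ht₀ : toPlace hO (algebraMap K[X] _ (X - C t₀)) ∈ IsLocalRing.maximalIdeal O :=
    (O.valuation_lt_one_iff _).mpr ht₀
  obtain ⟨χ, hχ⟩ := exists_lift_evalNearFrobenius hO (valuation_disc_eq_one hO hsep ht₀)
  obtain ⟨π, hπ, hπx⟩ := exists_perm_ne_one_sub_mem_maximalIdeal hO hsep hsplits ht₀
  obtain ⟨i, hi⟩ := exists_lt_apply_of_ne_one hπ
  have hdvd := D.pow_dvd_map_of_mem_graphIdeal_pow χ hi
    (C_add_X_dvd_lift_X_inr_sub hO hχ hsep ht₀ (hπx i))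
    (by rw [lift_parameterDiff hO hχ, dvd_neg]) hh
  have hc : toPlace hO (algebraMap K[X] _ (X ^ Fintype.card K - X)) ≠ 0 := by
    rw [map_ne_zero_iff _ (toPlace_injective hO),
      map_ne_zero_iff _ (FaithfulSMul.algebraMap_injective _ _)]
    exact FiniteField.X_pow_card_sub_X_ne_zero K Fintype.one_lt_card
  have hcoeff := pow_dvd_coeff_of_C_add_X_pow_dvd (k := k) hc hdvd fun i hi =>
    Subtype.ext (by rw [coe_coeff_lift hχ, h0 i hi, map_zero]; rfl)
  have ht : X - C t₀ ∣ X ^ Fintype.card K - X := by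
    rw [dvd_iff_isRoot, IsRoot.def, eval_sub, eval_pow, eval_X, FiniteField.pow_card, sub_self]
  have hct := map_dvd ((toPlace hO).comp (algebraMap K[X] _)) ht
  obtain ⟨w, hw⟩ := (pow_dvd_pow_of_dvd hct M).trans hcoeff
  rw [← coe_coeff_lift hχ, hw, MulMemClass.coe_mul, map_mul, SubmonoidClass.coe_pow, map_pow]
  exact mul_le_of_le_one_right' ((O.valuation_le_one_iff _).mpr w.2)

end Place

end SplitFiber

theorem valuation_nodal_eq_of_lt_one {K Γ : Type*} [Field K] [LinearOrderedCommGroupWithZero Γ]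
    (v : Valuation K[X] Γ) [v.IsTrivialOn K] {s : Finset K} {t : K} (hs : t ∈ s)
    (ht : v (X - C t) < 1) : v (Lagrange.nodal s id) = v (X - C t) := by
  rw [Lagrange.nodal, map_prod]
  refine prod_eq_single_of_mem t hs fun u _ hu => ?_
  have htu : v (C (t - u)) = 1 := Valuation.IsTrivialOn.eq_one (t - u) (sub_ne_zero.mpr hu.symm)
  have hsum : X - C (id u) = C (t - u) + (X - C t) := by rw [C_sub, id]; ring
  rw [hsum, v.map_add_eq_of_lt_left (by rwa [htu]), htu]

namespace SplitFiber

variable {K : Type*} [Field K] [Fintype K] {r : ℕ} (D : SplitFiber K r)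

open scoped Classical in
/-- The parameters in `K` over which the fibre is unramified but not all of its points are
rational. -/
noncomputable def nonsplitParameters : Finset K :=
  {t | (fiberPoly D.s D.a t).Separable ∧ ¬ (fiberPoly D.s D.a t).Splits}

theorem mem_nonsplitParameters {t : K} : t ∈ D.nonsplitParameters ↔
    (fiberPoly D.s D.a t).Separable ∧ ¬ (fiberPoly D.s D.a t).Splits := by
  simp [nonsplitParameters]

theorem eval_zero_nodal_nonsplitParameters_ne_zero :
    (Lagrange.nodal D.nonsplitParameters id).eval 0 ≠ 0 := by
  rw [Lagrange.eval_nodal, prod_ne_zero_iff]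
  rintro t ht h0
  obtain rfl : t = 0 := by simpa using h0
  have hnodal : fiberPoly D.s D.a 0 = Lagrange.nodal univ D.s := by simp [fiberPoly]
  exact ((D.mem_nonsplitParameters.mp ht).2 (hnodal ▸ .prod fun i _ => .X_sub_C _))

variable {D} {M m k : ℕ} {h : PairPolynomial K r}

theorem valuation_disc_pow_mul_coeff_evalNearFrobenius_le {O : ValuationSubring (FractionRing K⟦X⟧)}
    (hO : ∀ p : K[X], algebraMap K[X] (FractionRing K⟦X⟧) p ∈ O) (hh : h ∈ D.graphIdeal ^ M)
    (h0 : ∀ i < k, (D.evalNearFrobenius h).coeff i = 0)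
    (hint : IsIntegral K[X] (D.disc ^ m * (D.evalNearFrobenius h).coeff k)) :
    O.valuation (algebraMap K⟦X⟧ _ (D.disc ^ m * (D.evalNearFrobenius h).coeff k)) ≤
      O.valuation (algebraMap K[X] _ (Lagrange.nodal D.nonsplitParameters id)) ^ M := by
  by_cases hex : ∃ t ∈ D.nonsplitParameters, O.valuation (algebraMap K[X] _ (X - C t)) < 1
  · obtain ⟨t, ht, hlt⟩ := hex
    obtain ⟨hsep, hsplits⟩ := D.mem_nonsplitParameters.mp ht
    have hC (c : K) : algebraMap K (FractionRing K⟦X⟧) c = algebraMap K[X] _ (C c) :=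
      IsScalarTower.algebraMap_apply K K[X] _ c
    have := isTrivialOn_of_algebraMap_mem fun c : K => hC c ▸ hO (C c)
    have : (O.valuation.comap (algebraMap K[X] (FractionRing K⟦X⟧))).IsTrivialOn K :=
      ⟨fun c hc => (congrArg O.valuation (hC c)).symm.trans
        (Valuation.IsTrivialOn.eq_one (v := O.valuation) c hc)⟩
    have hnodal := valuation_nodal_eq_of_lt_one (O.valuation.comap (algebraMap K[X] _)) ht hlt
    rw [Valuation.comap_apply, Valuation.comap_apply] at hnodal
    have hdisc := (O.valuation_le_one_iff _).mpr
      (D.algebraMap_mem_of_mem_valuesLE hO D.disc_mem_valuesLE)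
    rw [hnodal, map_mul, map_mul, map_pow, map_pow]
    exact mul_le_of_le_one_of_le (pow_le_one' hdisc m)
      (valuation_coeff_evalNearFrobenius_le hO hsep hsplits hlt hh h0)
  · push Not at hex
    have hone : O.valuation (algebraMap K[X] _ (Lagrange.nodal D.nonsplitParameters id)) = 1 := by
      simp only [Lagrange.nodal, map_prod]
      exact prod_eq_one fun t ht => ((O.valuation_le_one_iff _).mpr (hO _)).antisymm (hex t ht)
    rw [hone, one_pow]
    exact (O.valuation_le_one_iff _).mpr (algebraMap_mem_of_isIntegral hO hint)

theorem exists_isIntegral_nodal_pow_mul_eq (hh : h ∈ D.graphIdeal ^ M)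
    (h0 : ∀ i < k, (D.evalNearFrobenius h).coeff i = 0)
    (hint : IsIntegral K[X] (D.disc ^ m * (D.evalNearFrobenius h).coeff k)) :
    ∃ w, IsIntegral K[X] w ∧ ((Lagrange.nodal D.nonsplitParameters id ^ M : K[X]) : K⟦X⟧) * w =
      D.disc ^ m * (D.evalNearFrobenius h).coeff k := by
  have hunit : IsUnit ((Lagrange.nodal D.nonsplitParameters id ^ M : K[X]) : K⟦X⟧) :=
    isUnit_coe_of_eval_zero_ne_zero (by
      rw [eval_pow]; exact pow_ne_zero M D.eval_zero_nodal_nonsplitParameters_ne_zero)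
  obtain ⟨w, hw⟩ := hunit.dvd (a := D.disc ^ m * (D.evalNearFrobenius h).coeff k)
  refine ⟨w, ?_, hw.symm⟩
  have hinj := FaithfulSMul.algebraMap_injective K⟦X⟧ (FractionRing K⟦X⟧)
  rw [← isIntegral_algebraMap_iff hinj]
  by_contra hwint
  obtain ⟨O, hO, hwO⟩ := exists_valuationSubring_notMem hwint
  have hle := valuation_disc_pow_mul_coeff_evalNearFrobenius_le hO hh h0 hint
  have hpos : 0 < O.valuation (algebraMap K[X] _ (Lagrange.nodal D.nonsplitParameters id)) ^ M := by
    rw [← map_pow, ← map_pow, Valuation.pos_iff, IsScalarTower.algebraMap_apply K[X] K⟦X⟧]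
    exact (hunit.map _).ne_zero
  rw [hw, map_mul, map_mul, ← map_pow, ← map_pow] at hle
  rw [← map_pow, ← map_pow] at hpos
  exact hwO ((O.valuation_le_one_iff _).mp (le_of_mul_le_mul_left (hle.trans (mul_one _).ge) hpos))

theorem X_pow_dvd_coeff_evalNearFrobenius {Z : ℕ} (hZ : ∀ j < Z, (D.evalPair h).coeff j = 0)
    (h0 : ∀ i < k, (D.evalNearFrobenius h).coeff i = 0) :
    .X ^ (Fintype.card K * Z) ∣ (D.evalNearFrobenius h).coeff k := by
  have hdvd : (.C (.X ^ Fintype.card K) + .X) ^ Z ∣ D.evalNearFrobenius h := by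
    rw [← taylorShift_X _ constantCoeff_X_pow_card, ← map_pow]
    exact map_dvd (taylorShift _ constantCoeff_X_pow_card) (PowerSeries.X_pow_dvd_iff.mpr hZ)
  rw [pow_mul]
  exact pow_dvd_coeff_of_C_add_X_pow_dvd (pow_ne_zero _ PowerSeries.X_ne_zero) hdvd h0

theorem coeff_evalNearFrobenius_eq_zero {A B Z N : ℕ} {n : ℕ → ℕ} (hh : h ∈ D.graphIdeal ^ M)
    (hAB : h ∈ bidegreeLE (Fin (r + 1)) K A B) (hZ : ∀ j < Z, (D.evalPair h).coeff j = 0)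
    (h0 : ∀ k < N, ∀ i < n k, (D.disc ^ (Fintype.card K * k) *
      (D.evalNearFrobenius h).coeff k).coeff (Fintype.card K * Z + i) = 0)
    (hlt : ∀ k < N, Nat.card D.galoisGroup * (A + Fintype.card K * B + Fintype.card K * r ^ 2 * k) <
      r * (Fintype.card K * Z + n k + Nat.card D.galoisGroup * (M * #D.nonsplitParameters))) :
    ∀ k < N, (D.evalNearFrobenius h).coeff k = 0 := by
  intro k
  induction k using Nat.strong_induction_on with
  | _ k ih =>
    intro hk
    by_contra hne
    have hlow (i : ℕ) (hi : i < k) : (D.evalNearFrobenius h).coeff i = 0 := ih i hi (hi.trans hk)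
    have hmem := rescale_evalNearFrobenius_mem_growthLE (D := D) hAB (k + 1) k k.lt_succ_self
    rw [PowerSeries.coeff_rescale, ← pow_mul] at hmem
    obtain ⟨g, hg, hgv⟩ := mem_valuesLE.mp hmem
    have hX : PowerSeries.X ^ (Fintype.card K * Z + n k) ∣ MvPolynomial.aeval D.x g := by
      rw [hgv, PowerSeries.X_pow_dvd_iff]
      intro m hm
      obtain hmZ | hmZ := lt_or_ge m (Fintype.card K * Z)
      · have hdvd := (X_pow_dvd_coeff_evalNearFrobenius hZ hlow).mul_left
          (D.disc ^ (Fintype.card K * k))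
        exact PowerSeries.X_pow_dvd_iff.mp hdvd m hmZ
      · obtain ⟨i, rfl⟩ := Nat.exists_eq_add_of_le hmZ
        exact h0 k hk i (Nat.lt_of_add_lt_add_left hm)
    obtain ⟨w, hw, hwv⟩ := exists_isIntegral_nodal_pow_mul_eq hh hlow (hgv ▸ D.isIntegral_aeval_x g)
    have hg0 : MvPolynomial.aeval D.x g ≠ 0 :=
      hgv ▸ mul_ne_zero (pow_ne_zero _ D.disc_ne_zero) hne
    have hle := card_mul_le_of_dvd_of_isIntegral (m' := 0) hg0
      (by rw [eval_pow]; exact pow_ne_zero M D.eval_zero_nodal_nonsplitParameters_ne_zero)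
      hw (hwv.trans hgv.symm) hg hX (fun σ _ _ => by simp)
    rw [natDegree_pow, Lagrange.natDegree_nodal, mul_zero, add_zero] at hle
    have := hlt k hk
    rw [add_comm (A + _)] at this
    exact this.not_ge hle

end SplitFiber

theorem X_sub_C_pow_dvd_of_X_pow_dvd_taylorShift {K : Type*} [Field K] {c : K⟦X⟧}
    (hc : c.constantCoeff = 0) {P : K⟦X⟧[X]} {m : ℕ}
    (h : PowerSeries.X ^ m ∣ taylorShift c hc (P : K⟦X⟧⟦X⟧)) : (X - C c) ^ m ∣ P := by
  have hshift : (taylorShift c hc).comp Polynomial.coeToPowerSeries.ringHom =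
      Polynomial.coeToPowerSeries.ringHom.comp (compRingHom (X + C c)) := by
    refine Polynomial.ringHom_ext (fun b => ?_) ?_
    · simp [taylorShift_C]
    · simp [taylorShift_X, add_comm]
  have hcoe : taylorShift c hc (P : K⟦X⟧⟦X⟧) = ((P.comp (X + C c) : K⟦X⟧[X]) : K⟦X⟧⟦X⟧) :=
    DFunLike.congr_fun hshift P
  rw [X_sub_C_pow_dvd_iff, X_pow_dvd_iff]
  intro d hd
  rw [← Polynomial.coeff_coe, ← hcoe]
  exact PowerSeries.X_pow_dvd_iff.mp h d hd

theorem sum_le_natDegree_of_X_sub_C_pow_dvd {ι R : Type*} [Fintype ι] [CommRing R] [IsDomain R]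
    {a : ι → R} (ha : Function.Injective a) {n : ι → ℕ} {P : R[X]} (hP : P ≠ 0)
    (h : ∀ i, (X - C (a i)) ^ n i ∣ P) : ∑ i, n i ≤ P.natDegree := by
  classical
  have hroots : ∑ i, Multiset.replicate (n i) (a i) ≤ P.roots := by
    refine Multiset.le_iff_count.mpr fun b => ?_
    simp only [Multiset.count_sum', Multiset.count_replicate]
    by_cases hb : ∃ i, a i = b
    · obtain ⟨i, rfl⟩ := hb
      rw [sum_eq_single i (fun j _ hj => if_neg (ha.ne hj)) (by simp), if_pos rfl, count_roots]
      exact (le_rootMultiplicity_iff hP).mpr (h i)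
    · rw [sum_eq_zero fun i _ => if_neg fun hi => hb ⟨i, hi⟩]
      exact Nat.zero_le _
  simpa using (Multiset.card_le_card hroots).trans (card_roots' P)

theorem rename_map_mem_bidegreeLE {ι K : Type*} [Field K] {A B : ℕ}
    {h : MvPolynomial (ι ⊕ ι) K} (hh : h ∈ bidegreeLE ι K A B) (σ τ : ι → ι) :
    MvPolynomial.rename (Sum.map σ τ) h ∈ bidegreeLE ι K A B := by
  refine bidegreeLE_induction (motive := fun h => MvPolynomial.rename (Sum.map σ τ) h ∈ _)
    (fun f g hf hg => ?_) (fun _ _ h₁ h₂ => by rw [map_add]; exact add_mem h₁ h₂) hh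
  have h₁ : MvPolynomial.rename (Sum.map σ τ) (MvPolynomial.rename .inl f) =
      MvPolynomial.rename .inl (MvPolynomial.rename σ f) := by
    simp only [MvPolynomial.rename_rename]; rfl
  have h₂ : MvPolynomial.rename (Sum.map σ τ) (MvPolynomial.rename .inr g) =
      MvPolynomial.rename .inr (MvPolynomial.rename τ g) := by
    simp only [MvPolynomial.rename_rename]; rfl
  rw [map_mul, h₁, h₂]
  exact rename_inl_mul_rename_inr_mem_bidegreeLE ((MvPolynomial.totalDegree_rename_le _ _).trans hf)
    ((MvPolynomial.totalDegree_rename_le _ _).trans hg)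

theorem injective_zero_X_pow_card_X (K : Type*) [Field K] [Fintype K] :
    Function.Injective ![(0 : K⟦X⟧), .X ^ Fintype.card K, .X] := by
  have hq : (PowerSeries.X : K⟦X⟧) ^ Fintype.card K ≠ .X := by
    have := FiniteField.X_pow_card_sub_X_ne_zero K (p := Fintype.card K) Fintype.one_lt_card
    rw [sub_ne_zero, ne_eq, ← Polynomial.coe_inj] at this
    simpa using this
  have hX : (PowerSeries.X : K⟦X⟧) ≠ 0 := PowerSeries.X_ne_zero
  have hXq : (PowerSeries.X : K⟦X⟧) ^ Fintype.card K ≠ 0 := pow_ne_zero _ hX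
  intro i j
  fin_cases i <;> fin_cases j <;> simp [hq, hq.symm, hX, hX.symm, hXq.symm]

namespace SplitFiber

section RightNorm

variable {K : Type*} [Field K] {r : ℕ} (D : SplitFiber K r)

/-- The norm of a function on pairs of points with respect to the second point. -/
noncomputable def rightNorm (h : PairPolynomial K r) : PairPolynomial K r :=
  ∏ σ : D.galoisGroup, MvPolynomial.rename (Sum.map id σ) h

variable {D} {A B M k : ℕ} {h : PairPolynomial K r} {τ : Equiv.Perm (Fin (r + 1))}

theorem rename_id_map_rightNorm (hτ : τ ∈ D.galoisGroup) :
    MvPolynomial.rename (Sum.map id τ) (D.rightNorm h) = D.rightNorm h := by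
  simp only [rightNorm, map_prod, MvPolynomial.rename_rename]
  refine Fintype.prod_equiv (Equiv.mulLeft (⟨τ, hτ⟩ : D.galoisGroup)) _ _ fun σ => ?_
  simp [Sum.map_comp_map]

theorem rightNorm_mem_bidegreeLE (hh : h ∈ bidegreeLE (Fin (r + 1)) K A B) :
    D.rightNorm h ∈ bidegreeLE (Fin (r + 1)) K (Nat.card D.galoisGroup * A)
      (Nat.card D.galoisGroup * B) := by
  rw [Nat.card_eq_fintype_card, ← card_univ]
  exact prod_mem_bidegreeLE univ fun σ _ => rename_map_mem_bidegreeLE hh id σ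

theorem evalPair_eq_zero_of_evalPair_rightNorm (h0 : D.evalPair (D.rightNorm h) = 0) :
    D.evalPair h = 0 := by
  rw [rightNorm, map_prod] at h0
  obtain ⟨σ, -, hσ⟩ := prod_eq_zero_iff.mp h0
  exact (evalPair_rename_id_map_eq_zero_iff σ.2 h).mp hσ

theorem rightNorm_eq_mul_prod_erase : D.rightNorm h =
    h * ∏ σ ∈ (univ : Finset D.galoisGroup).erase 1, MvPolynomial.rename (Sum.map id σ) h := by
  rw [rightNorm, ← mul_prod_erase univ _ (mem_univ (1 : D.galoisGroup))]
  simp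

theorem X_sub_C_X_pow_dvd_evalPair_rightNorm (hh : h ∈ D.graphIdeal ^ M) :
    (.X - .C .X : K⟦X⟧⟦X⟧) ^ ((Nat.card D.galoisGroup - 1) * M) ∣ D.evalPair (D.rightNorm h) := by
  rw [rightNorm_eq_mul_prod_erase, map_mul, map_prod, mul_comm, pow_mul]
  refine Dvd.dvd.mul_left ?_ _
  have hdvd : ∏ _σ ∈ (univ : Finset D.galoisGroup).erase 1, (.X - .C .X : K⟦X⟧⟦X⟧) ^ M ∣
      ∏ σ ∈ (univ : Finset D.galoisGroup).erase 1,
        D.evalPair (MvPolynomial.rename (Sum.map id σ) h) :=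
    prod_dvd_prod_of_dvd _ _ fun σ hσ => by
      have hσ1 : (1 : Equiv.Perm (Fin (r + 1))) ≠ σ :=
        fun h => ne_of_mem_erase hσ (Subtype.ext h.symm)
      simpa using X_sub_C_X_pow_dvd_evalPair_rename (one_mem _) σ.2 hσ1 hh
  rwa [prod_const, card_erase_of_mem (mem_univ _), card_univ, ← Nat.card_eq_fintype_card] at hdvd

theorem coeff_evalPair_eq_zero_of_rename_eq (hAB : h ∈ bidegreeLE (Fin (r + 1)) K A B)
    (hinv : ∀ τ ∈ D.galoisGroup, MvPolynomial.rename (Sum.map id τ) h = h) (hk : B < r * k) :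
    (D.evalPair h).coeff k = 0 := by
  ext m
  set f := (D.expandRight (MvPolynomial.rename Sum.swap h)).coeff m with hf
  have hdeg : f.totalDegree ≤ B :=
    totalDegree_coeff_expandRight_le (rename_swap_mem_bidegreeLE hAB) m
  obtain ⟨p, hp⟩ : ∃ p : K[X], (p : K⟦X⟧) = MvPolynomial.aeval D.x f := by
    refine exists_polynomial_eq_aeval fun τ hτ => ?_
    have hswap : (Sum.map τ id ∘ Sum.swap : Fin (r + 1) ⊕ Fin (r + 1) → _) =
        Sum.swap ∘ Sum.map id τ := by
      funext i; cases i <;> rfl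
    rw [hf, ← coeff_evalPair_rename_map_id, ← coeff_evalPair, MvPolynomial.rename_rename, hswap,
      ← MvPolynomial.rename_rename, hinv τ hτ]
  rw [← coeff_coeff_swapVars, ← evalPair_rename_swap, coeff_evalPair, ← hf, ← hp,
    Polynomial.coeff_coe, map_zero]
  have hle := D.mul_natDegree_le_of_mem_valuesLE (mem_valuesLE.mpr ⟨f, hdeg, hp.symm⟩)
  exact coeff_eq_zero_of_natDegree_lt (Nat.lt_of_mul_lt_mul_left (hle.trans_lt hk))

theorem exists_polynomial_eq_evalPair_rightNorm {L : ℕ}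
    (hAB : h ∈ bidegreeLE (Fin (r + 1)) K A B) (hL : Nat.card D.galoisGroup * B < r * L) :
    ∃ P : K⟦X⟧[X], (P : K⟦X⟧⟦X⟧) = D.evalPair (D.rightNorm h) ∧ P.degree < L := by
  refine ⟨PowerSeries.trunc L (D.evalPair (D.rightNorm h)), ?_, PowerSeries.degree_trunc_lt _ _⟩
  ext1 k
  rw [Polynomial.coeff_coe, PowerSeries.coeff_trunc]
  split_ifs with hk
  · rfl
  · exact (coeff_evalPair_eq_zero_of_rename_eq (rightNorm_mem_bidegreeLE hAB)
      (fun τ hτ => rename_id_map_rightNorm hτ)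
      (hL.trans_le (Nat.mul_le_mul_left _ (not_lt.mp hk)))).symm

variable [Fintype K]

/- For fixed `t`, the norm of `h` is a polynomial in `u` that vanishes at `0`, `t ^ q` and `t`. -/
theorem evalPair_eq_zero {Z N : ℕ} (hh : h ∈ D.graphIdeal ^ M)
    (hAB : h ∈ bidegreeLE (Fin (r + 1)) K A B) (hZ : ∀ j < Z, (D.evalPair h).coeff j = 0)
    (hN : ∀ k < N, (D.evalNearFrobenius h).coeff k = 0)
    (hlt : Nat.card D.galoisGroup * B < r * (Z + N + (Nat.card D.galoisGroup - 1) * M)) :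
    D.evalPair h = 0 := by
  set m := (Nat.card D.galoisGroup - 1) * M
  have hdvd : D.evalPair h ∣ D.evalPair (D.rightNorm h) :=
    map_dvd D.evalPair (rightNorm_eq_mul_prod_erase (D := D) ▸ dvd_mul_right _ _)
  obtain ⟨P, hP, hdeg⟩ := exists_polynomial_eq_evalPair_rightNorm hAB hlt
  have hX0 : (X - C (0 : K⟦X⟧)) ^ Z ∣ P := by
    rw [map_zero, sub_zero, X_pow_dvd_iff]
    intro j hj
    rw [← Polynomial.coeff_coe, hP]
    exact PowerSeries.X_pow_dvd_iff.mp ((PowerSeries.X_pow_dvd_iff.mpr hZ).trans hdvd) j hj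
  have hXq : (X - C (PowerSeries.X ^ Fintype.card K : K⟦X⟧)) ^ N ∣ P := by
    refine X_sub_C_pow_dvd_of_X_pow_dvd_taylorShift constantCoeff_X_pow_card ?_
    rw [hP]
    exact (PowerSeries.X_pow_dvd_iff.mpr hN).trans (map_dvd (taylorShift _ _) hdvd)
  have hX : (X - C (PowerSeries.X : K⟦X⟧)) ^ m ∣ P := by
    refine X_sub_C_pow_dvd_of_X_pow_dvd_taylorShift PowerSeries.constantCoeff_X ?_
    have := map_dvd (taylorShift .X PowerSeries.constantCoeff_X)
      (X_sub_C_X_pow_dvd_evalPair_rightNorm hh)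
    rwa [map_pow, map_sub, taylorShift_C, taylorShift_X, add_sub_cancel_left, ← hP] at this
  refine evalPair_eq_zero_of_evalPair_rightNorm ?_
  rw [← hP, Polynomial.coe_eq_zero_iff]
  by_contra hP0
  have hle := sum_le_natDegree_of_X_sub_C_pow_dvd (injective_zero_X_pow_card_X K)
    (n := ![Z, N, m]) hP0 fun i => by
      fin_cases i
      exacts [hX0, hXq, hX]
  rw [degree_eq_natDegree hP0, Nat.cast_lt, Fin.sum_univ_three] at *
  exact hdeg.not_ge hle

end RightNorm

end SplitFiber

/- A combination of powers of `V` and `W` can be unwound one power of `V` at a time, because `V`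
vanishes under `ρ` and `W` does not. -/
theorem eq_zero_of_pow_mul_add_sum_eq_zero {R S : Type*} [CommRing R] [IsDomain R] [CommRing S]
    [IsDomain S] (ρ : S →+* R) {V W A : S} (hV : V ≠ 0) (hρV : ρ V = 0) (hρW : ρ W ≠ 0) {M : ℕ}
    {Q : Fin M → S} (hQ : ∀ k, ρ (Q k) = 0 → Q k = 0)
    (h : V ^ M * A + ∑ k : Fin M, V ^ (k : ℕ) * (W ^ (M - k) * Q k) = 0) (k : Fin M) : Q k = 0 := by
  induction k using WellFoundedLT.induction with
  | ind k ih =>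
    have hfactor : V ^ (k : ℕ) * (V ^ (M - k) * A +
        ∑ j with k ≤ j, V ^ ((j : ℕ) - k) * (W ^ (M - j) * Q j)) = 0 := by
      rw [mul_add, ← mul_assoc, ← pow_add, Nat.add_sub_cancel' k.2.le, mul_sum, sum_filter]
      refine (congrArg _ (sum_congr rfl ?_)).trans h
      intro j _
      split_ifs with hkj
      · rw [← mul_assoc, ← pow_add, Nat.add_sub_cancel' (Fin.le_def.mp hkj)]
      · rw [ih j (not_le.mp hkj), mul_zero, mul_zero]
    have hρ := congrArg ρ ((mul_eq_zero.mp hfactor).resolve_left (pow_ne_zero _ hV))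
    rw [map_add, map_mul, map_pow, hρV, zero_pow (Nat.sub_pos_of_lt k.2).ne', zero_mul, zero_add,
      map_sum, sum_eq_single_of_mem k (by simp), Nat.sub_self, pow_zero, one_mul, map_mul, map_pow,
      map_zero] at hρ
    · exact hQ k ((mul_eq_zero.mp hρ).resolve_left (pow_ne_zero _ hρW))
    · intro j hj hne
      have hlt : (k : ℕ) < j := Fin.lt_def.mp ((mem_filter.mp hj).2.lt_of_ne' hne)
      rw [map_mul, map_pow, hρV, zero_pow (Nat.sub_pos_of_lt hlt).ne', zero_mul]

theorem linearIndependent_C_mul_map_C {ι κ K : Type*} [Finite ι] [Finite κ] [Field K]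
    {f : ι → K⟦X⟧} {g : κ → K⟦X⟧} (hf : LinearIndependent K f) (hg : LinearIndependent K g) :
    LinearIndependent K fun p : ι × κ => (.C (f p.1) * (g p.2).map PowerSeries.C : K⟦X⟧⟦X⟧) := by
  cases nonempty_fintype ι
  cases nonempty_fintype κ
  rw [Fintype.linearIndependent_iff] at hf hg ⊢
  intro v hv
  suffices ∀ i j, v (i, j) = 0 from fun p => this p.1 p.2
  intro i
  refine hg (fun j => v (i, j)) (PowerSeries.ext fun m => ?_)
  revert i
  rw [map_zero]
  refine hf _ ?_
  rw [← map_zero (PowerSeries.coeff (R := K⟦X⟧) m), ← hv, map_sum, Fintype.sum_prod_type]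
  refine sum_congr rfl fun i _ => ?_
  rw [map_sum, sum_smul]
  refine sum_congr rfl fun j _ => ?_
  simp only [PowerSeries.coeff_smul, PowerSeries.coeff_C_mul, PowerSeries.coeff_map,
    PowerSeries.smul_eq_C_mul, map_mul]
  ring

namespace SplitFiber

section AuxiliaryPolynomial

variable {K : Type*} [Field K] {r : ℕ} (D : SplitFiber K r)

/-- Polynomials in the branches forming a basis, over the field of rational functions of the
parameter, of the splitting field generated by the branches. -/
noncomputable def basis : Fin (Nat.card D.galoisGroup) → MvPolynomial (Fin (r + 1)) K :=
  D.exists_linearIndependent_aeval_mul_X_pow.choose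

/-- The products of the basis polynomials with the powers of the parameter below the `N`-th. -/
noncomputable def basisMonomial (N : ℕ) (p : Fin N × Fin (Nat.card D.galoisGroup)) :
    MvPolynomial (Fin (r + 1)) K :=
  D.parameter ^ (p.1 : ℕ) * D.basis p.2

theorem linearIndependent_aeval_basisMonomial (N : ℕ) :
    LinearIndependent K fun p => MvPolynomial.aeval D.x (D.basisMonomial N p) := by
  simp only [basisMonomial, map_mul, map_pow, aeval_x_parameter]
  exact D.exists_linearIndependent_aeval_mul_X_pow.choose_spec.comp (Prod.map Fin.val id)
    (Fin.val_injective.prodMap Function.injective_id)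

theorem exists_totalDegree_basis_le : ∃ c, ∀ i, (D.basis i).totalDegree ≤ r * c := by
  refine ⟨∑ i, (D.basis i).totalDegree, fun i => ?_⟩
  exact (single_le_sum_of_canonicallyOrdered (f := fun i => (D.basis i).totalDegree)
    (mem_univ i)).trans (Nat.le_mul_of_pos_left _ (two_pos.trans_le D.two_le))

theorem totalDegree_basisMonomial_le {c : ℕ} (hc : ∀ i, (D.basis i).totalDegree ≤ r * c) {N : ℕ}
    (p : Fin N × Fin (Nat.card D.galoisGroup)) :
    (D.basisMonomial N p).totalDegree ≤ r * (p.1 + c) := by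
  rw [mul_add, mul_comm r]
  exact (MvPolynomial.totalDegree_mul _ _).trans (add_le_add
    ((MvPolynomial.totalDegree_pow _ _).trans (Nat.mul_le_mul_left _ D.totalDegree_parameter_le))
    (hc p.2))

/-- The indices of the generators of the space of auxiliary polynomials, where `d` is the order of
the Galois group. -/
abbrev AuxIndex (d N₀ N₁ : ℕ) {M : ℕ} (w : Fin M → ℕ) : Type :=
  ((Fin N₀ × Fin d) × (Fin N₁ × Fin d)) ⊕ (Σ k : Fin M, Fin (w k) × Fin d)

variable {M : ℕ}

/-- Generators of the space of auxiliary polynomials. Those of the second kind form layers of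
increasing order `k` in the difference of the parameters. -/
noncomputable def auxGenerator (N₀ N₁ : ℕ) (w : Fin M → ℕ) :
    AuxIndex (Nat.card D.galoisGroup) N₀ N₁ w → PairPolynomial K r
  | .inl p => D.parameterDiff ^ M * (MvPolynomial.rename .inl (D.basisMonomial N₀ p.1) *
      MvPolynomial.rename .inr (D.basisMonomial N₁ p.2))
  | .inr p => D.parameterDiff ^ (p.1 : ℕ) *
      (graphProduct K r ^ (M - p.1) * MvPolynomial.rename .inl (D.basisMonomial _ p.2))

theorem auxGenerator_mem_graphIdeal_pow (N₀ N₁ : ℕ) (w : Fin M → ℕ)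
    (i : AuxIndex (Nat.card D.galoisGroup) N₀ N₁ w) :
    D.auxGenerator N₀ N₁ w i ∈ D.graphIdeal ^ M := by
  have hgraph : graphProduct K r ∈ D.graphIdeal := Ideal.subset_span (by simp)
  have hdiff : D.parameterDiff ∈ D.graphIdeal := Ideal.subset_span (by simp)
  obtain p | ⟨k, p⟩ := i
  · exact Ideal.mul_mem_right _ _ (Ideal.pow_mem_pow hdiff M)
  · have hmul := Ideal.mul_mem_mul (Ideal.pow_mem_pow hdiff (k : ℕ))
      (Ideal.pow_mem_pow hgraph (M - k))
    rw [← pow_add, Nat.add_sub_cancel' k.2.le] at hmul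
    rw [auxGenerator, ← mul_assoc]
    exact Ideal.mul_mem_right _ _ hmul

theorem two_mul_mul_succ_div_two (n : ℕ) : 2 * (n * (n + 1) / 2) = n * (n + 1) :=
  Nat.mul_div_cancel' (Nat.even_mul_succ_self n).two_dvd

theorem auxGenerator_mem_bidegreeLE {c N₀ N₁ : ℕ} {w : Fin M → ℕ}
    (hc : ∀ i, (D.basis i).totalDegree ≤ r * c) (hN₁ : 2 * N₁ = M * (r - 1))
    (hw : ∀ k : Fin M, ∀ i < w k, 2 * i + (M - k) * (r - 1) ≤ 2 * N₀)
    (i : AuxIndex (Nat.card D.galoisGroup) N₀ N₁ w) :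
    D.auxGenerator N₀ N₁ w i ∈
      bidegreeLE (Fin (r + 1)) K (r * (M + c + N₀)) (r * (M + c + N₁)) := by
  have hdiff (k : ℕ) := pow_mem_bidegreeLE D.parameterDiff_mem_bidegreeLE k
  obtain p | ⟨k, p⟩ := i
  · refine bidegreeLE_mono ?_ ?_ (mul_mem_bidegreeLE (hdiff M)
      (rename_inl_mul_rename_inr_mem_bidegreeLE (D.totalDegree_basisMonomial_le hc p.1)
        (D.totalDegree_basisMonomial_le hc p.2)))
    · nlinarith [p.1.1.2]
    · nlinarith [p.2.1.2]
  · refine bidegreeLE_mono ?_ ?_ (mul_mem_bidegreeLE (hdiff k) (mul_mem_bidegreeLE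
      (pow_mem_bidegreeLE (graphProduct_mem_bidegreeLE K r) (M - k))
      (rename_inl_mem_bidegreeLE (B := 0) (D.totalDegree_basisMonomial_le hc p))))
    all_goals
      have hP := two_mul_mul_succ_div_two r
      have hwk := hw k p.1 p.1.2
      obtain ⟨e, rfl⟩ : ∃ e, r = e + 1 := Nat.exists_eq_add_of_le' (one_le_two.trans D.two_le)
      have hM := Nat.add_sub_cancel' k.2.le
      rw [Nat.add_sub_cancel] at hN₁ hwk
      generalize M - k = j at *
    · nlinarith [congrArg (e * ·) hM]
    · nlinarith [congrArg (e * (e + 1) * ·) hM, congrArg ((e + 1) * ·) hN₁, congrArg (j * ·) hP,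
        Nat.zero_le (e * (e + 1) * k)]

/-- The auxiliary polynomial with given coefficients on the generators. -/
noncomputable def auxPolynomial (N₀ N₁ : ℕ) (w : Fin M → ℕ) :
    (AuxIndex (Nat.card D.galoisGroup) N₀ N₁ w → K) →ₗ[K] PairPolynomial K r :=
  Fintype.linearCombination K (D.auxGenerator N₀ N₁ w)

theorem auxPolynomial_mem_graphIdeal_pow {N₀ N₁ : ℕ} {w : Fin M → ℕ}
    (v : AuxIndex (Nat.card D.galoisGroup) N₀ N₁ w → K) :
    D.auxPolynomial N₀ N₁ w v ∈ D.graphIdeal ^ M := by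
  refine sum_mem fun i _ => ?_
  rw [MvPolynomial.smul_eq_C_mul]
  exact Ideal.mul_mem_left _ _ (D.auxGenerator_mem_graphIdeal_pow N₀ N₁ w i)

theorem constantCoeff_taylorShift_evalPair_graphProduct_ne_zero :
    (taylorShift .X PowerSeries.constantCoeff_X
      (D.evalPair (graphProduct K r))).constantCoeff ≠ 0 := by
  rw [graphProduct, map_prod, map_prod, map_prod, prod_ne_zero_iff]
  intro p hp
  have hz := D.constantCoeff_z p.1
  rw [z] at hz
  rw [map_sub, evalPair_X_inl, evalPair_X_inr, map_sub, taylorShift_C, map_sub,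
    PowerSeries.constantCoeff_C, hz, sub_ne_zero]
  exact fun h => (mem_filter.mp hp).2.ne (D.x_injective h)

theorem evalPair_auxPolynomial {N₀ N₁ : ℕ} {w : Fin M → ℕ}
    (v : AuxIndex (Nat.card D.galoisGroup) N₀ N₁ w → K) :
    D.evalPair (D.auxPolynomial N₀ N₁ w v) = (.C .X - .X) ^ M *
        ∑ p, v (.inl p) • (.C (MvPolynomial.aeval D.x (D.basisMonomial N₀ p.1)) *
          (MvPolynomial.aeval D.x (D.basisMonomial N₁ p.2)).map PowerSeries.C : K⟦X⟧⟦X⟧) +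
      ∑ k : Fin M, (.C .X - .X) ^ (k : ℕ) * (D.evalPair (graphProduct K r) ^ (M - k) *
        .C (∑ p, v (.inr ⟨k, p⟩) • MvPolynomial.aeval D.x (D.basisMonomial _ p))) := by
  have hC (c : K) (f : K⟦X⟧) : (.C (c • f) : K⟦X⟧⟦X⟧) = c • .C f := by
    rw [PowerSeries.smul_eq_C_mul, map_mul, Algebra.smul_def, algebraMap_eq_C_C]
  rw [auxPolynomial, Fintype.linearCombination_apply, Fintype.sum_sum_type, Fintype.sum_sigma]
  simp only [map_add, map_sum, map_smul, auxGenerator, map_mul, map_pow, evalPair_parameterDiff,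
    evalPair_rename_inl, evalPair_rename_inr, hC, mul_sum, mul_smul_comm]

theorem evalPair_auxPolynomial_injective (N₀ N₁ : ℕ) (w : Fin M → ℕ)
    {v : AuxIndex (Nat.card D.galoisGroup) N₀ N₁ w → K}
    (h : D.evalPair (D.auxPolynomial N₀ N₁ w v) = 0) : v = 0 := by
  have hdiff : (.C .X - .X : K⟦X⟧⟦X⟧) ≠ 0 := fun h0 => by
    simpa using congrArg (PowerSeries.coeff 1) h0
  rw [evalPair_auxPolynomial] at h
  have hlayer := eq_zero_of_pow_mul_add_sum_eq_zero
    (PowerSeries.constantCoeff.comp (taylorShift .X PowerSeries.constantCoeff_X)) hdiff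
    (by simp [taylorShift_C, taylorShift_X])
    D.constantCoeff_taylorShift_evalPair_graphProduct_ne_zero
    (fun k hk => by
      rw [RingHom.comp_apply, taylorShift_C, PowerSeries.constantCoeff_C] at hk
      rw [hk, map_zero]) h
  have hinr (k : Fin M) : ∀ p, v (.inr ⟨k, p⟩) = 0 := by
    refine Fintype.linearIndependent_iff.mp (D.linearIndependent_aeval_basisMonomial (w k))
      (fun p => v (.inr ⟨k, p⟩)) (PowerSeries.C_injective ?_)
    rw [hlayer k, map_zero]
  have hindep := linearIndependent_C_mul_map_C
    (D.linearIndependent_aeval_basisMonomial N₀) (D.linearIndependent_aeval_basisMonomial N₁)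
  rw [Fintype.linearIndependent_iff] at hindep
  simp only [hlayer, mul_zero, sum_const_zero, add_zero] at h
  have hsum := (mul_eq_zero.mp h).resolve_left (pow_ne_zero _ hdiff)
  have hinl := hindep (fun p => v (.inl p)) hsum
  funext i
  obtain p | ⟨k, p⟩ := i
  exacts [hinl p, hinr k p]

theorem auxPolynomial_mem_bidegreeLE {c N₀ N₁ : ℕ} {w : Fin M → ℕ}
    (hc : ∀ i, (D.basis i).totalDegree ≤ r * c) (hN₁ : 2 * N₁ = M * (r - 1))
    (hw : ∀ k : Fin M, ∀ i < w k, 2 * i + (M - k) * (r - 1) ≤ 2 * N₀)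
    (v : AuxIndex (Nat.card D.galoisGroup) N₀ N₁ w → K) :
    D.auxPolynomial N₀ N₁ w v ∈
      bidegreeLE (Fin (r + 1)) K (r * (M + c + N₀)) (r * (M + c + N₁)) :=
  sum_mem fun i _ => Submodule.smul_mem _ _ (D.auxGenerator_mem_bidegreeLE hc hN₁ hw i)

variable [Fintype K]

theorem evalNearFrobenius_smul (b : K) (h : PairPolynomial K r) :
    D.evalNearFrobenius (b • h) = b • D.evalNearFrobenius h := by
  rw [evalNearFrobenius, RingHom.comp_apply, RingHom.comp_apply, AlgHom.toRingHom_eq_coe,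
    RingHom.coe_coe, map_smul, Algebra.smul_def, Algebra.smul_def, map_mul, algebraMap_eq_C_C,
    taylorShift_C]

/-- The linear conditions on an auxiliary polynomial: `Z * n₀` on its expansion along the line
`u = 0`, and `n k` on each coefficient of order `k < N` of its expansion along the graph of
Frobenius. -/
noncomputable def vanishingConditions (Z n₀ N : ℕ) (n : ℕ → ℕ) :
    PairPolynomial K r →ₗ[K] (Fin Z × Fin n₀) ⊕ (Σ k : Fin N, Fin (n k)) → K where
  toFun h := Sum.elim (fun p => ((D.evalPair h).coeff p.1).coeff p.2)
    fun p => (D.disc ^ (Fintype.card K * p.1) * (D.evalNearFrobenius h).coeff p.1).coeff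
      (Fintype.card K * Z + p.2)
  map_add' g h := by ext (p | p) <;> simp [mul_add]
  map_smul' b h := by ext (p | p) <;> simp [evalNearFrobenius_smul]

/- If there were more generators than conditions, some nonzero auxiliary polynomial would satisfy
all of them, and would then vanish on every pair of points. -/
theorem card_auxIndex_le {c N₀ N₁ Z n₀ N : ℕ} {n : ℕ → ℕ} {w : Fin M → ℕ}
    (hc : ∀ i, (D.basis i).totalDegree ≤ r * c) (hN₁ : 2 * N₁ = M * (r - 1))
    (hw : ∀ k : Fin M, ∀ i < w k, 2 * i + (M - k) * (r - 1) ≤ 2 * N₀)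
    (hn₀ : Nat.card D.galoisGroup * (r * (M + c + N₀)) <
      r * (n₀ + (Nat.card D.galoisGroup - 1) * M))
    (hn : ∀ k < N, Nat.card D.galoisGroup * (r * (M + c + N₀) +
        Fintype.card K * (r * (M + c + N₁)) + Fintype.card K * r ^ 2 * k) <
      r * (Fintype.card K * Z + n k + Nat.card D.galoisGroup * (M * #D.nonsplitParameters)))
    (hZN : Nat.card D.galoisGroup * (r * (M + c + N₁)) <
      r * (Z + N + (Nat.card D.galoisGroup - 1) * M)) :
    Fintype.card (AuxIndex (Nat.card D.galoisGroup) N₀ N₁ w) ≤ Z * n₀ + ∑ k : Fin N, n k := by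
  by_contra! hlt
  have hker : LinearMap.ker (D.vanishingConditions Z n₀ N n ∘ₗ D.auxPolynomial N₀ N₁ w) ≠ ⊥ := by
    refine LinearMap.ker_ne_bot_of_finrank_lt ?_
    rw [Module.finrank_fintype_fun_eq_card, Module.finrank_fintype_fun_eq_card]
    simpa using hlt
  obtain ⟨v, hv, hv0⟩ := (Submodule.ne_bot_iff _).mp hker
  rw [LinearMap.mem_ker, LinearMap.comp_apply] at hv
  have hmem := D.auxPolynomial_mem_graphIdeal_pow v
  have hdeg := D.auxPolynomial_mem_bidegreeLE hc hN₁ hw v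
  have hline := coeff_evalPair_eq_zero_of_coeff_coeff_eq_zero hmem hdeg
    (fun j hj i hi => congrFun hv (.inl (⟨j, hj⟩, ⟨i, hi⟩))) hn₀
  have hfrob := coeff_evalNearFrobenius_eq_zero hmem hdeg hline
    (fun k hk i hi => congrFun hv (.inr ⟨⟨k, hk⟩, ⟨i, hi⟩⟩)) hn
  exact hv0 (D.evalPair_auxPolynomial_injective N₀ N₁ w
    (evalPair_eq_zero hmem hdeg hline hfrob hZN))

end AuxiliaryPolynomial

end SplitFiber

section Ramification

variable {K ι : Type*} [Field K] [Fintype ι] (s : ι → K) (a : K)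

/-- The numerator of the derivative of the rational function `∏ i, (X - s i) / (X - a)`; its roots
are the finite ramification points. -/
noncomputable def ramificationPoly : K[X] :=
  derivative (Lagrange.nodal univ s) * (X - C a) - Lagrange.nodal univ s

theorem ramificationPoly_ne_zero (hs : ∀ i, s i ≠ a) : ramificationPoly s a ≠ 0 := by
  intro h
  have heval := congrArg (eval a) h
  simp only [ramificationPoly, eval_sub, eval_mul, eval_X, eval_C, sub_self, mul_zero, zero_sub,
    eval_zero, neg_eq_zero, Lagrange.eval_nodal, prod_eq_zero_iff, sub_eq_zero] at heval
  obtain ⟨i, -, hi⟩ := heval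
  exact hs i hi.symm

theorem natDegree_ramificationPoly_le : (ramificationPoly s a).natDegree ≤ Fintype.card ι := by
  have hnodal : (Lagrange.nodal univ s).natDegree = Fintype.card ι := Lagrange.natDegree_nodal
  refine (natDegree_sub_le _ _).trans (max_le ?_ hnodal.le)
  obtain h | h := eq_or_ne (Fintype.card ι) 0
  · rw [derivative_of_natDegree_zero (hnodal.trans h), zero_mul, natDegree_zero]
    exact Nat.zero_le _
  · have hderiv := natDegree_derivative_le (Lagrange.nodal univ s)
    have hX := natDegree_X_sub_C a
    exact natDegree_mul_le.trans (by omega)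

theorem exists_aeval_ramificationPoly_eq_zero {L : Type*} [Field L] [Algebra K L] [IsAlgClosed L]
    {t : K} (ht : ¬ (fiberPoly s a t).Separable) :
    ∃ y : L, aeval y (ramificationPoly s a) = 0 ∧
      aeval y (derivative (Lagrange.nodal univ s)) = algebraMap K L t := by
  rw [Polynomial.Separable, isCoprime_iff_aeval_ne_zero_of_isAlgClosed K L] at ht
  push Not at ht
  obtain ⟨y, hy, hy'⟩ := ht
  simp only [fiberPoly, derivative_C_mul, derivative_X, derivative_C, sub_zero,
    mul_one, map_sub, map_mul, aeval_C, aeval_X] at hy hy'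
  have ht := sub_eq_zero.mp hy'
  refine ⟨y, ?_, ht⟩
  simp only [ramificationPoly, map_sub, map_mul, aeval_X, aeval_C]
  linear_combination (y - algebraMap K L a) * ht - hy

theorem card_le_of_forall_not_separable_fiberPoly (hs : ∀ i, s i ≠ a) {B : Finset K}
    (hB : ∀ t ∈ B, ¬ (fiberPoly s a t).Separable) : #B ≤ Fintype.card ι := by
  classical
  choose! y hroot hy using fun t ht =>
    exists_aeval_ramificationPoly_eq_zero (L := AlgebraicClosure K) s a (hB t ht)
  have hinj : Set.InjOn y B := fun t ht t' ht' h =>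
    (algebraMap K (AlgebraicClosure K)).injective (by rw [← hy t ht, h, hy t' ht'])
  have hsub : B.image y ⊆ ((ramificationPoly s a).aroots (AlgebraicClosure K)).toFinset := by
    intro z hz
    obtain ⟨t, ht, rfl⟩ := mem_image.mp hz
    exact Multiset.mem_toFinset.mpr (mem_aroots.mpr ⟨ramificationPoly_ne_zero s a hs, hroot t ht⟩)
  calc #B = #(B.image y) := (card_image_of_injOn hinj).symm
    _ ≤ Multiset.card ((ramificationPoly s a).aroots (AlgebraicClosure K)) :=
      (card_le_card hsub).trans (Multiset.toFinset_card_le _)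
    _ ≤ (ramificationPoly s a).natDegree := (card_roots' _).trans natDegree_map_le
    _ ≤ Fintype.card ι := natDegree_ramificationPoly_le s a

end Ramification

theorem sum_fin_add_mul (n : ℕ) (a b : ℝ) :
    ∑ k : Fin n, (a + k * b) = n * a + n * (n - 1) / 2 * b := by
  induction n with
  | zero => simp
  | succ n ih =>
    rw [Fin.sum_univ_castSucc]
    simp only [Fin.val_castSucc, Fin.val_last, ih, Nat.cast_succ]
    ring

theorem le_sum_sub_div_two (M x n : ℕ) :
    (M * n - (x * (M * (M + 1) / 2) + M) / 2 : ℝ) ≤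
      ∑ k : Fin M, ((n - ((M - k) * x + 1) / 2 : ℕ) : ℝ) := by
  have hterm (k : Fin M) : (n - (M * x + 1) / 2 + k * (x / 2) : ℝ) ≤
      ((n - ((M - k) * x + 1) / 2 : ℕ) : ℝ) := by
    have hsub : (n : ℝ) ≤ (n - ((M - k) * x + 1) / 2 : ℕ) + (((M - k) * x + 1) / 2 : ℕ) := by
      exact_mod_cast le_tsub_add
    have hdiv : ((((M - k) * x + 1) / 2 : ℕ) : ℝ) ≤ (((M - k) * x + 1 : ℕ) : ℝ) / 2 :=
      Nat.cast_div_le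
    push_cast [Nat.cast_sub k.2.le] at hdiv
    linarith
  refine le_trans (le_of_eq ?_) (sum_le_sum fun k _ => hterm k)
  rw [sum_fin_add_mul]
  ring

/- The leading terms of the dimension count, with all others collected in the constant `κ`. -/
theorem exists_mul_mul_le_of_count_le {d q x c : ℝ} (e : ℝ) (hd : 1 ≤ d) (hq : 0 ≤ q) (hx : 0 ≤ x)
    (hc : 0 ≤ c) :
    ∃ κ, 0 ≤ κ ∧ ∀ M N : ℝ, 0 ≤ M → 1 ≤ N →
      q * M * d * (M / 2 * x * d) + (M * (q * M) - (x * (M * (M + 1) / 2) + M) / 2) * d ≤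
        (d * (M / 2 * x) + (M - N) + d * c + 1) * (d * (q * M) + M + d * c + 1) +
          (N * ((d - 1) * q * M + d * c + d * M * (1 + e) + q * (N - 1) + 1) +
            N * (N - 1) / 2 * (d * q * (x + 1))) →
      M * N * (q + 1 - d * (1 + e)) ≤ (1 + 3 * d * x / 4) * M ^ 2 +
        (1 + d * (x + 1) / 2) * q * N ^ 2 + κ * (M + N + 1) := by
  have : 0 ≤ d := zero_le_one.trans hd
  refine ⟨(d * c + 1) * (d * x + 1 + d * q + 1 + d * c + 1) +
    (d * c + 1 + d * (x + 1) + d * q * (x + 1) + q), by positivity, fun M N hM hN h => ?_⟩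
  have hrest : 0 ≤ (d * c + 1) * (d * x + d * q + 2 + (d * c + 1)) * N +
      (d * c + 1) * (d * x / 2 + (d * c + 1)) * M + (d * c + 1) * (d * x + d * q + 2) +
      (d * c + 1 + d * (x + 1) + d * q * (x + 1) + q) * (N + 1) +
      (d * c + 1 + 3 * d * x / 4 + d / 2 + d * q * (x + 1) + q) * M + q * N +
      d * q * (x + 1) * N / 2 := by
    positivity
  linarith

/- Apply the hypothesis with `2 * m / N` tending to `x`, which balances the two quadratic terms. -/
theorem le_add_mul_of_forall_mul_mul_le {x y g₁ g₂ κ : ℝ} (hx : 1 ≤ x) (hg₁ : 0 ≤ g₁)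
    (hg₂ : 0 ≤ g₂) (hκ : 0 ≤ κ)
    (h : ∀ m N : ℕ, 1 ≤ N → N ≤ 2 * m →
      (2 * m : ℝ) * N * y ≤ g₁ * (2 * m) ^ 2 + g₂ * x ^ 2 * N ^ 2 + κ * (2 * m + N + 1)) :
    y ≤ (g₁ + g₂) * x := by
  by_contra! hlt
  have hy : 0 ≤ y := le_trans (by positivity) hlt.le
  have hgap : 0 < x * (y - (g₁ + g₂) * x) := mul_pos (by linarith) (by linarith)
  obtain ⟨N, hN⟩ := exists_nat_gt ((g₁ * (4 * x + 4) + κ * (x + 4)) / (x * (y - (g₁ + g₂) * x)))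
  have hN0 : (0 : ℝ) < N := lt_of_le_of_lt (by positivity) hN
  have hN1 : 1 ≤ N := by exact_mod_cast hN0
  have hN1' : (1 : ℝ) ≤ N := by exact_mod_cast hN1
  rw [div_lt_iff₀ hgap] at hN
  set m := ⌈x * N / 2⌉₊
  have hm : x * N ≤ 2 * m := by linarith [Nat.le_ceil (x * N / 2)]
  have hm' : (2 * m : ℝ) ≤ x * N + 2 := by
    linarith [Nat.ceil_lt_add_one (a := x * N / 2) (by positivity)]
  have hNm : N ≤ 2 * m := by exact_mod_cast (le_mul_of_one_le_left hN0.le hx).trans hm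
  have hupper := calc x * N * N * y
    _ ≤ 2 * m * N * y := by gcongr
    _ ≤ g₁ * (2 * m) ^ 2 + g₂ * x ^ 2 * N ^ 2 + κ * (2 * m + N + 1) := h m N hN1 hNm
    _ ≤ g₁ * (x * N + 2) ^ 2 + g₂ * x ^ 2 * N ^ 2 + κ * ((x * N + 2) + N + 1) := by gcongr
    _ ≤ g₁ * (x ^ 2 * N ^ 2 + (4 * x + 4) * N) + g₂ * x ^ 2 * N ^ 2 + κ * ((x + 4) * N) := by
      gcongr <;> nlinarith
  nlinarith [mul_lt_mul_of_pos_right hN hN0]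

/- For `x < 8` the left-hand side is negative; otherwise `h` is divided by `d`. -/
theorem div_sub_mul_sub_le {r x l b d f : ℝ} (hr : 2 ≤ r) (hx : 1 ≤ x) (hb : b ≤ r + 1)
    (hl : 0 ≤ l) (hd : 0 < d) (hdf : d ≤ f) (hf : 6 ≤ f)
    (h : x ^ 2 + 1 - d * (1 + (l + b)) ≤ (2 + d * (5 * r - 3) / 4) * x) :
    (x ^ 2 - 2 * x + 1) / f - 2 * x * (r - 1) - (r + 2) / 2 ≤ l := by
  have hsq : 0 ≤ x ^ 2 - 2 * x + 1 := by linarith [sq_nonneg (x - 1)]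
  obtain hx8 | hx8 := lt_or_ge x 8
  · have hdiv : (x ^ 2 - 2 * x + 1) / f ≤ (x ^ 2 - 2 * x + 1) / 6 := by gcongr
    nlinarith
  · have hdiv : (x ^ 2 - 2 * x + 1) / d ≤ 1 + (l + b) + (5 * r - 3) / 4 * x := by
      rw [div_le_iff₀ hd]
      linarith
    have hdf' : (x ^ 2 - 2 * x + 1) / f ≤ (x ^ 2 - 2 * x + 1) / d := by gcongr
    nlinarith

namespace SplitFiber
theorem card_galoisGroup_le_factorial {K : Type*} [Field K] {r : ℕ} (D : SplitFiber K r) :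
    Nat.card D.galoisGroup ≤ (r + 1).factorial := by
  simpa [Nat.card_eq_fintype_card, Fintype.card_perm] using
    Nat.card_le_card_of_injective _ (Subtype.val_injective (p := (· ∈ D.galoisGroup)))

section WeilBound

variable {K : Type*} [Field K] [Fintype K] {r : ℕ} (D : SplitFiber K r)

theorem card_mul_add_sum_le {c m N e : ℕ} (hc : ∀ i, (D.basis i).totalDegree ≤ r * c)
    (hN : 1 ≤ N) (hNm : N ≤ 2 * m) (he : Fintype.card K ≤ #D.nonsplitParameters + e) :
    Fintype.card K * (2 * m) * Nat.card D.galoisGroup * (m * (r - 1) * Nat.card D.galoisGroup) +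
        ∑ k : Fin (2 * m), (Fintype.card K * (2 * m) - ((2 * m - k) * (r - 1) + 1) / 2) *
          Nat.card D.galoisGroup ≤
      (Nat.card D.galoisGroup * (m * (r - 1)) + (2 * m - N) + Nat.card D.galoisGroup * c + 1) *
        (Nat.card D.galoisGroup * (Fintype.card K * (2 * m)) + 2 * m +
          Nat.card D.galoisGroup * c + 1) +
      ∑ k : Fin N, ((Nat.card D.galoisGroup - 1) * Fintype.card K * (2 * m) +
        Nat.card D.galoisGroup * c + Nat.card D.galoisGroup * (2 * m) * (1 + e) +
        Fintype.card K * (N - 1) + 1 + k * (Nat.card D.galoisGroup * Fintype.card K * r)) := by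
  obtain ⟨d, hd⟩ := Nat.exists_eq_add_one.mpr (Nat.card_pos (α := D.galoisGroup))
  obtain ⟨f, hf⟩ := Nat.exists_eq_add_of_le hNm
  obtain ⟨n, rfl⟩ := Nat.exists_eq_add_of_le' hN
  have hr : 0 < r := two_pos.trans_le D.two_le
  have hcount := D.card_auxIndex_le (M := 2 * m) (N₀ := Fintype.card K * (2 * m)) (N := n + 1)
    (Z := Nat.card D.galoisGroup * (m * (r - 1)) + f + Nat.card D.galoisGroup * c + 1)
    (n₀ := Nat.card D.galoisGroup * (Fintype.card K * (2 * m)) + 2 * m +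
      Nat.card D.galoisGroup * c + 1)
    (n := fun k => (Nat.card D.galoisGroup - 1) * Fintype.card K * (2 * m) +
      Nat.card D.galoisGroup * c + Nat.card D.galoisGroup * (2 * m) * (1 + e) +
      Fintype.card K * n + 1 + k * (Nat.card D.galoisGroup * Fintype.card K * r))
    (w := fun k => Fintype.card K * (2 * m) - ((2 * m - k) * (r - 1) + 1) / 2)
    hc (mul_assoc 2 m (r - 1)).symm (fun k i hi => by omega) ?_ ?_ ?_
  · rw [Nat.sub_eq_of_eq_add' hf, Nat.add_sub_cancel]
    simpa only [Fintype.card_sum, Fintype.card_sigma, Fintype.card_prod, Fintype.card_fin]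
      using hcount
  · rw [mul_left_comm, hd, hf, Nat.add_sub_cancel]
    exact Nat.mul_lt_mul_of_pos_left (by linarith) hr
  · intro k _
    have hbad := Nat.mul_le_mul_left ((d + 1) * (2 * m)) he
    rw [hd, hf, Nat.add_sub_cancel]
    rw [hf] at hbad
    calc _ = r * ((d + 1) * ((n + 1 + f) + c + Fintype.card K * (n + 1 + f) +
          Fintype.card K * ((n + 1 + f) + c + m * (r - 1)) + Fintype.card K * r * k)) := by ring
      _ < _ := Nat.mul_lt_mul_of_pos_left (by linarith) hr
  · rw [mul_left_comm, hd, hf, Nat.add_sub_cancel]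
    exact Nat.mul_lt_mul_of_pos_left (by linarith) hr

theorem exists_mul_mul_le {e : ℕ} (he : Fintype.card K ≤ #D.nonsplitParameters + e) :
    ∃ κ : ℝ, 0 ≤ κ ∧ ∀ m N : ℕ, 1 ≤ N → N ≤ 2 * m →
      (2 * m : ℝ) * N * (Fintype.card K + 1 - Nat.card D.galoisGroup * (1 + e)) ≤
        (1 + 3 * Nat.card D.galoisGroup * (r - 1) / 4) * (2 * m) ^ 2 +
        (1 + Nat.card D.galoisGroup * r / 2) * Fintype.card K * N ^ 2 + κ * (2 * m + N + 1) := by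
  obtain ⟨c, hc⟩ := D.exists_totalDegree_basis_le
  have hr : (2 : ℝ) ≤ r := by exact_mod_cast D.two_le
  have hd : 1 ≤ Nat.card D.galoisGroup := Nat.card_pos
  obtain ⟨x, hx⟩ : ∃ x : ℝ, (r : ℝ) = x + 1 := ⟨r - 1, by ring⟩
  have hx0 : 0 ≤ x := by linarith
  have hrx : ((r - 1 : ℕ) : ℝ) = x := by
    rw [Nat.cast_pred (two_pos.trans_le D.two_le), hx, add_sub_cancel_right]
  have hd1 : (1 : ℝ) ≤ Nat.card D.galoisGroup := by exact_mod_cast hd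
  obtain ⟨κ, hκ, h⟩ := exists_mul_mul_le_of_count_le e hd1 (Nat.cast_nonneg (Fintype.card K)) hx0
    (Nat.cast_nonneg c)
  refine ⟨κ, hκ, fun m N hN hNm => ?_⟩
  rw [hx, add_sub_cancel_right]
  refine h _ _ (by positivity) (by exact_mod_cast hN) ?_
  have hcount := Nat.cast_le (α := ℝ).mpr (D.card_mul_add_sum_le hc hN hNm he)
  have hwidth := mul_le_mul_of_nonneg_right
    (le_sum_sub_div_two (2 * m) (r - 1) (Fintype.card K * (2 * m))) (zero_le_one.trans hd1)
  push_cast [Nat.cast_sub hNm, Nat.cast_sub hd, Nat.cast_sub hN, ← sum_mul, hrx] at hcount hwidth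
  rw [sum_fin_add_mul, hx] at hcount
  calc _ = _ := by ring
    _ ≤ _ := (add_le_add_right hwidth _).trans hcount
    _ = _ := by ring

theorem card_add_one_sub_le {e : ℕ} (he : Fintype.card K ≤ #D.nonsplitParameters + e) :
    (Fintype.card K + 1 - Nat.card D.galoisGroup * (1 + e) : ℝ) ≤
      (2 + Nat.card D.galoisGroup * (5 * r - 3) / 4) * √(Fintype.card K) := by
  obtain ⟨κ, hκ, h⟩ := D.exists_mul_mul_le he
  have hr : (0 : ℝ) ≤ r - 1 := by
    have : (2 : ℝ) ≤ r := by exact_mod_cast D.two_le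
    linarith
  have hsqrt : 1 ≤ √(Fintype.card K : ℝ) :=
    Real.one_le_sqrt.mpr (by exact_mod_cast Fintype.card_pos)
  refine (le_add_mul_of_forall_mul_mul_le hsqrt (g₁ := 1 + 3 * Nat.card D.galoisGroup * (r - 1) / 4)
    (g₂ := 1 + Nat.card D.galoisGroup * r / 2) (by positivity) (by positivity) hκ ?_).trans_eq
    (by ring)
  simpa only [Real.sq_sqrt (Nat.cast_nonneg (Fintype.card K))] using h

theorem le_card_of_forall_splits {L : Finset K}
    (hL : ∀ t, (fiberPoly D.s D.a t).Separable → (fiberPoly D.s D.a t).Splits → t ∈ L) :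
    ((Fintype.card K : ℝ) - 2 * √(Fintype.card K) + 1) / (r + 1).factorial -
      2 * √(Fintype.card K) * (r - 1) - (r + 2) / 2 ≤ #L := by
  classical
  set B : Finset K := {t | ¬ (fiberPoly D.s D.a t).Separable}
  have hB : #B ≤ r + 1 := by
    simpa using card_le_of_forall_not_separable_fiberPoly D.s D.a D.s_ne_a
      fun t ht => (mem_filter.mp ht).2
  have hcover : Fintype.card K ≤ #D.nonsplitParameters + (#L + #B) := by
    have huniv : univ ⊆ D.nonsplitParameters ∪ (L ∪ B) := by
      intro t _
      simp only [mem_union, D.mem_nonsplitParameters, B, mem_filter, mem_univ, true_and]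
      have := hL t
      tauto
    calc Fintype.card K ≤ #(D.nonsplitParameters ∪ (L ∪ B)) := card_le_card huniv
      _ ≤ _ := (card_union_le _ _).trans (Nat.add_le_add_left (card_union_le _ _) _)
  have hweil := D.card_add_one_sub_le hcover
  have hsq := Real.sq_sqrt (Nat.cast_nonneg (α := ℝ) (Fintype.card K))
  rw [← hsq, Nat.cast_add, Real.sqrt_sq (Real.sqrt_nonneg _)] at hweil
  have hsix : 6 ≤ (r + 1).factorial := Nat.factorial_le (show 3 ≤ r + 1 by linarith [D.two_le])
  have hbound := div_sub_mul_sub_le (f := (r + 1).factorial) (by exact_mod_cast D.two_le)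
    (Real.one_le_sqrt.mpr (by exact_mod_cast Fintype.card_pos)) (by exact_mod_cast hB)
    (Nat.cast_nonneg _) (by exact_mod_cast Nat.card_pos)
    (by exact_mod_cast D.card_galoisGroup_le_factorial) (by exact_mod_cast hsix) hweil
  rwa [hsq] at hbound

end WeilBound

end SplitFiber

theorem fiberPoly_comp_equiv {R ι ι' : Type*} [CommRing R] [Fintype ι] [Fintype ι'] (e : ι ≃ ι')
    (s : ι' → R) (a c : R) : fiberPoly (s ∘ e) a c = fiberPoly s a c := by
  simp only [fiberPoly, Lagrange.nodal, Function.comp_apply]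
  rw [e.prod_comp fun i => X - C (s i)]

theorem card_filter_some_le {α : Type*} [Fintype α] (p : Option α → Prop) [DecidablePred p] :
    #{t | p (some t)} ≤ #{b | p b} :=
  card_le_card_of_injOn some (fun t ht => by simpa using ht) (Option.some_injective α).injOn

section Fibres

variable {F : Type*} [Field F] [DecidableEq F] {S : Finset F} {a : F}

theorem ratEval_prod_none (hS : 2 ≤ #S) : ratEval (∏ s ∈ S, (X - C s)) (X - C a) none = none := by
  rw [ratEval, natDegree_finsetProd_X_sub_C_eq_card, natDegree_X_sub_C,
    if_pos (Nat.lt_of_succ_le hS)]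

theorem ratEval_prod_some_eq_some_iff (ha : a ∉ S) {y t : F} :
    ratEval (∏ s ∈ S, (X - C s)) (X - C a) (some y) = some t ↔
      (fiberPoly ((↑) : S → F) a t).IsRoot y := by
  have hprod : eval y (∏ s ∈ S, (X - C s)) = ∏ s : S, (y - s) := by
    rw [eval_prod, ← prod_coe_sort]
    simp
  rw [ratEval, hprod, IsRoot, eval_fiberPoly, eval_sub, eval_X, eval_C]
  by_cases hy : y = a
  · subst hy
    have hne : ∏ s : S, (y - s) ≠ 0 :=
      prod_ne_zero_iff.mpr fun s _ => sub_ne_zero.mpr fun h => ha (h ▸ s.2)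
    simpa using hne
  · rw [if_neg (sub_ne_zero.mpr hy), Option.some_inj, div_eq_iff (sub_ne_zero.mpr hy), sub_eq_zero]

variable [Fintype F]

theorem card_fiber_ratEval_prod (hS : 2 ≤ #S) (ha : a ∉ S) (t : F) :
    #{x | ratEval (∏ s ∈ S, (X - C s)) (X - C a) x = some t} =
      #(fiberPoly ((↑) : S → F) a t).roots.toFinset := by
  have hne : fiberPoly ((↑) : S → F) a t ≠ 0 := (fiberPoly_monic (by simpa using hS) _ _ _).ne_zero
  rw [← card_map Function.Embedding.some (s := Multiset.toFinset _)]
  refine congrArg card (Finset.ext ?_)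
  rintro (_ | y)
  · simp [ratEval_prod_none hS]
  · simp [ratEval_prod_some_eq_some_iff ha, hne]

theorem card_fiber_ratEval_prod_le (hS : 2 ≤ #S) (ha : a ∉ S) (t : F) :
    #{x | ratEval (∏ s ∈ S, (X - C s)) (X - C a) x = some t} ≤ #S := by
  have hdeg := natDegree_eq_of_degree_eq_some
    (degree_fiberPoly (by simpa using hS) ((↑) : S → F) a t)
  rw [card_fiber_ratEval_prod hS ha]
  exact (Multiset.toFinset_card_le _).trans ((card_roots' _).trans (by simp [hdeg]))

theorem card_fiber_ratEval_prod_of_splits (hS : 2 ≤ #S) (ha : a ∉ S) {t : F}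
    (hsep : (fiberPoly ((↑) : S → F) a t).Separable)
    (hsplits : (fiberPoly ((↑) : S → F) a t).Splits) :
    #{x | ratEval (∏ s ∈ S, (X - C s)) (X - C a) x = some t} = #S := by
  have hdeg := natDegree_eq_of_degree_eq_some
    (degree_fiberPoly (by simpa using hS) ((↑) : S → F) a t)
  rw [card_fiber_ratEval_prod hS ha, Multiset.toFinset_card_of_nodup (nodup_roots hsep),
    ← hsplits.natDegree_eq_card_roots, hdeg, Fintype.card_coe]

theorem card_fiber_ratEval_prod_eq_zero (hS : #S = 2) (ha : a ∉ S) {t : F}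
    (hsep : (fiberPoly ((↑) : S → F) a t).Separable)
    (h2 : #{x | ratEval (∏ s ∈ S, (X - C s)) (X - C a) x = some t} ≠ 2) :
    #{x | ratEval (∏ s ∈ S, (X - C s)) (X - C a) x = some t} = 0 := by
  suffices hroots : (fiberPoly ((↑) : S → F) a t).roots = 0 by
    rw [card_fiber_ratEval_prod hS.ge ha, hroots, Multiset.toFinset_zero, card_empty]
  by_contra hroots
  obtain ⟨y, hy⟩ := Multiset.exists_mem_of_ne_zero hroots
  have hdeg : (fiberPoly ((↑) : S → F) a t).degree = 2 := by
    rw [degree_fiberPoly (by simp [hS]), Fintype.card_coe, hS, Nat.cast_ofNat]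
  exact h2 (hS ▸ card_fiber_ratEval_prod_of_splits hS.ge ha hsep
    (.of_degree_eq_two hdeg (isRoot_of_mem_roots hy)))

/- Counting `P¹(F)` along the fibres: the fibre over `∞` has at most two points, and an unramified
fibre has no or two points. -/
theorem card_le_two_mul_card_filter_add (hS : #S = 2) (ha : a ∉ S) :
    Fintype.card F ≤
      2 * #{t | #{x | ratEval (∏ s ∈ S, (X - C s)) (X - C a) x = some t} = 2} + 3 := by
  classical
  set h := ratEval (∏ s ∈ S, (X - C s)) (X - C a)
  set B : Finset F := {t | ¬ (fiberPoly ((↑) : S → F) a t).Separable}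
  have hB : #B ≤ 2 := by
    simpa [hS] using card_le_of_forall_not_separable_fiberPoly ((↑) : S → F) a
      (fun s h => ha (h ▸ s.2)) (B := B) fun t ht => (mem_filter.mp ht).2
  have hfiber (t : F) : #{x | h x = some t} ≤
      2 * (if #{x | h x = some t} = 2 then 1 else 0) + if t ∈ B then 1 else 0 := by
    have hle : #{x | h x = some t} ≤ 2 := hS ▸ card_fiber_ratEval_prod_le hS.ge ha t
    split_ifs with h2 hsep hsep
    · omega
    · omega
    · omega
    · simp only [B, mem_filter_univ, not_not] at hsep
      exact (card_fiber_ratEval_prod_eq_zero hS ha hsep h2).le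
  have hinfty : #{x | h x = none} ≤ 2 := by
    refine (card_le_card (t := {none, some a}) ?_).trans card_le_two
    rintro (_ | y) hy
    · simp
    · by_contra hne
      simp_all [h, ratEval, sub_eq_zero]
  have hsum := card_eq_sum_card_fiberwise (f := h) (s := univ) (t := univ) fun _ _ => mem_univ _
  rw [card_univ, Fintype.card_option, Fintype.sum_option] at hsum
  have hle := sum_le_sum fun t (_ : t ∈ univ) => hfiber t
  rw [sum_add_distrib, ← mul_sum, ← card_filter, ← card_filter, filter_mem_eq_inter,
    univ_inter] at hle
  omega

theorem le_card_filter_card_fiber_ratEval {r : ℕ} (hr : 2 ≤ r) (hS : #S = r + 1) (ha : a ∉ S) :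
    ((Fintype.card F : ℝ) - 2 * √(Fintype.card F) + 1) / (r + 1).factorial -
      2 * √(Fintype.card F) * (r - 1) - (r + 2) / 2 ≤
    #{t | #{x | ratEval (∏ s ∈ S, (X - C s)) (X - C a) x = some t} = r + 1} := by
  let e : Fin (r + 1) ≃ S := (S.equivFinOfCardEq hS).symm
  have hs (i : Fin (r + 1)) : (e i : F) ≠ a := fun h => ha (h ▸ (e i).2)
  refine SplitFiber.le_card_of_forall_splits
    ⟨((↑) : S → F) ∘ e, Subtype.val_injective.comp e.injective, a, hs, hr⟩ fun t hsep hsplits => ?_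
  simp only [fiberPoly_comp_equiv] at hsep hsplits
  rw [mem_filter_univ, ← hS]
  exact card_fiber_ratEval_prod_of_splits (by omega) ha hsep hsplits

end Fibres

end GaloisClosure

theorem stmt5_general {F : Type*} [Field F] [Fintype F] [DecidableEq F]
    (r : ℕ) (hr : 0 < r) (S : Finset F) (hS : S.card = r + 1) (a : F) (ha : a ∉ S) :
    ((Fintype.card F : ℝ) - 2 * Real.sqrt (Fintype.card F) + 1) / (Nat.factorial (r + 1))
        - 2 * Real.sqrt (Fintype.card F) * ((r : ℝ) - 1)
        - ((r : ℝ) + 2) / 2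
      ≤ ((Finset.univ.filter (fun b : Option F =>
            (Finset.univ.filter (fun x : Option F =>
              ratEval (∏ s ∈ S, (X - C s)) (X - C a) x = b)).card = r + 1)).card
          : ℝ) := by
  refine le_trans ?_ (Nat.cast_le.mpr (card_filter_some_le _))
  obtain rfl | hr2 := Nat.eq_or_lt_of_le hr
  · have hcard : (Fintype.card F : ℝ) ≤ _ := Nat.cast_le.mpr (card_le_two_mul_card_filter_add hS ha)
    have hsqrt : 1 ≤ √(Fintype.card F : ℝ) :=
      Real.one_le_sqrt.mpr (by exact_mod_cast Fintype.card_pos)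
    norm_num at hcard ⊢
    linarith
  · exact le_card_filter_card_fiber_ratEval hr2 hS ha

/-- For `S ⊆ F_q` with `#S = r+1`, `a ∉ S`, and `gcd(q,(r+1)!) = 1`, the rational
function `h(x) = ∏_{s∈S}(x-s)/(x-a)` is `(r,l)`-good with
`l ≥ (q - 2√q + 1)/(r+1)! - 2√q(r-1) - (r+2)/2`: the number of `b ∈ P¹(F_q)` whose
fiber under `h` has exactly `r+1` elements is at least this bound. -/
theorem stmt5 {F : Type*} [Field F] [Fintype F] [DecidableEq F]
    (r : ℕ) (hr : 0 < r)
    (hq : Nat.Coprime (Fintype.card F) (Nat.factorial (r + 1)))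
    (S : Finset F) (hS : S.card = r + 1) (a : F) (ha : a ∉ S) :
    ((Fintype.card F : ℝ) - 2 * Real.sqrt (Fintype.card F) + 1) / (Nat.factorial (r + 1))
        - 2 * Real.sqrt (Fintype.card F) * ((r : ℝ) - 1)
        - ((r : ℝ) + 2) / 2
      ≤ ((Finset.univ.filter (fun b : Option F =>
            (Finset.univ.filter (fun x : Option F =>
              ratEval (∏ s ∈ S, (X - C s)) (X - C a) x = b)).card = r + 1)).card
          : ℝ) :=
  stmt5_general r hr S hS a ha
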